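/- Suppose 𝒳 is a compact metric space, φ:𝒳^v→ℝ is continuous, H=K_{1,v−1} is the (v−1)-star graph, δ_□(W_{Q_n},W)→0 for some W∈𝒲, the family of random variables {𝔑_{W_{Q_n}}(U)^{v−1}}_{n≥1} (with U ~ Unif[0,1]) is uniformly integrable, and ∫₀¹ 𝔑_W(x)^{v−1} dx < ∞. Then both U_n(X) and V_n(X) satisfy a large deviation principle at speed n with the good rate function I₀(t) = inf{ D(ν|ρ) : ν ∈ 𝒯ℳ, D(ν|ρ) < ∞, T_{W,φ}(ν) = t }. -/

import Mathlib

open MeasureTheory Filter Set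
open scoped ENNReal NNReal

noncomputable section

/-- The uniform probability measure on `[0,1]`. -/
def unif01 : Measure ℝ := volume.restrict (Set.Icc 0 1)

instance : IsProbabilityMeasure unif01 :=
  ⟨by rw [unif01, Measure.restrict_apply_univ, Real.volume_Icc]; norm_num⟩

/-- The `L^r` norm (`r : ℝ≥0∞`) of a kernel, viewed as a function on `[0,1]²`. -/
def kerNorm (W : ℝ → ℝ → ℝ) (r : ℝ≥0∞) : ℝ≥0∞ :=
  eLpNorm (fun z : ℝ × ℝ => W z.1 z.2) r (unif01.prod unif01)

/-- The (strong) cut distance `d_□` between two kernels on `[0,1]²`. -/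
def cutDist (W₁ W₂ : ℝ → ℝ → ℝ) : ℝ :=
  ⨆ S : {S : Set ℝ // MeasurableSet S}, ⨆ T : {T : Set ℝ // MeasurableSet T},
    |∫ x in Set.Icc (0:ℝ) 1 ∩ S.1, ∫ y in Set.Icc (0:ℝ) 1 ∩ T.1, (W₁ x y - W₂ x y)|

/-- A Lebesgue-measure-preserving bijection of `[0,1]`. -/
def MPB (σ : ℝ → ℝ) : Prop :=
  Set.BijOn σ (Set.Icc 0 1) (Set.Icc 0 1) ∧ MeasurePreserving σ unif01 unif01

/-- The weak cut distance `δ_□`. -/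
def weakCutDist (W₁ W₂ : ℝ → ℝ → ℝ) : ℝ :=
  ⨅ σ : {σ : ℝ → ℝ // MPB σ}, cutDist (fun x y => W₁ (σ.1 x) (σ.1 y)) W₂

/-- The step kernel `W_{Q_n}` associated to an `n × n` matrix `Q`:
it equals `Q i j` when `⌈n x⌉ = i, ⌈n y⌉ = j`. -/
def stepKernel (n : ℕ) (Q : Fin n → Fin n → ℝ) : ℝ → ℝ → ℝ := fun x y =>
  ∑ i : Fin n, ∑ j : Fin n,
    if x ∈ Set.Ioc (((i : ℕ) : ℝ)/n) ((((i : ℕ) : ℝ)+1)/n) ∧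
       y ∈ Set.Ioc (((j : ℕ) : ℝ)/n) ((((j : ℕ) : ℝ)+1)/n)
    then Q i j else 0

/-- Product over the edges of `H` (each edge counted once) of `f a b`. -/
def edgeProd {v : ℕ} (G : SimpleGraph (Fin v)) [DecidableRel G.Adj]
    (f : Fin v → Fin v → ℝ) : ℝ :=
  ∏ p ∈ Finset.univ.filter (fun p : Fin v × Fin v => G.Adj p.1 p.2 ∧ p.1 < p.2), f p.1 p.2

/-- The number of edges `|E(H)|`. -/
def edgeCard {v : ℕ} (G : SimpleGraph (Fin v)) [DecidableRel G.Adj] : ℕ :=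
  (Finset.univ.filter (fun p : Fin v × Fin v => G.Adj p.1 p.2 ∧ p.1 < p.2)).card

/-- The inhomogeneous U-statistic `U_n(X)` (sum over distinct indices). -/
def Ustat {X : Type*} {v : ℕ} (G : SimpleGraph (Fin v)) [DecidableRel G.Adj]
    (φ : (Fin v → X) → ℝ) (n : ℕ) (Q : Fin n → Fin n → ℝ) (x : Fin n → X) : ℝ :=
  (∑ i ∈ Finset.univ.filter (fun i : Fin v → Fin n => Function.Injective i),
      φ (x ∘ i) * edgeProd G (fun a b => Q (i a) (i b))) / (n : ℝ) ^ v

/-- The inhomogeneous V-statistic `V_n(X)` (sum over all indices). -/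
def Vstat {X : Type*} {v : ℕ} (G : SimpleGraph (Fin v)) [DecidableRel G.Adj]
    (φ : (Fin v → X) → ℝ) (n : ℕ) (Q : Fin n → Fin n → ℝ) (x : Fin n → X) : ℝ :=
  (∑ i : Fin v → Fin n, φ (x ∘ i) * edgeProd G (fun a b => Q (i a) (i b))) / (n : ℝ) ^ v

open Classical in
/-- Kullback-Leibler divergence `D(ν | ρ) ∈ [0,∞]`. -/
def KLdiv {α : Type*} [MeasurableSpace α] (ν ρ : Measure α) : ℝ≥0∞ :=
  if ν ≪ ρ ∧ Integrable (llr ν ρ) ν then ENNReal.ofReal (∫ a, llr ν ρ a ∂ν) else ⊤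

open Classical in
/-- `ν` itself if it is a probability measure, junk value `0` otherwise. -/
def probOr {α : Type*} [MeasurableSpace α] (ν : Measure α) : Measure α :=
  if IsProbabilityMeasure ν then ν else 0

instance {α : Type*} [MeasurableSpace α] (ν : Measure α) : SigmaFinite (probOr ν) := by
  unfold probOr
  split_ifs with h
  · haveI := h; infer_instance
  · infer_instance

/-- `v`-fold product of a (probability) measure. -/
def piProb {α : Type*} [MeasurableSpace α] (v : ℕ) (ν : Measure α) : Measure (Fin v → α) :=
  Measure.pi fun _ => probOr ν

/-- The functional `T_{W,φ}(ν) = E[φ(B₁,…,B_v) ∏_{(a,b) ∈ E(H)} W(A_a,A_b)]`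
for `(A_a,B_a)` i.i.d. with law `ν`. -/
def TWphi {X : Type*} [MeasurableSpace X] {v : ℕ} (G : SimpleGraph (Fin v))
    [DecidableRel G.Adj] (W : ℝ → ℝ → ℝ) (φ : (Fin v → X) → ℝ)
    (ν : Measure (ℝ × X)) : ℝ :=
  ∫ z : Fin v → ℝ × X,
    φ (fun a => (z a).2) * edgeProd G (fun a b => W (z a).1 (z b).1) ∂(piProb v ν)

/-- Membership in `𝒯ℳ`: probability measures on `[0,1] × 𝒳` whose first marginal
is uniform on `[0,1]`. -/
def inTM {X : Type*} [MeasurableSpace X] (ν : Measure (ℝ × X)) : Prop :=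
  IsProbabilityMeasure ν ∧ ν.map Prod.fst = unif01

/-- The rate function `I₀(t) = inf { D(ν|ρ) : ν ∈ 𝒯ℳ, D(ν|ρ) < ∞, T_{W,φ}(ν) = t }`. -/
def rate0 {X : Type*} [MeasurableSpace X] {v : ℕ} (G : SimpleGraph (Fin v))
    [DecidableRel G.Adj] (W : ℝ → ℝ → ℝ) (φ : (Fin v → X) → ℝ) (μ : Measure X)
    (t : ℝ) : ℝ≥0∞ :=
  ⨅ ν : {ν : Measure (ℝ × X) //
      inTM ν ∧ KLdiv ν (unif01.prod μ) ≠ ⊤ ∧ TWphi G W φ ν = t},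
    KLdiv ν.1 (unif01.prod μ)

/-- Tail assumption (T): `E_μ[e^{λ ψ(X)^p}] < ∞` for all `λ > 0`; for `p = ∞`
it means `ψ` is bounded. -/
def TailCond {X : Type*} [MeasurableSpace X] (μ : Measure X) (ψ : X → ℝ)
    (p : ℝ≥0∞) : Prop :=
  if p = ⊤ then ∃ C : ℝ, ∀ x, ψ x ≤ C
  else ∀ lam : ℝ, 0 < lam →
    ∫⁻ x, ENNReal.ofReal (Real.exp (lam * ψ x ^ p.toReal)) ∂μ < ⊤

/-- A sequence of random elements `T n` defined on probability spaces `(Ω n, P n)`,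
taking values in a topological space `E`, satisfies a large deviation principle at
speed `n` with good rate function `I`. -/
def SatisfiesLDP {E : Type*} [TopologicalSpace E] {Ω : ℕ → Type*}
    [∀ n, MeasurableSpace (Ω n)] (P : ∀ n, Measure (Ω n)) (T : ∀ n, Ω n → E)
    (I : E → ℝ≥0∞) : Prop :=
  (∀ c : ℝ≥0∞, c ≠ ⊤ → IsCompact {x | I x ≤ c}) ∧
  ∀ F : Set E, MeasurableSet[borel E] F →
    (-(⨅ x ∈ interior F, (I x : EReal)) ≤
      Filter.atTop.liminf fun n : ℕ =>
        (((n : ℝ)⁻¹ : ℝ) : EReal) * ENNReal.log (P n {ω | T n ω ∈ F})) ∧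
    (Filter.atTop.limsup (fun n : ℕ =>
        (((n : ℝ)⁻¹ : ℝ) : EReal) * ENNReal.log (P n {ω | T n ω ∈ F})) ≤
      -(⨅ x ∈ closure F, (I x : EReal)))

end
/-- `𝔑_W(x) = ∫₀¹ |W(x,y)| dy`. -/
noncomputable def degFun (W : ℝ → ℝ → ℝ) : ℝ → ℝ := fun x => ∫ y, |W x y| ∂unif01

/-!
For the star, `T_{W,φ}` is an integral over the root of a product of `m` leaf averages. When `φ` is
a product of one-variable functions, it is controlled by the cut distance once the degrees are
truncated, and the uniform integrability of their `m`-th powers pays for the truncation; by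
Stone–Weierstrass, `T_{W_{Q_n},φ} → T_{W,φ}` uniformly on `𝒯ℳ` for every continuous `φ`. Hence
`V_n(X)`, which is `T_{W_{Q_n},φ}` at the empirical measure of `(U, X_{⌈nU⌉})`, is uniformly close
to `T_{W,φ}` at that measure. The functional `T_{W,φ}` is continuous on the compact set `𝒯ℳ`, so the
principle for `V_n` follows by contraction from exponential bounds for the empirical measure: from
above by a Chernoff bound and the Donsker–Varadhan formula, from below by changing the law of each
`X_i` to the average over the `i`-th cell of the conditional law under `ν`.

For `U_n` one has to discard the index tuples with a repeated leaf, that is, show that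
`n⁻³ ∑ Q_n(i, j)²` is small after truncating the degrees. This is the second moment of a two-leaf
star whose leaves carry the same independent random sign: the uniform convergence, applied to `n`
random signs, compares it with the corresponding functional of `W`, which vanishes.
-/

section CutDistance

theorem restrict_unif01 {S : Set ℝ} (hS : MeasurableSet S) :
    unif01.restrict S = volume.restrict (Icc (0 : ℝ) 1 ∩ S) := by
  rw [unif01, Measure.restrict_restrict hS, inter_comm]

theorem ae_mem_Ioc_unif01 : ∀ᵐ x ∂unif01, x ∈ Ioc (0 : ℝ) 1 := by
  rw [unif01, ← Measure.restrict_congr_set Ioc_ae_eq_Icc]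
  exact ae_restrict_mem measurableSet_Ioc

theorem cutDist_eq_iSup_unif01 (W₁ W₂ : ℝ → ℝ → ℝ) :
    cutDist W₁ W₂ = ⨆ S : {S : Set ℝ // MeasurableSet S}, ⨆ T : {T : Set ℝ // MeasurableSet T},
      |∫ x in S.1, ∫ y in T.1, (W₁ x y - W₂ x y) ∂unif01 ∂unif01| := by
  refine iSup_congr fun S ↦ iSup_congr fun T ↦ ?_
  rw [restrict_unif01 S.2, restrict_unif01 T.2]

theorem cutDist_nonneg (W₁ W₂ : ℝ → ℝ → ℝ) : 0 ≤ cutDist W₁ W₂ :=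
  Real.iSup_nonneg fun _ ↦ Real.iSup_nonneg fun _ ↦ abs_nonneg _

theorem abs_setIntegral_setIntegral_le {α β : Type*} [MeasurableSpace α] [MeasurableSpace β]
    {μ : Measure α} {ν : Measure β} [SFinite μ] [SFinite ν] {f : α → β → ℝ}
    (hf : Integrable (Function.uncurry f) (μ.prod ν)) (S : Set α) (T : Set β) :
    |∫ x in S, ∫ y in T, f x y ∂ν ∂μ| ≤ ∫ z, |f z.1 z.2| ∂(μ.prod ν) := by
  rw [← setIntegral_prod (fun z ↦ f z.1 z.2) hf.integrableOn]
  exact abs_integral_le_integral_abs.trans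
    (setIntegral_le_integral hf.abs (.of_forall fun _ ↦ abs_nonneg _))

theorem integral_abs_le_of_abs_setIntegral_le {α : Type*} [MeasurableSpace α] {μ : Measure α}
    {F : α → ℝ} (hF : Integrable F μ) {c : ℝ}
    (h : ∀ S, MeasurableSet S → |∫ x in S, F x ∂μ| ≤ c) : ∫ x, |F x| ∂μ ≤ 2 * c := by
  obtain ⟨G, hG, hFG⟩ := hF.1
  have hGi : Integrable G μ := hF.congr hFG
  have hpos : MeasurableSet {x | 0 ≤ G x} := measurableSet_le measurable_const hG.measurable
  have on_pos : ∫ x in {x | 0 ≤ G x}, |G x| ∂μ = ∫ x in {x | 0 ≤ G x}, F x ∂μ :=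
    (setIntegral_congr_fun hpos fun x hx ↦ abs_of_nonneg hx).trans
      (integral_congr_ae (ae_restrict_of_ae hFG.symm))
  have on_neg : ∫ x in {x | 0 ≤ G x}ᶜ, |G x| ∂μ = -∫ x in {x | 0 ≤ G x}ᶜ, F x ∂μ := by
    rw [← integral_neg]
    exact (setIntegral_congr_fun hpos.compl fun x hx ↦ abs_of_neg (by simpa using hx)).trans
      (integral_congr_ae (ae_restrict_of_ae (hFG.symm.fun_comp Neg.neg)))
  have abs_eq : ∫ x, |F x| ∂μ = ∫ x, |G x| ∂μ := integral_congr_ae (hFG.fun_comp abs)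
  rw [abs_eq, ← integral_add_compl hpos hGi.abs, on_pos, on_neg]
  linarith [(abs_le.1 (h _ hpos)).2, (abs_le.1 (h _ hpos.compl)).1]

theorem abs_integral_mul_le_of_abs_setIntegral_le {α : Type*} [MeasurableSpace α] {μ : Measure α}
    {F f : α → ℝ} (hF : Integrable F μ) {A c : ℝ} (hA : 0 ≤ A)
    (hf : ∀ x, |f x| ≤ A)
    (h : ∀ S, MeasurableSet S → |∫ x in S, F x ∂μ| ≤ c) :
    |∫ x, f x * F x ∂μ| ≤ A * (2 * c) := by
  calc |∫ x, f x * F x ∂μ| ≤ ∫ x, A * |F x| ∂μ := by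
        refine abs_integral_le_integral_abs.trans
          (integral_mono_of_nonneg (.of_forall fun _ ↦ abs_nonneg _) (hF.abs.const_mul A)
            (.of_forall fun x ↦ ?_))
        simp only [abs_mul]
        gcongr
        exact hf x
    _ ≤ A * (2 * c) := by
        rw [integral_const_mul]
        gcongr
        exact integral_abs_le_of_abs_setIntegral_le hF h

variable {W₁ W₂ : ℝ → ℝ → ℝ}

theorem cutDist_le_integral_abs_sub (h₁ : Integrable (Function.uncurry W₁) (unif01.prod unif01))
    (h₂ : Integrable (Function.uncurry W₂) (unif01.prod unif01)) :
    cutDist W₁ W₂ ≤ ∫ z, |W₁ z.1 z.2 - W₂ z.1 z.2| ∂(unif01.prod unif01) := by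
  have : Nonempty {S : Set ℝ // MeasurableSet S} := ⟨⟨∅, .empty⟩⟩
  rw [cutDist_eq_iSup_unif01]
  exact ciSup_le fun S ↦ ciSup_le fun T ↦
    abs_setIntegral_setIntegral_le (f := fun x y ↦ W₁ x y - W₂ x y) (h₁.sub h₂) S.1 T.1

theorem abs_setIntegral_setIntegral_sub_le_cutDist
    (h₁ : Integrable (Function.uncurry W₁) (unif01.prod unif01))
    (h₂ : Integrable (Function.uncurry W₂) (unif01.prod unif01))
    {S T : Set ℝ} (hS : MeasurableSet S) (hT : MeasurableSet T) :
    |∫ x in S, ∫ y in T, (W₁ x y - W₂ x y) ∂unif01 ∂unif01| ≤ cutDist W₁ W₂ := by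
  have : Nonempty {S : Set ℝ // MeasurableSet S} := ⟨⟨∅, .empty⟩⟩
  have bound :=
    abs_setIntegral_setIntegral_le (f := fun x y ↦ W₁ x y - W₂ x y) (h₁.sub h₂)
  rw [cutDist_eq_iSup_unif01]
  refine (le_ciSup (f := fun T : {T : Set ℝ // MeasurableSet T} ↦
    |∫ x in S, ∫ y in T.1, (W₁ x y - W₂ x y) ∂unif01 ∂unif01|)
    ⟨_, forall_mem_range.2 fun T ↦ bound S T.1⟩ ⟨T, hT⟩).trans ?_
  exact le_ciSup (f := fun S : {S : Set ℝ // MeasurableSet S} ↦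
    ⨆ T : {T : Set ℝ // MeasurableSet T},
      |∫ x in S.1, ∫ y in T.1, (W₁ x y - W₂ x y) ∂unif01 ∂unif01|)
    ⟨_, forall_mem_range.2 fun S ↦ ciSup_le fun T ↦ bound S.1 T.1⟩ ⟨S, hS⟩

theorem abs_integral_mul_integral_sub_mul_le_cutDist
    (h₁ : Integrable (Function.uncurry W₁) (unif01.prod unif01))
    (h₂ : Integrable (Function.uncurry W₂) (unif01.prod unif01))
    {f g : ℝ → ℝ} {A B : ℝ} (hA : 0 ≤ A) (hB : 0 ≤ B) (hg : Measurable g)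
    (hfA : ∀ x, |f x| ≤ A) (hgB : ∀ y, |g y| ≤ B) :
    |∫ x, f x * ∫ y, (W₁ x y - W₂ x y) * g y ∂unif01 ∂unif01| ≤
      A * (2 * (B * (2 * cutDist W₁ W₂))) := by
  have h : Integrable (Function.uncurry fun x y ↦ W₁ x y - W₂ x y) (unif01.prod unif01) :=
    h₁.sub h₂
  have hDg : Integrable (Function.uncurry fun x y ↦ (W₁ x y - W₂ x y) * g y)
      (unif01.prod unif01) :=
    h.mul_bdd (g := fun z : ℝ × ℝ ↦ g z.2) (hg.comp measurable_snd).aestronglyMeasurable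
      (.of_forall fun z ↦ hgB z.2)
  refine abs_integral_mul_le_of_abs_setIntegral_le hDg.integral_prod_left hA hfA fun S hS ↦ ?_
  have restr {f : ℝ → ℝ → ℝ} (hf : Integrable (Function.uncurry f) (unif01.prod unif01))
      (T : Set ℝ) :
      Integrable (Function.uncurry f) ((unif01.restrict S).prod (unif01.restrict T)) := by
    rw [Measure.prod_restrict]
    exact hf.restrict
  have restr_left {f : ℝ → ℝ → ℝ} (hf : Integrable (Function.uncurry f) (unif01.prod unif01)) :
      Integrable (Function.uncurry f) ((unif01.restrict S).prod unif01) := by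
    simpa only [Measure.restrict_univ] using restr hf univ
  simp only [Function.uncurry_apply_pair]
  rw [integral_integral_swap (restr_left hDg)]
  simp_rw [integral_mul_const, mul_comm _ (g _)]
  refine abs_integral_mul_le_of_abs_setIntegral_le (restr_left h).integral_prod_right hB hgB
    fun T hT ↦ ?_
  simp only [Function.uncurry_apply_pair]
  rw [← integral_integral_swap (restr h T)]
  exact abs_setIntegral_setIntegral_sub_le_cutDist h₁ h₂ hS hT

end CutDistance
section StarKernel

/-- A kernel for which the `m`-leaf star integrals converge absolutely: it is integrable and its
degree function has a finite `m`-th moment. -/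
structure IsStarKernel (m : ℕ) (K : ℝ → ℝ → ℝ) : Prop where
  measurable : Measurable (Function.uncurry K)
  integrable : Integrable (Function.uncurry K) (unif01.prod unif01)
  integrable_degFun_pow : Integrable (fun x ↦ degFun K x ^ m) unif01

/-- Measurable test functions with values in `[-1, 1]`, against which kernels are integrated. -/
structure IsTestFunction {α : Type*} [MeasurableSpace α] (h : α → ℝ) : Prop where
  measurable : Measurable h
  abs_le_one : ∀ y, |h y| ≤ 1

/-- The contribution `∫ K(x, y) h(y) dy` of a leaf with test function `h` to a star rooted
at `x`. -/
noncomputable def leafIntegral (K : ℝ → ℝ → ℝ) (h : ℝ → ℝ) (x : ℝ) : ℝ := ∫ y, K x y * h y ∂unif01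

/-- The integral of an `m`-leaf star with test function `h₀` at the root and `h b` at the leaf
`b`. -/
noncomputable def starIntegral {m : ℕ} (K : ℝ → ℝ → ℝ) (h₀ : ℝ → ℝ) (h : Fin m → ℝ → ℝ) : ℝ :=
  ∫ x, h₀ x * ∏ b, leafIntegral K (h b) x ∂unif01

/-- The part of the `m`-th degree moment of `K` carried by the points of degree above `M`. -/
noncomputable def degTail (m : ℕ) (K : ℝ → ℝ → ℝ) (M : ℝ) : ℝ :=
  ∫ x, {x | M < degFun K x}.indicator (fun x ↦ degFun K x ^ m) x ∂unif01

/-- The points at which the section of `K` is integrable and has degree at most `M`. -/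
def boundedDegSet (K : ℝ → ℝ → ℝ) (M : ℝ) : Set ℝ := {x | Integrable (K x) unif01 ∧ degFun K x ≤ M}

theorem degFun_nonneg (K : ℝ → ℝ → ℝ) (x : ℝ) : 0 ≤ degFun K x :=
  integral_nonneg fun _ ↦ abs_nonneg _

theorem measurable_degFun {K : ℝ → ℝ → ℝ} (hK : Measurable (Function.uncurry K)) :
    Measurable (degFun K) :=
  (StronglyMeasurable.integral_prod_right (ν := unif01) (f := fun x y ↦ |K x y|)
    hK.norm.stronglyMeasurable).measurable

theorem measurable_leafIntegral {K : ℝ → ℝ → ℝ} (hK : Measurable (Function.uncurry K))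
    {h : ℝ → ℝ} (hh : Measurable h) : Measurable (leafIntegral K h) :=
  (StronglyMeasurable.integral_prod_right (ν := unif01) (f := fun x y ↦ K x y * h y)
    (hK.mul (hh.comp measurable_snd)).stronglyMeasurable).measurable

theorem measurableSet_boundedDegSet {K : ℝ → ℝ → ℝ} (hK : Measurable (Function.uncurry K))
    (M : ℝ) : MeasurableSet (boundedDegSet K M) :=
  (measurableSet_integrable hK.stronglyMeasurable).inter
    (measurableSet_le (measurable_degFun hK) measurable_const)

theorem degFun_le_of_abs_le {K : ℝ → ℝ → ℝ} {C : ℝ} (hC : ∀ x y, |K x y| ≤ C) (x : ℝ) :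
    degFun K x ≤ C := by
  have := integral_mono_of_nonneg (μ := unif01) (.of_forall fun _ ↦ abs_nonneg _)
    (integrable_const C) (.of_forall (hC x))
  simpa [degFun] using this

theorem IsStarKernel.of_abs_le {K : ℝ → ℝ → ℝ} (hK : Measurable (Function.uncurry K)) {C : ℝ}
    (hC : ∀ x y, |K x y| ≤ C) (m : ℕ) : IsStarKernel m K where
  measurable := hK
  integrable := .of_bound hK.aestronglyMeasurable C (.of_forall fun z ↦ hC z.1 z.2)
  integrable_degFun_pow :=
    .of_bound ((measurable_degFun hK).pow_const m).aestronglyMeasurable (C ^ m) <|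
      .of_forall fun x ↦ by
        rw [norm_pow, Real.norm_of_nonneg (degFun_nonneg K x)]
        exact pow_le_pow_left₀ (degFun_nonneg K x) (degFun_le_of_abs_le hC x) m

theorem abs_leafIntegral_le_degFun {K : ℝ → ℝ → ℝ} {h : ℝ → ℝ} (hh : IsTestFunction h) {x : ℝ}
    (hx : Integrable (K x) unif01) : |leafIntegral K h x| ≤ degFun K x := by
  refine abs_integral_le_integral_abs.trans
    (integral_mono_of_nonneg (.of_forall fun _ ↦ abs_nonneg _) hx.abs (.of_forall fun y ↦ ?_))
  simp only [abs_mul]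
  exact mul_le_of_le_one_right (abs_nonneg _) (hh.abs_le_one y)

theorem leafIntegral_sub {K₁ K₂ : ℝ → ℝ → ℝ} {h : ℝ → ℝ} (hh : IsTestFunction h) {x : ℝ}
    (hx₁ : Integrable (K₁ x) unif01) (hx₂ : Integrable (K₂ x) unif01) :
    leafIntegral K₁ h x - leafIntegral K₂ h x = ∫ y, (K₁ x y - K₂ x y) * h y ∂unif01 := by
  have mul_test {f : ℝ → ℝ} (hf : Integrable f unif01) : Integrable (fun y ↦ f y * h y) unif01 :=
    hf.mul_bdd hh.measurable.aestronglyMeasurable (.of_forall hh.abs_le_one)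
  simp only [leafIntegral, sub_mul, ← integral_sub (mul_test hx₁) (mul_test hx₂)]

theorem abs_prod_leafIntegral_le_degFun_pow {m : ℕ} {K : ℝ → ℝ → ℝ} {h : Fin m → ℝ → ℝ}
    (hh : ∀ b, IsTestFunction (h b)) {x : ℝ} (hx : Integrable (K x) unif01) :
    |∏ b, leafIntegral K (h b) x| ≤ degFun K x ^ m :=
  calc |∏ b, leafIntegral K (h b) x| = ∏ b, |leafIntegral K (h b) x| := Finset.abs_prod ..
    _ ≤ ∏ _b : Fin m, degFun K x := Finset.prod_le_prod (fun _ _ ↦ abs_nonneg _)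
        fun b _ ↦ abs_leafIntegral_le_degFun (hh b) hx
    _ = degFun K x ^ m := by simp

theorem abs_prod_leafIntegral_le_of_mem_boundedDegSet {m : ℕ} {K : ℝ → ℝ → ℝ}
    {h : Fin m → ℝ → ℝ} (hh : ∀ b, IsTestFunction (h b)) {M : ℝ} (hM : 1 ≤ M) {x : ℝ}
    (hx : x ∈ boundedDegSet K M) (s : Finset (Fin m)) :
    |∏ b ∈ s, leafIntegral K (h b) x| ≤ M ^ m :=
  calc |∏ b ∈ s, leafIntegral K (h b) x| = ∏ b ∈ s, |leafIntegral K (h b) x| := Finset.abs_prod ..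
    _ ≤ ∏ _b ∈ s, M := Finset.prod_le_prod (fun _ _ ↦ abs_nonneg _)
        fun b _ ↦ (abs_leafIntegral_le_degFun (hh b) hx.1).trans hx.2
    _ = M ^ s.card := Finset.prod_const M
    _ ≤ M ^ m := pow_le_pow_right₀ hM (by simpa using s.card_le_univ)

theorem prod_sub_prod_eq_sum_ordered {m : ℕ} (f g : Fin m → ℝ) :
    ∏ i, f i - ∏ i, g i = ∑ i, (∏ j with j < i, f j) * (∏ j with i < j, g j) * (f i - g i) := by
  have := Finset.prod_add_ordered Finset.univ g (fun i ↦ f i - g i)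
  simp only [add_sub_cancel] at this
  rw [this, add_sub_cancel_left]
  exact Finset.sum_congr rfl fun i _ ↦ by ring

namespace IsStarKernel

variable {m : ℕ} {K K₁ K₂ : ℝ → ℝ → ℝ}

theorem integrable_mul_prod_leafIntegral (hK : IsStarKernel m K) {h₀ : ℝ → ℝ}
    (hh₀ : IsTestFunction h₀) {h : Fin m → ℝ → ℝ} (hh : ∀ b, IsTestFunction (h b)) :
    Integrable (fun x ↦ h₀ x * ∏ b, leafIntegral K (h b) x) unif01 := by
  refine Integrable.bdd_mul (hK.integrable_degFun_pow.mono' ?_ ?_)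
    hh₀.measurable.aestronglyMeasurable (.of_forall hh₀.abs_le_one)
  · exact (Finset.measurable_prod _ fun b _ ↦
      measurable_leafIntegral hK.measurable (hh b).measurable).aestronglyMeasurable
  · filter_upwards [hK.integrable.prod_right_ae] with x hx
    exact abs_prod_leafIntegral_le_degFun_pow hh hx

theorem integrable_degTail (hK : IsStarKernel m K) (M : ℝ) :
    Integrable ({x | M < degFun K x}.indicator fun x ↦ degFun K x ^ m) unif01 :=
  hK.integrable_degFun_pow.indicator
    (measurableSet_lt measurable_const (measurable_degFun hK.measurable))

theorem degTail_anti (hK : IsStarKernel m K) : Antitone (degTail m K) := fun M M' h ↦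
  integral_mono (hK.integrable_degTail M') (hK.integrable_degTail M) fun x ↦
    indicator_le_indicator_of_subset (fun _ hx ↦ h.trans_lt hx)
      (fun x ↦ pow_nonneg (degFun_nonneg K x) m) x

theorem tendsto_degTail (hK : IsStarKernel m K) : Tendsto (degTail m K) atTop (nhds 0) := by
  rw [← integral_zero ℝ ℝ (μ := unif01)]
  refine tendsto_integral_filter_of_dominated_convergence (μ := unif01) (l := atTop)
    (fun x ↦ degFun K x ^ m) (.of_forall fun M ↦ (hK.integrable_degTail M).1)
    (.of_forall fun M ↦ .of_forall fun x ↦ ?_) hK.integrable_degFun_pow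
    (.of_forall fun x ↦ tendsto_const_nhds.congr' ?_)
  · exact (norm_indicator_le_norm_self _ x).trans_eq
      (Real.norm_of_nonneg (pow_nonneg (degFun_nonneg K x) m))
  · filter_upwards [eventually_ge_atTop (degFun K x)] with M hM
    exact (indicator_of_notMem (not_lt.2 hM) _).symm

theorem integral_degFun_pow_le (hK : IsStarKernel m K) {M : ℝ} (hM : 0 ≤ M) :
    ∫ x, degFun K x ^ m ∂unif01 ≤ M ^ m + degTail m K M := by
  have pointwise (x : ℝ) :
      degFun K x ^ m ≤ M ^ m + {x | M < degFun K x}.indicator (fun x ↦ degFun K x ^ m) x := by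
    by_cases hx : x ∈ {x | M < degFun K x}
    · rw [indicator_of_mem hx]
      exact le_add_of_nonneg_left (pow_nonneg hM m)
    · rw [indicator_of_notMem hx, add_zero]
      exact pow_le_pow_left₀ (degFun_nonneg K x) (not_lt.1 hx) m
  calc ∫ x, degFun K x ^ m ∂unif01
      ≤ ∫ x, (M ^ m + {x | M < degFun K x}.indicator (fun x ↦ degFun K x ^ m) x) ∂unif01 :=
        integral_mono hK.integrable_degFun_pow
          ((integrable_const (M ^ m)).add (hK.integrable_degTail M)) pointwise
    _ = M ^ m + degTail m K M := by
        rw [integral_add (integrable_const _) (hK.integrable_degTail M), integral_const,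
          probReal_univ, one_smul, degTail]

theorem abs_integral_mul_prod_sub_prod_le (hK₁ : IsStarKernel m K₁) (hK₂ : IsStarKernel m K₂)
    {h₀ : ℝ → ℝ} (hh₀ : IsTestFunction h₀) {h : Fin m → ℝ → ℝ} (hh : ∀ b, IsTestFunction (h b))
    {M : ℝ} (hM : 1 ≤ M) (h₀_zero : ∀ x ∉ boundedDegSet K₁ M ∩ boundedDegSet K₂ M, h₀ x = 0) :
    |∫ x, h₀ x * (∏ b, leafIntegral K₁ (h b) x - ∏ b, leafIntegral K₂ (h b) x) ∂unif01| ≤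
      m * (M ^ m * M ^ m * (4 * cutDist K₁ K₂)) := by
  have hA : 0 ≤ M ^ m * M ^ m := by positivity
  let f (i : Fin m) (x : ℝ) : ℝ := h₀ x * ((∏ j with j < i, leafIntegral K₁ (h j) x) *
    ∏ j with i < j, leafIntegral K₂ (h j) x)
  have f_meas (i : Fin m) : Measurable (f i) := hh₀.measurable.mul <| .mul
    (Finset.measurable_prod _ fun j _ ↦ measurable_leafIntegral hK₁.measurable (hh j).measurable)
    (Finset.measurable_prod _ fun j _ ↦ measurable_leafIntegral hK₂.measurable (hh j).measurable)
  have f_le (i : Fin m) (x : ℝ) : |f i x| ≤ M ^ m * M ^ m := by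
    by_cases hx : x ∈ boundedDegSet K₁ M ∩ boundedDegSet K₂ M
    · rw [abs_mul, abs_mul, ← one_mul (M ^ m * M ^ m)]
      gcongr
      exacts [hh₀.abs_le_one x, abs_prod_leafIntegral_le_of_mem_boundedDegSet hh hM hx.1 _,
        abs_prod_leafIntegral_le_of_mem_boundedDegSet hh hM hx.2 _]
    · simp only [f, h₀_zero x hx, zero_mul, abs_zero, hA]
  have telescope (x : ℝ) :
      h₀ x * (∏ b, leafIntegral K₁ (h b) x - ∏ b, leafIntegral K₂ (h b) x) =
        ∑ i, f i x * ∫ y, (K₁ x y - K₂ x y) * h i y ∂unif01 := by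
    by_cases hx : x ∈ boundedDegSet K₁ M ∩ boundedDegSet K₂ M
    · rw [prod_sub_prod_eq_sum_ordered, Finset.mul_sum]
      refine Finset.sum_congr rfl fun i _ ↦ ?_
      rw [← leafIntegral_sub (hh i) hx.1.1 hx.2.1, mul_assoc (h₀ x)]
    · simp [f, h₀_zero x hx]
  have integrable_term (i : Fin m) :
      Integrable (fun x ↦ f i x * ∫ y, (K₁ x y - K₂ x y) * h i y ∂unif01) unif01 := by
    refine Integrable.bdd_mul ?_ (f_meas i).aestronglyMeasurable (.of_forall (f_le i))
    exact ((hK₁.integrable.sub hK₂.integrable).mul_bdd (g := fun z : ℝ × ℝ ↦ h i z.2)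
      ((hh i).measurable.comp measurable_snd).aestronglyMeasurable
      (.of_forall fun z ↦ (hh i).abs_le_one z.2)).integral_prod_left
  simp_rw [telescope]
  rw [integral_finsetSum _ fun i _ ↦ integrable_term i]
  refine (Finset.abs_sum_le_sum_abs _ _).trans
    ((Finset.sum_le_card_nsmul _ _ (M ^ m * M ^ m * (4 * cutDist K₁ K₂)) fun i _ ↦ ?_).trans_eq
      (by simp))
  refine (abs_integral_mul_integral_sub_mul_le_cutDist hK₁.integrable hK₂.integrable hA
    zero_le_one (hh i).measurable (f_le i) (hh i).abs_le_one).trans_eq (by ring)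

end IsStarKernel

theorem pow_add_pow_le_of_lt_or_lt {a b M : ℝ} (ha : 0 ≤ a) (hb : 0 ≤ b) (h : M < a ∨ M < b)
    (m : ℕ) : a ^ m + b ^ m ≤
      2 * ((if M < a then a ^ m else 0) + if M < b then b ^ m else 0) := by
  have ham := pow_nonneg ha m
  have hbm := pow_nonneg hb m
  rcases le_total a b with hab | hab
  · have := pow_le_pow_left₀ ha hab m
    rw [if_pos (h.elim (·.trans_le hab) id)]
    split_ifs <;> linarith
  · have := pow_le_pow_left₀ hb hab m
    rw [if_pos (h.elim id (·.trans_le hab))]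
    split_ifs <;> linarith

theorem IsStarKernel.abs_setIntegral_compl_mul_prod_sub_prod_le {m : ℕ} {K₁ K₂ : ℝ → ℝ → ℝ}
    (hK₁ : IsStarKernel m K₁) (hK₂ : IsStarKernel m K₂)
    {h₀ : ℝ → ℝ} (hh₀ : IsTestFunction h₀) {h : Fin m → ℝ → ℝ} (hh : ∀ b, IsTestFunction (h b))
    (M : ℝ) :
    |∫ x in (boundedDegSet K₁ M ∩ boundedDegSet K₂ M)ᶜ,
        h₀ x * (∏ b, leafIntegral K₁ (h b) x - ∏ b, leafIntegral K₂ (h b) x) ∂unif01| ≤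
      2 * (degTail m K₁ M + degTail m K₂ M) := by
  have hB : MeasurableSet (boundedDegSet K₁ M ∩ boundedDegSet K₂ M) :=
    (measurableSet_boundedDegSet hK₁.measurable M).inter
      (measurableSet_boundedDegSet hK₂.measurable M)
  rw [degTail, degTail, ← integral_add (hK₁.integrable_degTail M) (hK₂.integrable_degTail M),
    ← integral_const_mul, ← integral_indicator hB.compl]
  refine abs_integral_le_integral_abs.trans (integral_mono_of_nonneg
    (.of_forall fun _ ↦ abs_nonneg _)
    (((hK₁.integrable_degTail M).add (hK₂.integrable_degTail M)).const_mul 2) ?_)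
  filter_upwards [hK₁.integrable.prod_right_ae, hK₂.integrable.prod_right_ae] with x hx₁ hx₂
  by_cases hx : x ∈ boundedDegSet K₁ M ∩ boundedDegSet K₂ M
  · rw [indicator_of_notMem (notMem_compl_iff.2 hx), abs_zero]
    exact mul_nonneg zero_le_two (add_nonneg
      (indicator_nonneg (fun x _ ↦ pow_nonneg (degFun_nonneg K₁ x) m) x)
      (indicator_nonneg (fun x _ ↦ pow_nonneg (degFun_nonneg K₂ x) m) x))
  · have large : M < degFun K₁ x ∨ M < degFun K₂ x := by
      by_contra! h
      exact hx ⟨⟨hx₁, h.1⟩, hx₂, h.2⟩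
    rw [indicator_of_mem (mem_compl hx), abs_mul]
    calc |h₀ x| * |∏ b, leafIntegral K₁ (h b) x - ∏ b, leafIntegral K₂ (h b) x|
        ≤ 1 * (degFun K₁ x ^ m + degFun K₂ x ^ m) := by
          gcongr
          · exact hh₀.abs_le_one x
          · exact (abs_sub _ _).trans (add_le_add (abs_prod_leafIntegral_le_degFun_pow hh hx₁)
              (abs_prod_leafIntegral_le_degFun_pow hh hx₂))
      _ ≤ _ := by
          rw [one_mul]
          exact pow_add_pow_le_of_lt_or_lt (degFun_nonneg K₁ x) (degFun_nonneg K₂ x) large m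

theorem IsStarKernel.abs_starIntegral_sub_le {m : ℕ} {K₁ K₂ : ℝ → ℝ → ℝ}
    (hK₁ : IsStarKernel m K₁) (hK₂ : IsStarKernel m K₂)
    {h₀ : ℝ → ℝ} (hh₀ : IsTestFunction h₀) {h : Fin m → ℝ → ℝ} (hh : ∀ b, IsTestFunction (h b))
    {M : ℝ} (hM : 1 ≤ M) :
    |starIntegral K₁ h₀ h - starIntegral K₂ h₀ h| ≤
      m * (M ^ m * M ^ m * (4 * cutDist K₁ K₂)) + 2 * (degTail m K₁ M + degTail m K₂ M) := by
  let B := boundedDegSet K₁ M ∩ boundedDegSet K₂ M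
  have hB : MeasurableSet B := (measurableSet_boundedDegSet hK₁.measurable M).inter
    (measurableSet_boundedDegSet hK₂.measurable M)
  let d (x : ℝ) : ℝ := ∏ b, leafIntegral K₁ (h b) x - ∏ b, leafIntegral K₂ (h b) x
  have integrable_d : Integrable (fun x ↦ h₀ x * d x) unif01 := by
    simp only [d, mul_sub]
    exact (hK₁.integrable_mul_prod_leafIntegral hh₀ hh).sub
      (hK₂.integrable_mul_prod_leafIntegral hh₀ hh)
  have sub_eq : starIntegral K₁ h₀ h - starIntegral K₂ h₀ h = ∫ x, h₀ x * d x ∂unif01 := by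
    simp only [starIntegral, d, mul_sub]
    exact (integral_sub (hK₁.integrable_mul_prod_leafIntegral hh₀ hh)
      (hK₂.integrable_mul_prod_leafIntegral hh₀ hh)).symm
  have on_B : |∫ x in B, h₀ x * d x ∂unif01| ≤ m * (M ^ m * M ^ m * (4 * cutDist K₁ K₂)) := by
    have test : IsTestFunction (B.indicator h₀) := ⟨hh₀.measurable.indicator hB, fun x ↦
      (norm_indicator_le_norm_self h₀ x).trans (hh₀.abs_le_one x)⟩
    rw [← integral_indicator hB]
    simp_rw [indicator_mul_left]
    exact hK₁.abs_integral_mul_prod_sub_prod_le hK₂ test hh hM fun x hx ↦ indicator_of_notMem hx h₀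
  rw [sub_eq, ← integral_add_compl hB integrable_d]
  exact (abs_add_le _ _).trans
    (add_le_add on_B (hK₁.abs_setIntegral_compl_mul_prod_sub_prod_le hK₂ hh₀ hh M))

end StarKernel
section StarFunctional

theorem edgeProd_star {m : ℕ} (G : SimpleGraph (Fin (m + 1))) [DecidableRel G.Adj]
    (hstar : ∀ a b, G.Adj a b ↔ a ≠ b ∧ (a = 0 ∨ b = 0)) (f : Fin (m + 1) → Fin (m + 1) → ℝ) :
    edgeProd G f = ∏ b : Fin m, f 0 b.succ := by
  refine (Finset.prod_bij (fun b _ ↦ ((0 : Fin (m + 1)), b.succ)) ?_ ?_ ?_ fun _ _ ↦ rfl).symm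
  · intro b _
    simp [hstar, Fin.succ_pos, (Fin.succ_ne_zero b).symm]
  · intro a _ b _ hab
    simpa using hab
  · rintro ⟨a, b⟩ hab
    obtain ⟨⟨hne, h₀⟩, hlt⟩ : (a ≠ b ∧ (a = 0 ∨ b = 0)) ∧ a < b := by simpa [hstar] using hab
    obtain rfl : a = 0 := h₀.resolve_right hlt.ne_bot
    obtain ⟨c, rfl⟩ := Fin.exists_succ_eq.2 hne.symm
    exact ⟨c, Finset.mem_univ _, rfl⟩

/-- The space `𝒯ℳ` of probability measures on `[0, 1] × X` with uniform first marginal. As in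
`inTM`, the first factor is `ℝ` and the marginal is `unif01`. -/
def TM (X : Type*) [MeasurableSpace X] : Set (ProbabilityMeasure (ℝ × X)) :=
  {ν | (ν : Measure (ℝ × X)).fst = unif01}

/-- The functional `T_{W,φ}` for the star with root `0` and leaves `1, …, m`. -/
noncomputable def starFunctional {X : Type*} [MeasurableSpace X] (m : ℕ) (W : ℝ → ℝ → ℝ)
    (φ : (Fin (m + 1) → X) → ℝ) (ν : ProbabilityMeasure (ℝ × X)) : ℝ :=
  ∫ z : Fin (m + 1) → ℝ × X, φ (fun a ↦ (z a).2) * ∏ b : Fin m, W (z 0).1 (z b.succ).1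
    ∂(Measure.pi fun _ ↦ (ν : Measure (ℝ × X)))

theorem TWphi_eq_starFunctional {X : Type*} [MeasurableSpace X] {m : ℕ}
    (G : SimpleGraph (Fin (m + 1))) [DecidableRel G.Adj]
    (hstar : ∀ a b, G.Adj a b ↔ a ≠ b ∧ (a = 0 ∨ b = 0)) (W : ℝ → ℝ → ℝ)
    (φ : (Fin (m + 1) → X) → ℝ) (ν : ProbabilityMeasure (ℝ × X)) :
    TWphi G W φ ν = starFunctional m W φ ν := by
  have probOr_eq : probOr (ν : Measure (ℝ × X)) = ν := if_pos ν.2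
  simp only [TWphi, starFunctional, piProb, edgeProd_star G hstar]
  congr! 2
  exact funext fun _ ↦ probOr_eq

theorem integral_pi_succ {α : Type*} [MeasurableSpace α] {ν : Measure α} [SigmaFinite ν] {m : ℕ}
    {f : (Fin (m + 1) → α) → ℝ} (hf : Integrable f (Measure.pi fun _ ↦ ν)) :
    ∫ z, f z ∂(Measure.pi fun _ ↦ ν) =
      ∫ w, ∫ y : Fin m → α, f (Fin.cons w y) ∂(Measure.pi fun _ ↦ ν) ∂ν := by
  have mp := (measurePreserving_piFinSuccAbove (fun _ : Fin (m + 1) ↦ ν) 0).symm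
  rw [← mp.integral_comp', integral_prod (fun z ↦ f _) (mp.integrable_comp_of_integrable hf)]
  simp only [MeasurableEquiv.piFinSuccAbove_symm_apply, Fin.insertNthEquiv, Equiv.coe_fn_mk,
    Fin.insertNth_zero']

section Kernel

variable {m : ℕ} {W : ℝ → ℝ → ℝ}

theorem integral_prod_abs_eq_degFun_pow (W : ℝ → ℝ → ℝ) (x : ℝ) :
    ∫ y : Fin m → ℝ, ∏ b, |W x (y b)| ∂(Measure.pi fun _ ↦ unif01) = degFun W x ^ m := by
  rw [integral_fintype_prod_eq_prod (fun (_ : Fin m) y ↦ |W x y|), Finset.prod_const,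
    Finset.card_univ, Fintype.card_fin, degFun]

theorem IsStarKernel.integrable_prod (hW : IsStarKernel m W) :
    Integrable (fun u : Fin (m + 1) → ℝ ↦ ∏ b : Fin m, W (u 0) (u b.succ))
      (Measure.pi fun _ ↦ unif01) := by
  have meas : Measurable fun u : Fin (m + 1) → ℝ ↦ ∏ b : Fin m, W (u 0) (u b.succ) :=
    Finset.measurable_prod _ fun b _ ↦
      hW.measurable.comp (f := fun u : Fin (m + 1) → ℝ ↦ (u 0, u b.succ))
        ((measurable_pi_apply 0).prodMk (measurable_pi_apply b.succ))
  have mp := (measurePreserving_piFinSuccAbove (fun _ : Fin (m + 1) ↦ unif01) 0).symm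
  rw [← mp.integrable_comp_emb (MeasurableEquiv.measurableEmbedding _),
    integrable_prod_iff (meas.comp mp.measurable).aestronglyMeasurable]
  simp only [MeasurableEquiv.piFinSuccAbove_symm_apply, Fin.insertNthEquiv, Equiv.coe_fn_mk,
    Fin.insertNth_zero', Function.comp_apply, Fin.cons_zero, Fin.cons_succ, norm_prod,
    Real.norm_eq_abs, integral_prod_abs_eq_degFun_pow]
  refine ⟨?_, hW.integrable_degFun_pow⟩
  filter_upwards [hW.integrable.prod_right_ae] with x hx
  exact Integrable.fintype_prod fun _ ↦ hx

theorem IsStarKernel.integral_abs_prod (hW : IsStarKernel m W) :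
    ∫ u : Fin (m + 1) → ℝ, |∏ b : Fin m, W (u 0) (u b.succ)| ∂(Measure.pi fun _ ↦ unif01) =
      ∫ x, degFun W x ^ m ∂unif01 := by
  rw [integral_pi_succ hW.integrable_prod.abs]
  simp only [Fin.cons_zero, Fin.cons_succ, Finset.abs_prod, integral_prod_abs_eq_degFun_pow]

end Kernel

section TM

variable {X : Type*} [MeasurableSpace X] {ν : ProbabilityMeasure (ℝ × X)} {m : ℕ}
  {W : ℝ → ℝ → ℝ}

theorem measurePreserving_pi_fst_of_mem_TM (hν : ν ∈ TM X) {ι : Type*} [Fintype ι] :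
    MeasurePreserving (fun (z : ι → ℝ × X) i ↦ (z i).1)
      (Measure.pi fun _ ↦ (ν : Measure (ℝ × X))) (Measure.pi fun _ ↦ unif01) :=
  measurePreserving_pi _ _ fun _ ↦ ⟨measurable_fst, hν⟩

theorem integrable_starFunctional (hW : IsStarKernel m W) (hν : ν ∈ TM X)
    {φ : (Fin (m + 1) → X) → ℝ} (hφ : Measurable φ) {C : ℝ} (hC : ∀ x, |φ x| ≤ C) :
    Integrable (fun z : Fin (m + 1) → ℝ × X ↦
      φ (fun a ↦ (z a).2) * ∏ b : Fin m, W (z 0).1 (z b.succ).1)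
      (Measure.pi fun _ ↦ (ν : Measure (ℝ × X))) :=
  ((measurePreserving_pi_fst_of_mem_TM hν).integrable_comp_of_integrable hW.integrable_prod).bdd_mul
    (hφ.comp (by fun_prop)).aestronglyMeasurable (.of_forall fun _ ↦ hC _)

theorem abs_starFunctional_le (hW : IsStarKernel m W) (hν : ν ∈ TM X)
    {φ : (Fin (m + 1) → X) → ℝ} {C : ℝ} (hC : ∀ x, |φ x| ≤ C) :
    |starFunctional m W φ ν| ≤ C * ∫ x, degFun W x ^ m ∂unif01 := by
  have mp := measurePreserving_pi_fst_of_mem_TM hν (ι := Fin (m + 1))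
  have hW' := mp.integrable_comp_of_integrable hW.integrable_prod
  calc |starFunctional m W φ ν|
      ≤ ∫ z : Fin (m + 1) → ℝ × X, C * |∏ b : Fin m, W (z 0).1 (z b.succ).1|
          ∂(Measure.pi fun _ ↦ (ν : Measure (ℝ × X))) := by
        refine abs_integral_le_integral_abs.trans (integral_mono_of_nonneg
          (.of_forall fun _ ↦ abs_nonneg _) (hW'.abs.const_mul C) (.of_forall fun z ↦ ?_))
        simp only [abs_mul]
        gcongr
        exact hC _
    _ = C * ∫ x, degFun W x ^ m ∂unif01 := by
        rw [integral_const_mul, ← hW.integral_abs_prod, ← mp.map_eq,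
          integral_map mp.measurable.aemeasurable]
        rw [mp.map_eq]
        exact hW.integrable_prod.abs.1

/-- The conditional expectation of `ψ` given that the first coordinate equals `t`. -/
noncomputable def condAverage [StandardBorelSpace X] [Nonempty X] (ν : ProbabilityMeasure (ℝ × X))
    (ψ : X → ℝ) (t : ℝ) : ℝ :=
  ∫ x, ψ x ∂((ν : Measure (ℝ × X)).condKernel t)

variable [StandardBorelSpace X] [Nonempty X]

theorem IsTestFunction.condAverage {ψ : X → ℝ} (hψ : IsTestFunction ψ)
    (ν : ProbabilityMeasure (ℝ × X)) : IsTestFunction (condAverage ν ψ) where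
  measurable := hψ.measurable.stronglyMeasurable.integral_kernel.measurable
  abs_le_one t := by
    simpa [_root_.condAverage] using norm_integral_le_of_norm_le_const
      (μ := (ν : Measure (ℝ × X)).condKernel t) (f := ψ) (.of_forall hψ.abs_le_one)

theorem integral_mul_condAverage (hν : ν ∈ TM X) {ψ : X → ℝ} (hψ : IsTestFunction ψ) {R : ℝ → ℝ}
    (hR : Integrable R unif01) :
    ∫ w, R w.1 * ψ w.2 ∂(ν : Measure (ℝ × X)) = ∫ y, R y * condAverage ν ψ y ∂unif01 := by
  have mp : MeasurePreserving Prod.fst (ν : Measure (ℝ × X)) unif01 := ⟨measurable_fst, hν⟩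
  have integrable : Integrable (fun w : ℝ × X ↦ R w.1 * ψ w.2) ν :=
    (mp.integrable_comp_of_integrable hR).mul_bdd
      (hψ.measurable.comp measurable_snd).aestronglyMeasurable (.of_forall fun w ↦ hψ.abs_le_one _)
  rw [← Measure.integral_condKernel integrable, hν]
  simp only [integral_const_mul, condAverage]

theorem starFunctional_prod (hW : IsStarKernel m W) (hν : ν ∈ TM X) {ψ : Fin (m + 1) → X → ℝ}
    (hψ : ∀ a, IsTestFunction (ψ a)) :
    starFunctional m W (fun x ↦ ∏ a, ψ a (x a)) ν =
      starIntegral W (condAverage ν (ψ 0)) fun b : Fin m ↦ condAverage ν (ψ b.succ) := by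
  have mp : MeasurePreserving Prod.fst (ν : Measure (ℝ × X)) unif01 := ⟨measurable_fst, hν⟩
  have integrable := integrable_starFunctional hW hν (φ := fun x ↦ ∏ a, ψ a (x a))
    (Finset.measurable_prod _ fun a _ ↦ (hψ a).measurable.comp (measurable_pi_apply a)) (C := 1)
    fun x ↦ (Finset.abs_prod ..).trans_le
      (Finset.prod_le_one (fun _ _ ↦ abs_nonneg _) fun a _ ↦ (hψ a).abs_le_one _)
  have leaves : ∀ᵐ w ∂(ν : Measure (ℝ × X)), ∫ y : Fin m → ℝ × X,
      ∏ b : Fin m, (W w.1 (y b).1 * ψ b.succ (y b).2)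
        ∂(Measure.pi fun _ ↦ (ν : Measure (ℝ × X))) =
        ∏ b : Fin m, leafIntegral W (condAverage ν (ψ b.succ)) w.1 := by
    filter_upwards [mp.quasiMeasurePreserving.ae hW.integrable.prod_right_ae] with w hw
    rw [integral_fintype_prod_eq_prod (fun (b : Fin m) (y : ℝ × X) ↦ W w.1 y.1 * ψ b.succ y.2)]
    exact Finset.prod_congr rfl fun b _ ↦ integral_mul_condAverage hν (hψ b.succ) hw
  have integrable_leaves :
      Integrable (fun x ↦ ∏ b : Fin m, leafIntegral W (condAverage ν (ψ b.succ)) x) unif01 := by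
    simpa using hW.integrable_mul_prod_leafIntegral (h₀ := fun _ ↦ 1)
      ⟨measurable_const, by simp⟩ fun b ↦ (hψ b.succ).condAverage ν
  calc starFunctional m W (fun x ↦ ∏ a, ψ a (x a)) ν
      = ∫ w, (∫ y : Fin m → ℝ × X, ∏ b : Fin m, (W w.1 (y b).1 * ψ b.succ (y b).2)
          ∂(Measure.pi fun _ ↦ (ν : Measure (ℝ × X)))) * ψ 0 w.2 ∂(ν : Measure (ℝ × X)) := by
        rw [starFunctional, integral_pi_succ integrable]
        simp only [← integral_mul_const, Fin.prod_univ_succ, Fin.cons_zero, Fin.cons_succ,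
          Finset.prod_mul_distrib]
        congr! 4
        ring
    _ = ∫ w, (∏ b : Fin m, leafIntegral W (condAverage ν (ψ b.succ)) w.1) * ψ 0 w.2
          ∂(ν : Measure (ℝ × X)) := by
        refine integral_congr_ae ?_
        filter_upwards [leaves] with w hw
        rw [hw]
    _ = _ := by
        rw [integral_mul_condAverage hν (hψ 0) integrable_leaves, starIntegral]
        simp only [mul_comm]

end TM

end StarFunctional

section StarConverges

/-- Convergence of the kernels `K n` to `W` in cut distance, with uniformly integrable `m`-th
powers of the degrees. -/
structure StarConverges (m : ℕ) (K : ℕ → ℝ → ℝ → ℝ) (W : ℝ → ℝ → ℝ) : Prop where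
  eventually_isStarKernel : ∀ᶠ n in atTop, IsStarKernel m (K n)
  isStarKernel : IsStarKernel m W
  tendsto_cutDist : Tendsto (fun n ↦ cutDist (K n) W) atTop (nhds 0)
  exists_degTail_le : ∀ ε > 0, ∃ M, ∀ᶠ n in atTop, degTail m (K n) M ≤ ε

theorem StarConverges.exists_degTail_add_le {m : ℕ} {K : ℕ → ℝ → ℝ → ℝ} {W : ℝ → ℝ → ℝ}
    (h : StarConverges m K W) {ε : ℝ} (hε : 0 < ε) :
    ∃ M ≥ 1, ∀ᶠ n in atTop, degTail m (K n) M + degTail m W M ≤ ε := by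
  obtain ⟨M₁, hM₁⟩ := h.exists_degTail_le (ε / 2) (by positivity)
  obtain ⟨M, hM, le_M, one_le_M⟩ :=
    (h.isStarKernel.tendsto_degTail.eventually_le_const (half_pos hε)
      |>.and <| (eventually_ge_atTop M₁).and (eventually_ge_atTop 1)).exists
  refine ⟨M, one_le_M, ?_⟩
  filter_upwards [hM₁, h.eventually_isStarKernel] with n hn hK
  linarith [hK.degTail_anti le_M]

section ProductFunctions

variable {ι X : Type*} [Fintype ι]

/-- The products `x ↦ ∏ i, ψ i (x i)` of continuous functions `ψ i` with values in `[-1, 1]`. -/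
def productFunctions (ι X : Type*) [Fintype ι] [TopologicalSpace X] :
    Submonoid C(ι → X, ℝ) where
  carrier := {φ | ∃ ψ : ι → C(X, ℝ), (∀ i x, |ψ i x| ≤ 1) ∧ ∀ x, φ x = ∏ i, ψ i (x i)}
  one_mem' := ⟨1, by simp, by simp⟩
  mul_mem' := by
    rintro _ _ ⟨ψ, hψ, eq₁⟩ ⟨χ, hχ, eq₂⟩
    refine ⟨ψ * χ, fun i x ↦ ?_, fun x ↦ by simp [eq₁, eq₂, Finset.prod_mul_distrib]⟩
    simpa [abs_mul] using mul_le_one₀ (hψ i x) (abs_nonneg _) (hχ i x)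

theorem exists_productFunctions_apply_ne [MetricSpace X] {x y : ι → X} (hxy : x ≠ y) :
    ∃ φ ∈ productFunctions ι X, φ x ≠ φ y := by
  classical
  obtain ⟨i, hi⟩ := Function.ne_iff.1 hxy
  let f : C(X, ℝ) := ⟨fun z ↦ min 1 (dist z (y i)), by fun_prop⟩
  have abs_f_le (z : X) : |f z| ≤ 1 := by
    rw [ContinuousMap.coe_mk, abs_of_nonneg (le_min zero_le_one dist_nonneg)]
    exact min_le_left _ _
  refine ⟨f.comp ⟨fun z ↦ z i, by fun_prop⟩, ⟨Function.update 1 i f, fun j z ↦ ?_, fun z ↦ ?_⟩, ?_⟩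
  · obtain rfl | hj := eq_or_ne j i <;> simp [*]
  · rw [Finset.prod_eq_single i (fun j _ hj ↦ by simp [hj]) (by simp)]
    simp
  · have := lt_min one_pos (dist_pos.2 hi)
    simpa [f] using this.ne'

theorem dense_span_productFunctions [MetricSpace X] [CompactSpace X] :
    Dense (Submodule.span ℝ (productFunctions ι X : Set C(ι → X, ℝ)) : Set C(ι → X, ℝ)) := by
  let A := Algebra.adjoin ℝ (productFunctions ι X : Set C(ι → X, ℝ))
  have separates : A.SeparatesPoints := fun x y hxy ↦
    have ⟨φ, hφ, ne⟩ := exists_productFunctions_apply_ne hxy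
    ⟨φ, ⟨φ, Algebra.subset_adjoin hφ, rfl⟩, ne⟩
  have span_eq : (Submodule.span ℝ (productFunctions ι X : Set C(ι → X, ℝ)) : Set C(ι → X, ℝ)) =
      A := by
    rw [← Subalgebra.coe_toSubmodule, Algebra.adjoin_eq_span, Submonoid.closure_eq]
  rw [span_eq, dense_iff_closure_eq, ← Subalgebra.topologicalClosure_coe,
    ContinuousMap.subalgebra_topologicalClosure_eq_top_of_separatesPoints A separates,
    Algebra.coe_top]

end ProductFunctions

section UniformConvergence

theorem starFunctional_smul {X : Type*} [MeasurableSpace X] {m : ℕ} (W : ℝ → ℝ → ℝ) (c : ℝ)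
    (φ : (Fin (m + 1) → X) → ℝ) (ν : ProbabilityMeasure (ℝ × X)) :
    starFunctional m W (c • φ) ν = c * starFunctional m W φ ν := by
  simp only [starFunctional, ← integral_const_mul, Pi.smul_apply, smul_eq_mul, mul_assoc]

variable {X : Type*} [MetricSpace X] [CompactSpace X] [MeasurableSpace X] [BorelSpace X]
  {m : ℕ} {K : ℕ → ℝ → ℝ → ℝ} {W : ℝ → ℝ → ℝ} {ν : ProbabilityMeasure (ℝ × X)}

theorem starFunctional_add (hW : IsStarKernel m W) (hν : ν ∈ TM X) (φ ψ : C(Fin (m + 1) → X, ℝ)) :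
    starFunctional m W (φ + ψ) ν = starFunctional m W φ ν + starFunctional m W ψ ν := by
  simp only [starFunctional, ContinuousMap.add_apply, add_mul]
  exact integral_add
    (integrable_starFunctional hW hν φ.continuous.measurable φ.norm_coe_le_norm)
    (integrable_starFunctional hW hν ψ.continuous.measurable ψ.norm_coe_le_norm)

theorem abs_starFunctional_sub_le (hW : IsStarKernel m W) (hν : ν ∈ TM X)
    (φ ψ : C(Fin (m + 1) → X, ℝ)) :
    |starFunctional m W φ ν - starFunctional m W ψ ν| ≤
      ‖φ - ψ‖ * ∫ x, degFun W x ^ m ∂unif01 := by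
  have eq_add : starFunctional m W φ ν =
      starFunctional m W (φ - ψ) ν + starFunctional m W ψ ν := by
    rw [← starFunctional_add hW hν, sub_add_cancel]
  rw [eq_add, add_sub_cancel_right]
  exact abs_starFunctional_le hW hν (φ - ψ).norm_coe_le_norm

variable [Nonempty X]

theorem StarConverges.tendstoUniformlyOn_of_mem_productFunctions (h : StarConverges m K W)
    {φ : C(Fin (m + 1) → X, ℝ)} (hφ : φ ∈ productFunctions (Fin (m + 1)) X) :
    TendstoUniformlyOn (fun n ↦ starFunctional m (K n) φ) (starFunctional m W φ) atTop (TM X) := by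
  obtain ⟨ψ, hψ, eq⟩ := hφ
  replace hψ (a : Fin (m + 1)) : IsTestFunction (ψ a) := ⟨(ψ a).continuous.measurable, hψ a⟩
  rw [Metric.tendstoUniformlyOn_iff]
  intro ε hε
  obtain ⟨M, one_le_M, hM⟩ := h.exists_degTail_add_le (ε := ε / 4) (by positivity)
  have cut : Tendsto (fun n ↦ m * (M ^ m * M ^ m * (4 * cutDist (K n) W))) atTop (nhds 0) := by
    simpa using ((h.tendsto_cutDist.const_mul 4).const_mul (M ^ m * M ^ m)).const_mul (m : ℝ)
  filter_upwards [h.eventually_isStarKernel, hM, cut.eventually_lt_const (half_pos hε)]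
    with n hK tail_le cut_lt ν hν
  rw [dist_comm, Real.dist_eq, show ⇑φ = fun x ↦ ∏ a, ψ a (x a) from funext eq,
    starFunctional_prod hK hν hψ, starFunctional_prod h.isStarKernel hν hψ]
  have := hK.abs_starIntegral_sub_le h.isStarKernel ((hψ 0).condAverage ν)
    (fun b : Fin m ↦ (hψ b.succ).condAverage ν) one_le_M
  linarith

theorem StarConverges.tendstoUniformlyOn_of_mem_span (h : StarConverges m K W)
    {φ : C(Fin (m + 1) → X, ℝ)}
    (hφ : φ ∈ Submodule.span ℝ (productFunctions (Fin (m + 1)) X : Set C(Fin (m + 1) → X, ℝ))) :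
    TendstoUniformlyOn (fun n ↦ starFunctional m (K n) φ) (starFunctional m W φ) atTop (TM X) := by
  induction hφ using Submodule.span_induction with
  | mem φ hφ => exact h.tendstoUniformlyOn_of_mem_productFunctions hφ
  | zero =>
    refine Metric.tendstoUniformlyOn_iff.2 fun ε hε ↦ .of_forall fun n ν _ ↦ ?_
    simpa [starFunctional] using hε
  | add φ ψ _ _ ihφ ihψ =>
    refine ((ihφ.add ihψ).congr ?_).congr_right fun ν hν ↦
      (starFunctional_add h.isStarKernel hν φ ψ).symm
    filter_upwards [h.eventually_isStarKernel] with n hK ν hν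
    exact (starFunctional_add hK hν φ ψ).symm
  | smul c φ _ ih =>
    simp only [ContinuousMap.coe_smul]
    refine (((uniformContinuous_const_smul c).comp_tendstoUniformlyOn ih).congr ?_).congr_right ?_
    · exact .of_forall fun n ν _ ↦ (starFunctional_smul (K n) c φ ν).symm
    · exact fun ν _ ↦ (starFunctional_smul W c φ ν).symm

theorem StarConverges.tendstoUniformlyOn_starFunctional (h : StarConverges m K W)
    (φ : C(Fin (m + 1) → X, ℝ)) :
    TendstoUniformlyOn (fun n ↦ starFunctional m (K n) φ) (starFunctional m W φ) atTop (TM X) := by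
  rw [Metric.tendstoUniformlyOn_iff]
  intro ε hε
  obtain ⟨M, one_le_M, hM⟩ := h.exists_degTail_add_le one_pos
  let C := 2 * (M ^ m + 1)
  obtain ⟨ψ, hψ, dist_lt⟩ := dense_span_productFunctions.exists_dist_lt φ
    (show 0 < ε / (2 * C) by positivity)
  rw [dist_eq_norm, lt_div_iff₀ (by positivity)] at dist_lt
  filter_upwards [h.eventually_isStarKernel, hM, Metric.tendstoUniformlyOn_iff.1
    (h.tendstoUniformlyOn_of_mem_span hψ) (ε / 2) (half_pos hε)] with n hK tail_le close ν hν
  have degMoment_le : ∫ x, degFun (K n) x ^ m ∂unif01 + ∫ x, degFun W x ^ m ∂unif01 ≤ C := by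
    have M_nonneg := zero_le_one.trans one_le_M
    linarith [hK.integral_degFun_pow_le M_nonneg, h.isStarKernel.integral_degFun_pow_le M_nonneg]
  have approx_le := mul_le_mul_of_nonneg_left degMoment_le (norm_nonneg (φ - ψ))
  calc dist (starFunctional m W φ ν) (starFunctional m (K n) φ ν)
      ≤ dist (starFunctional m W φ ν) (starFunctional m W ψ ν) +
          dist (starFunctional m W ψ ν) (starFunctional m (K n) ψ ν) +
          dist (starFunctional m (K n) ψ ν) (starFunctional m (K n) φ ν) := dist_triangle4 ..
    _ < ε := by
      have := close ν hν
      have bound_W := abs_starFunctional_sub_le h.isStarKernel hν φ ψ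
      have bound_K := abs_starFunctional_sub_le hK hν φ ψ
      rw [dist_comm (starFunctional m (K n) ψ ν)]
      rw [← Real.dist_eq] at bound_W bound_K
      linarith

end UniformConvergence

end StarConverges

section Continuity

section Domination

variable {m : ℕ} {K G : ℝ → ℝ → ℝ}

theorem IsStarKernel.degFun_le_of_abs_le (hG : IsStarKernel m G)
    (hle : ∀ x y, |K x y| ≤ |G x y|) : degFun K ≤ᵐ[unif01] degFun G := by
  filter_upwards [hG.integrable.prod_right_ae] with x hx
  exact integral_mono_of_nonneg (.of_forall fun _ ↦ abs_nonneg _) hx.abs (.of_forall (hle x))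

theorem IsStarKernel.mono (hG : IsStarKernel m G) (hK : Measurable (Function.uncurry K))
    (hle : ∀ x y, |K x y| ≤ |G x y|) : IsStarKernel m K where
  measurable := hK
  integrable := hG.integrable.mono hK.aestronglyMeasurable (.of_forall fun z ↦ hle z.1 z.2)
  integrable_degFun_pow := by
    refine hG.integrable_degFun_pow.mono'
      ((measurable_degFun hK).pow_const m).aestronglyMeasurable ?_
    filter_upwards [hG.degFun_le_of_abs_le hle] with x hx
    rw [norm_pow, Real.norm_of_nonneg (degFun_nonneg K x)]
    exact pow_le_pow_left₀ (degFun_nonneg K x) hx m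

theorem IsStarKernel.degTail_le_of_abs_le (hG : IsStarKernel m G)
    (hK : Measurable (Function.uncurry K)) (hle : ∀ x y, |K x y| ≤ |G x y|) (M : ℝ) :
    degTail m K M ≤ degTail m G M := by
  refine integral_mono_ae ((hG.mono hK hle).integrable_degTail M) (hG.integrable_degTail M) ?_
  filter_upwards [hG.degFun_le_of_abs_le hle] with x hx
  by_cases hMx : M < degFun K x
  · rw [indicator_of_mem (show x ∈ {x | M < degFun K x} from hMx),
      indicator_of_mem (show x ∈ {x | M < degFun G x} from hMx.trans_le hx)]
    exact pow_le_pow_left₀ (degFun_nonneg K x) hx m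
  · rw [indicator_of_notMem (show x ∉ {x | M < degFun K x} from hMx)]
    exact indicator_nonneg (fun x _ ↦ pow_nonneg (degFun_nonneg G x) m) x

theorem StarConverges.of_abs_le {K : ℕ → ℝ → ℝ → ℝ} {W : ℝ → ℝ → ℝ} (hG : IsStarKernel m G)
    (hW : IsStarKernel m W) (hK : ∀ n, Measurable (Function.uncurry (K n)))
    (hle : ∀ n x y, |K n x y| ≤ |G x y|)
    (hKW : Tendsto (fun n ↦ ∫ z, |K n z.1 z.2 - W z.1 z.2| ∂(unif01.prod unif01)) atTop (nhds 0)) :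
    StarConverges m K W where
  eventually_isStarKernel := .of_forall fun n ↦ hG.mono (hK n) (hle n)
  isStarKernel := hW
  tendsto_cutDist := squeeze_zero (fun _ ↦ cutDist_nonneg _ _)
    (fun n ↦ cutDist_le_integral_abs_sub (hG.mono (hK n) (hle n)).integrable hW.integrable) hKW
  exists_degTail_le ε hε := by
    obtain ⟨M, hM⟩ := (hG.tendsto_degTail.eventually_le_const hε).exists
    exact ⟨M, .of_forall fun n ↦ (hG.degTail_le_of_abs_le (hK n) (hle n) M).trans hM⟩

end Domination

section Truncate

/-- The truncation of `r` to the interval `[-C, C]`. -/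
noncomputable def truncate (C r : ℝ) : ℝ := max (-C) (min C r)

theorem continuous_truncate (C : ℝ) : Continuous (truncate C) := by
  unfold truncate
  fun_prop

theorem abs_truncate_le {C : ℝ} (hC : 0 ≤ C) (r : ℝ) : |truncate C r| ≤ C :=
  abs_le.2 ⟨le_max_left _ _, max_le (neg_le_self hC) (min_le_left _ _)⟩

theorem truncate_of_abs_le {C r : ℝ} (h : |r| ≤ C) : truncate C r = r := by
  rw [truncate, min_eq_right (abs_le.1 h).2, max_eq_right (abs_le.1 h).1]

theorem abs_truncate_sub_truncate_le (C a b : ℝ) : |truncate C a - truncate C b| ≤ |a - b| :=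
  ((abs_max_sub_max_le_max _ _ _ _).trans (max_le (by simp) le_rfl)).trans <|
    (abs_min_sub_min_le_max _ _ _ _).trans (max_le (by simp) le_rfl)

theorem abs_truncate_le_abs {C : ℝ} (hC : 0 ≤ C) (r : ℝ) : |truncate C r| ≤ |r| := by
  simpa [truncate_of_abs_le (r := 0) (by simpa)] using abs_truncate_sub_truncate_le C r 0

theorem exists_boundedContinuous_integral_abs_sub_le_of_abs_le {α : Type*} [TopologicalSpace α]
    [NormalSpace α] [MeasurableSpace α] [BorelSpace α] {P : Measure α} [IsFiniteMeasure P]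
    [P.WeaklyRegular] {f : α → ℝ} (hf : Measurable f) {C : ℝ} (hC : ∀ x, |f x| ≤ C) {ε : ℝ}
    (hε : 0 < ε) :
    ∃ g : BoundedContinuousFunction α ℝ, (∀ x, |g x| ≤ C) ∧ ∫ x, |f x - g x| ∂P ≤ ε := by
  obtain _ | ⟨⟨x₀⟩⟩ := isEmpty_or_nonempty α
  · exact ⟨0, isEmptyElim, by simp [Measure.eq_zero_of_isEmpty P, hε.le]⟩
  have C_nonneg : 0 ≤ C := (abs_nonneg _).trans (hC x₀)
  have integrable_f : Integrable f P := .of_bound hf.aestronglyMeasurable C (.of_forall hC)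
  obtain ⟨g, hg, integrable_g⟩ := integrable_f.exists_boundedContinuous_integral_sub_le hε
  refine ⟨.ofNormedAddCommGroup (fun z ↦ truncate C (g z))
    ((continuous_truncate C).comp g.continuous) C fun _ ↦ abs_truncate_le C_nonneg _,
    fun _ ↦ abs_truncate_le C_nonneg _, le_trans ?_ hg⟩
  refine integral_mono_of_nonneg (.of_forall fun _ ↦ abs_nonneg _)
    (integrable_f.sub integrable_g).norm (.of_forall fun x ↦ ?_)
  change |f x - truncate C (g x)| ≤ |f x - g x|
  nth_rw 1 [← truncate_of_abs_le (hC x)]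
  exact abs_truncate_sub_truncate_le C _ _

end Truncate

section TM

variable {X : Type*} [MetricSpace X] [CompactSpace X] [MeasurableSpace X] [BorelSpace X] {m : ℕ}

theorem continuous_starFunctional_boundedContinuous (f : BoundedContinuousFunction (ℝ × ℝ) ℝ)
    (φ : C(Fin (m + 1) → X, ℝ)) :
    Continuous (starFunctional (X := X) m (fun x y ↦ f (x, y)) φ) := by
  let F : BoundedContinuousFunction (Fin (m + 1) → ℝ × X) ℝ :=
    .ofNormedAddCommGroup
      (fun z ↦ φ (fun a ↦ (z a).2) * ∏ b : Fin m, f ((z 0).1, (z b.succ).1)) (by fun_prop)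
      (‖φ‖ * ‖f‖ ^ m) fun z ↦ by
        rw [norm_mul, norm_prod]
        gcongr
        · exact φ.norm_coe_le_norm _
        · exact (Finset.prod_le_prod (fun _ _ ↦ norm_nonneg _) fun _ _ ↦
            f.norm_coe_le_norm _).trans_eq (by simp)
  exact (ProbabilityMeasure.continuous_integral_boundedContinuousFunction F).comp
    (ProbabilityMeasure.continuous_pi.comp (continuous_pi fun _ ↦ continuous_id))

variable [Nonempty X]

theorem StarConverges.continuousOn_starFunctional {K : ℕ → ℝ → ℝ → ℝ} {W : ℝ → ℝ → ℝ}
    (h : StarConverges m K W) {φ : C(Fin (m + 1) → X, ℝ)}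
    (hK : ∀ n, ContinuousOn (starFunctional m (K n) φ) (TM X)) :
    ContinuousOn (starFunctional m W φ) (TM X) :=
  (h.tendstoUniformlyOn_starFunctional φ).continuousOn (.of_forall hK)

theorem continuousOn_starFunctional_of_abs_le {W : ℝ → ℝ → ℝ}
    (hW : Measurable (Function.uncurry W)) {C : ℝ} (hC : ∀ x y, |W x y| ≤ C)
    (φ : C(Fin (m + 1) → X, ℝ)) : ContinuousOn (starFunctional m W φ) (TM X) := by
  choose f hf dist_le using fun n : ℕ ↦
    exists_boundedContinuous_integral_abs_sub_le_of_abs_le (P := unif01.prod unif01) hW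
      (fun z ↦ hC z.1 z.2) (Nat.one_div_pos_of_nat (n := n))
  simp only [abs_sub_comm (Function.uncurry W _)] at dist_le
  exact (StarConverges.of_abs_le (K := fun n x y ↦ f n (x, y))
    (.of_abs_le (K := fun _ _ ↦ C) measurable_const (fun _ _ ↦ le_rfl) m) (.of_abs_le hW hC m)
    (fun n ↦ (f n).continuous.measurable) (fun n x y ↦ (hf n (x, y)).trans (le_abs_self C))
    (squeeze_zero (fun _ ↦ integral_nonneg fun _ ↦ abs_nonneg _) dist_le
      tendsto_one_div_add_atTop_nhds_zero_nat)).continuousOn_starFunctional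
    fun n ↦ (continuous_starFunctional_boundedContinuous (f n) φ).continuousOn

theorem IsStarKernel.continuousOn_starFunctional {W : ℝ → ℝ → ℝ} (hW : IsStarKernel m W)
    (φ : C(Fin (m + 1) → X, ℝ)) : ContinuousOn (starFunctional m W φ) (TM X) := by
  let K (n : ℕ) (x y : ℝ) : ℝ := truncate n (W x y)
  have hK (n : ℕ) : Measurable (Function.uncurry (K n)) :=
    (continuous_truncate n).measurable.comp hW.measurable
  have K_le (n : ℕ) (x y : ℝ) : |K n x y| ≤ |W x y| := abs_truncate_le_abs n.cast_nonneg _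
  refine (StarConverges.of_abs_le hW hW hK K_le ?_).continuousOn_starFunctional fun n ↦
    continuousOn_starFunctional_of_abs_le (hK n) (fun _ _ ↦ abs_truncate_le n.cast_nonneg _) φ
  rw [← integral_zero (ℝ × ℝ) ℝ (μ := unif01.prod unif01)]
  refine tendsto_integral_of_dominated_convergence (fun z ↦ |W z.1 z.2| + |W z.1 z.2|)
    (fun n ↦ ((hK n).sub hW.measurable).abs.aestronglyMeasurable)
    (hW.integrable.abs.add hW.integrable.abs) (fun n ↦ .of_forall fun z ↦ ?_)
    (.of_forall fun z ↦ tendsto_const_nhds.congr' ?_)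
  · rw [Real.norm_eq_abs, abs_abs]
    exact (abs_sub _ _).trans (add_le_add_left (K_le n _ _) _)
  · filter_upwards [eventually_ge_atTop ⌈|W z.1 z.2|⌉₊] with n hn
    simp [K, truncate_of_abs_le (Nat.ceil_le.1 hn)]

theorem isClosed_TM (X : Type*) [TopologicalSpace X] [SecondCountableTopology X]
    [MeasurableSpace X] [BorelSpace X] : IsClosed (TM X) := by
  let P : ProbabilityMeasure ℝ := ⟨unif01, inferInstance⟩
  have TM_eq : TM X = (fun ν ↦ ν.map (f := Prod.fst) measurable_fst.aemeasurable) ⁻¹' {P} := by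
    ext ν
    exact (Subtype.ext_iff (a1 := ν.map measurable_fst.aemeasurable) (a2 := P)).symm
  rw [TM_eq]
  exact isClosed_singleton.preimage (ProbabilityMeasure.continuous_map continuous_fst)

theorem isCompact_TM (X : Type*) [MetricSpace X] [CompactSpace X] [MeasurableSpace X]
    [BorelSpace X] : IsCompact (TM X) := by
  rw [← (isClosed_TM X).closure_eq]
  refine isCompact_closure_of_isTightMeasureSet
    (isTightMeasureSet_iff_exists_isCompact_measure_compl_le.2 fun ε _ ↦
      ⟨Icc 0 1 ×ˢ univ, isCompact_Icc.prod isCompact_univ, ?_⟩)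
  rintro _ ⟨ν, hν, rfl⟩
  have mp : MeasurePreserving Prod.fst (ν : Measure (ℝ × X)) unif01 := ⟨measurable_fst, hν⟩
  rw [prod_univ, ← preimage_compl, mp.measure_preimage measurableSet_Icc.compl.nullMeasurableSet]
  simp [unif01]

end TM

end Continuity

section DonskerVaradhan

open InformationTheory

section Duality

variable {α : Type*} [MeasurableSpace α] {ν ρ : Measure α} [IsProbabilityMeasure ν]
  [IsProbabilityMeasure ρ]

theorem KLdiv_eq_klDiv (ν ρ : Measure α) [IsProbabilityMeasure ν] [IsProbabilityMeasure ρ] :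
    KLdiv ν ρ = klDiv ν ρ := by
  unfold KLdiv
  split_ifs with h
  · simp [klDiv_of_ac_of_integrable h.1 h.2]
  · exact (klDiv_eq_top_iff.2 fun hac hint ↦ h ⟨hac, hint⟩).symm

theorem integrable_exp_of_abs_le {P : Measure α} [IsFiniteMeasure P] {f : α → ℝ}
    (hf : Measurable f) {C : ℝ} (hC : ∀ x, |f x| ≤ C) : Integrable (fun x ↦ Real.exp (f x)) P :=
  .of_bound hf.exp.aestronglyMeasurable (Real.exp C) (.of_forall fun x ↦ by
    rw [Real.norm_eq_abs, Real.abs_exp]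
    exact Real.exp_le_exp.2 ((le_abs_self _).trans (hC x)))

theorem integral_le_integral_llr_add_log_integral_exp (hac : ν ≪ ρ) (hint : Integrable (llr ν ρ) ν)
    {f : α → ℝ} (hf : Measurable f) {C : ℝ} (hC : ∀ x, |f x| ≤ C) :
    ∫ x, f x ∂ν ≤ ∫ x, llr ν ρ x ∂ν + Real.log (∫ x, Real.exp (f x) ∂ρ) := by
  have integrable_f : Integrable f ν := .of_bound hf.aestronglyMeasurable C (.of_forall hC)
  have integrable_exp := integrable_exp_of_abs_le (P := ρ) hf hC
  have := isProbabilityMeasure_tilted integrable_exp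
  have llr_tilted := integral_llr_tilted_right hac integrable_f integrable_exp hint
  have nonneg := integral_llr_add_sub_measure_univ_nonneg
    (hac.trans (absolutelyContinuous_tilted integrable_exp))
    (integrable_llr_tilted_right hac integrable_f hint integrable_exp)
  simp only [probReal_univ] at nonneg
  linarith

theorem exp_le_exp_add_mul_abs_sub {a b C : ℝ} (ha : a ≤ C) :
    Real.exp a ≤ Real.exp b + Real.exp C * |a - b| := by
  have tangent : Real.exp a * (b - a + 1) ≤ Real.exp b :=
    calc Real.exp a * (b - a + 1) ≤ Real.exp a * Real.exp (b - a) :=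
          mul_le_mul_of_nonneg_left (Real.add_one_le_exp _) (Real.exp_pos a).le
      _ = Real.exp b := by rw [← Real.exp_add, add_sub_cancel]
  have : Real.exp a * (a - b) ≤ Real.exp C * |a - b| :=
    (mul_le_mul_of_nonneg_left (le_abs_self _) (Real.exp_pos a).le).trans (by gcongr)
  linarith

theorem integral_le_add_integral_exp_sub_one [TopologicalSpace α] [BorelSpace α]
    [TopologicalSpace.PseudoMetrizableSpace α] {c : ℝ}
    (H : ∀ f : BoundedContinuousFunction α ℝ,
      ∫ x, f x ∂ν ≤ c + Real.log (∫ x, Real.exp (f x) ∂ρ))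
    {f : α → ℝ} (hf : Measurable f) {C : ℝ} (hC : ∀ x, |f x| ≤ C) :
    ∫ x, f x ∂ν ≤ c + (∫ x, Real.exp (f x) ∂ρ - 1) := by
  refine le_of_forall_pos_le_add fun ε hε ↦ ?_
  obtain ⟨g, hg, dist_le⟩ := exists_boundedContinuous_integral_abs_sub_le_of_abs_le (P := ν + ρ)
    hf hC (show 0 < ε / (1 + Real.exp C) by positivity)
  have hgm : Measurable g := g.continuous.measurable
  have integrable_dist (P : Measure α) [IsFiniteMeasure P] :
      Integrable (fun x ↦ |f x - g x|) P :=
    (Integrable.sub (.of_bound hf.aestronglyMeasurable C (.of_forall hC))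
      (.of_bound hgm.aestronglyMeasurable C (.of_forall hg))).abs
  rw [integral_add_measure (integrable_dist ν) (integrable_dist ρ), le_div_iff₀ (by positivity)]
    at dist_le
  have le_g : ∫ x, f x ∂ν ≤ ∫ x, g x ∂ν + ∫ x, |f x - g x| ∂ν := by
    rw [← integral_add (g.integrable ν) (integrable_dist ν)]
    refine integral_mono (.of_bound hf.aestronglyMeasurable C (.of_forall hC))
      ((g.integrable ν).add (integrable_dist ν)) fun x ↦ ?_
    linarith [le_abs_self (f x - g x)]
  have exp_g_le : ∫ x, Real.exp (g x) ∂ρ ≤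
      ∫ x, Real.exp (f x) ∂ρ + Real.exp C * ∫ x, |f x - g x| ∂ρ := by
    rw [← integral_const_mul, ← integral_add (integrable_exp_of_abs_le hf hC)
      ((integrable_dist ρ).const_mul _)]
    refine integral_mono (integrable_exp_of_abs_le hgm hg)
      ((integrable_exp_of_abs_le hf hC).add ((integrable_dist ρ).const_mul _)) fun x ↦ ?_
    simp only [abs_sub_comm (f x)]
    exact exp_le_exp_add_mul_abs_sub ((le_abs_self _).trans (hg x))
  have log_le := Real.log_le_sub_one_of_pos
    (integral_exp_pos (integrable_exp_of_abs_le (P := ρ) hgm hg))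
  have ν_nonneg : 0 ≤ ∫ x, |f x - g x| ∂ν := integral_nonneg fun x ↦ abs_nonneg _
  have ρ_nonneg : 0 ≤ ∫ x, |f x - g x| ∂ρ := integral_nonneg fun x ↦ abs_nonneg _
  nlinarith [H g, mul_nonneg (Real.exp_pos C).le ν_nonneg]

theorem absolutelyContinuous_of_forall_integral_le {c : ℝ}
    (H : ∀ f : α → ℝ, Measurable f → ∀ C, (∀ x, |f x| ≤ C) →
      ∫ x, f x ∂ν ≤ c + (∫ x, Real.exp (f x) ∂ρ - 1)) : ν ≪ ρ := by
  refine Measure.AbsolutelyContinuous.mk fun A hA hρA ↦ ?_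
  by_contra hνA
  have ν_pos : 0 < ν.real A := ENNReal.toReal_pos hνA (measure_ne_top _ _)
  have mul_le (L : ℝ) : L * ν.real A ≤ c := by
    have exp_ae : (fun x ↦ Real.exp (A.indicator (fun _ ↦ L) x)) =ᵐ[ρ] fun _ ↦ 1 := by
      filter_upwards [measure_eq_zero_iff_ae_notMem.1 hρA] with x hx
      simp [hx]
    have := H (A.indicator fun _ ↦ L) (measurable_const.indicator hA) |L| fun x ↦
      norm_indicator_le_norm_self (fun _ ↦ L) x
    rw [integral_congr_ae exp_ae, integral_indicator hA] at this
    simpa [mul_comm] using this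
  have := mul_le ((c + 1) / ν.real A)
  rw [div_mul_cancel₀ _ ν_pos.ne'] at this
  linarith

end Duality

section KlApprox

variable {k : ℕ} {r : ℝ}

/-- The truncation of `r` to the interval `[exp (-k), exp k]`. -/
noncomputable def expClamp (k : ℕ) (r : ℝ) : ℝ := max (Real.exp (-k)) (min (Real.exp k) r)

/-- The approximation of `klFun r` from below with the logarithm truncated to `[-k, k]`. -/
noncomputable def klApprox (k : ℕ) (r : ℝ) : ℝ := r * Real.log (expClamp k r) - expClamp k r + 1

theorem measurable_expClamp (k : ℕ) : Measurable (expClamp k) :=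
  measurable_const.max (measurable_const.min measurable_id)

theorem measurable_klApprox (k : ℕ) : Measurable (klApprox k) :=
  ((measurable_id.mul (measurable_expClamp k).log).sub (measurable_expClamp k)).add_const 1

theorem expClamp_pos (k : ℕ) (r : ℝ) : 0 < expClamp k r :=
  (Real.exp_pos _).trans_le (le_max_left _ _)

theorem expClamp_le (k : ℕ) (r : ℝ) : expClamp k r ≤ Real.exp k :=
  max_le (Real.exp_le_exp.2 (neg_le_self k.cast_nonneg)) (min_le_left _ _)

theorem abs_log_expClamp_le (k : ℕ) (r : ℝ) : |Real.log (expClamp k r)| ≤ k :=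
  abs_le.2 ⟨(Real.le_log_iff_exp_le (expClamp_pos k r)).2 (le_max_left _ _),
    (Real.log_le_iff_le_exp (expClamp_pos k r)).2 (expClamp_le k r)⟩

theorem expClamp_of_le_exp_neg (h : r ≤ Real.exp (-k)) : expClamp k r = Real.exp (-k) :=
  max_eq_left ((min_le_right _ _).trans h)

theorem expClamp_of_exp_le (h : Real.exp k ≤ r) : expClamp k r = Real.exp k := by
  rw [expClamp, min_eq_left h, max_eq_right (Real.exp_le_exp.2 (neg_le_self k.cast_nonneg))]

theorem expClamp_of_mem_Icc (h : r ∈ Icc (Real.exp (-k)) (Real.exp k)) : expClamp k r = r := by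
  rw [expClamp, min_eq_right h.2, max_eq_right h.1]

theorem klApprox_nonneg (k : ℕ) (r : ℝ) : 0 ≤ klApprox k r := by
  have klFun_nonneg := klFun_nonneg (expClamp_pos k r).le
  have k_nonneg : (0 : ℝ) ≤ k := k.cast_nonneg
  have same_sign : 0 ≤ (r - expClamp k r) * Real.log (expClamp k r) := by
    rcases le_total r (Real.exp (-k)) with hr | hr
    · rw [expClamp_of_le_exp_neg hr, Real.log_exp]
      exact mul_nonneg_of_nonpos_of_nonpos (sub_nonpos.2 hr) (neg_nonpos.2 k_nonneg)
    rcases le_total (Real.exp k) r with hr' | hr'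
    · rw [expClamp_of_exp_le hr', Real.log_exp]
      exact mul_nonneg (sub_nonneg.2 hr') k_nonneg
    · simp [expClamp_of_mem_Icc ⟨hr, hr'⟩]
  rw [klFun_apply] at klFun_nonneg
  rw [klApprox]
  linarith

theorem tendsto_klApprox (hr : 0 ≤ r) :
    Tendsto (fun k ↦ klApprox k r) atTop (nhds (klFun r)) := by
  have exp_neg : Tendsto (fun k : ℕ ↦ Real.exp (-k)) atTop (nhds 0) :=
    Real.tendsto_exp_neg_atTop_nhds_zero.comp tendsto_natCast_atTop_atTop
  rcases hr.eq_or_lt with rfl | hr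
  · have (k : ℕ) : klApprox k 0 = 1 - Real.exp (-k) := by
      rw [klApprox, expClamp_of_le_exp_neg (Real.exp_pos _).le]
      ring
    simpa [this, klFun_zero] using exp_neg.const_sub 1
  · refine tendsto_const_nhds.congr' ?_
    filter_upwards [(Real.tendsto_exp_atTop.comp tendsto_natCast_atTop_atTop).eventually_ge_atTop r,
      exp_neg.eventually_le_const hr] with k le_exp exp_le
    rw [klApprox, expClamp_of_mem_Icc ⟨exp_le, le_exp⟩, klFun_apply]
    ring

theorem integrable_mul_log_expClamp_and_expClamp {α : Type*} [MeasurableSpace α]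
    {ρ : Measure α} [IsFiniteMeasure ρ] {f : α → ℝ} (hf : Measurable f)
    (integrable_f : Integrable f ρ) (k : ℕ) :
    Integrable (fun x ↦ f x * Real.log (expClamp k (f x))) ρ ∧
      Integrable (fun x ↦ expClamp k (f x)) ρ :=
  ⟨integrable_f.mul_bdd ((measurable_expClamp k).comp hf).log.aestronglyMeasurable
    (.of_forall fun _ ↦ abs_log_expClamp_le k _),
  .of_bound ((measurable_expClamp k).comp hf).aestronglyMeasurable (Real.exp k)
    (.of_forall fun x ↦ by
      rw [Real.norm_of_nonneg (expClamp_pos k _).le]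
      exact expClamp_le k _)⟩

end KlApprox

section LevelSets

variable {α : Type*} [MeasurableSpace α] {ν ρ : Measure α} [IsProbabilityMeasure ν]
  [IsProbabilityMeasure ρ] {c : ℝ}

theorem lintegral_klApprox_le (hac : ν ≪ ρ)
    (H : ∀ f : α → ℝ, Measurable f → ∀ C, (∀ x, |f x| ≤ C) →
      ∫ x, f x ∂ν ≤ c + (∫ x, Real.exp (f x) ∂ρ - 1)) (k : ℕ) :
    ∫⁻ x, ENNReal.ofReal (klApprox k (ν.rnDeriv ρ x).toReal) ∂ρ ≤ ENNReal.ofReal c := by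
  let r (x : α) : ℝ := (ν.rnDeriv ρ x).toReal
  have hr : Measurable r := (Measure.measurable_rnDeriv ν ρ).ennreal_toReal
  obtain ⟨integrable_log, integrable_clamp⟩ :=
    integrable_mul_log_expClamp_and_expClamp hr Measure.integrable_toReal_rnDeriv k
  have integrable_sub := integrable_log.sub integrable_clamp
  have integrable_kl : Integrable (fun x ↦ klApprox k (r x)) ρ :=
    integrable_sub.add (integrable_const 1)
  have bound := H (fun x ↦ Real.log (expClamp k (r x))) ((measurable_expClamp k).comp hr).log k
    fun _ ↦ abs_log_expClamp_le k _
  simp only [Real.exp_log (expClamp_pos k _)] at bound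
  rw [← integral_rnDeriv_smul hac] at bound
  change ∫⁻ x, ENNReal.ofReal (klApprox k (r x)) ∂ρ ≤ _
  rw [← ofReal_integral_eq_lintegral_ofReal integrable_kl
    (.of_forall fun x ↦ klApprox_nonneg k (r x))]
  refine ENNReal.ofReal_le_ofReal ?_
  calc ∫ x, klApprox k (r x) ∂ρ
      = ∫ x, r x * Real.log (expClamp k (r x)) ∂ρ - ∫ x, expClamp k (r x) ∂ρ + 1 := by
        rw [← integral_sub integrable_log integrable_clamp]
        simpa [klApprox] using integral_add integrable_sub (integrable_const 1)
    _ ≤ c := by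
        simp only [smul_eq_mul] at bound
        linarith

variable [TopologicalSpace α] [BorelSpace α] [TopologicalSpace.PseudoMetrizableSpace α]

theorem KLdiv_le_of_forall_boundedContinuous
    (H : ∀ f : BoundedContinuousFunction α ℝ,
      ∫ x, f x ∂ν ≤ c + Real.log (∫ x, Real.exp (f x) ∂ρ)) : KLdiv ν ρ ≤ ENNReal.ofReal c := by
  have H' (f : α → ℝ) (hf : Measurable f) (C : ℝ) (hC : ∀ x, |f x| ≤ C) :=
    integral_le_add_integral_exp_sub_one H hf hC
  have hac := absolutelyContinuous_of_forall_integral_le H'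
  rw [KLdiv_eq_klDiv, klDiv_eq_lintegral_klFun_of_ac hac]
  calc ∫⁻ x, ENNReal.ofReal (klFun (ν.rnDeriv ρ x).toReal) ∂ρ
      = ∫⁻ x, liminf (fun k ↦ ENNReal.ofReal (klApprox k (ν.rnDeriv ρ x).toReal)) atTop ∂ρ :=
        lintegral_congr fun x ↦ ((ENNReal.continuous_ofReal.tendsto _).comp
          (tendsto_klApprox ENNReal.toReal_nonneg)).liminf_eq.symm
    _ ≤ liminf (fun k ↦ ∫⁻ x, ENNReal.ofReal (klApprox k (ν.rnDeriv ρ x).toReal) ∂ρ) atTop :=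
        lintegral_liminf_le fun k ↦ ((measurable_klApprox k).comp
          (Measure.measurable_rnDeriv ν ρ).ennreal_toReal).ennreal_ofReal
    _ ≤ ENNReal.ofReal c :=
        (liminf_le_liminf (.of_forall (lintegral_klApprox_le hac H'))).trans (by simp)

theorem KLdiv_le_iff_forall_boundedContinuous (hc : 0 ≤ c) :
    KLdiv ν ρ ≤ ENNReal.ofReal c ↔ ∀ f : BoundedContinuousFunction α ℝ,
      ∫ x, f x ∂ν ≤ c + Real.log (∫ x, Real.exp (f x) ∂ρ) := by
  refine ⟨fun h f ↦ ?_, KLdiv_le_of_forall_boundedContinuous⟩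
  unfold KLdiv at h
  split_ifs at h with hac
  · have := integral_le_integral_llr_add_log_integral_exp hac.1 hac.2 f.continuous.measurable
      f.norm_coe_le_norm
    linarith [(ENNReal.ofReal_le_ofReal_iff hc).1 h]
  · simp at h

end LevelSets

/-- The probability measures in `TM X` of entropy at most `c` relative to `unif01 ⊗ μ`. -/
def entropyLevel {X : Type*} [MeasurableSpace X] (μ : Measure X) (c : ℝ) :
    Set (ProbabilityMeasure (ℝ × X)) :=
  {ν | ν ∈ TM X ∧ KLdiv (ν : Measure (ℝ × X)) (unif01.prod μ) ≤ ENNReal.ofReal c}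

theorem isCompact_entropyLevel {X : Type*} [MetricSpace X] [CompactSpace X] [MeasurableSpace X]
    [BorelSpace X] (μ : Measure X) [IsProbabilityMeasure μ] {c : ℝ} (hc : 0 ≤ c) :
    IsCompact (entropyLevel μ c) := by
  have eq_inter : entropyLevel μ c = TM X ∩ ⋂ f : BoundedContinuousFunction (ℝ × X) ℝ,
      {ν : ProbabilityMeasure (ℝ × X) | ∫ x, f x ∂(ν : Measure (ℝ × X)) ≤
        c + Real.log (∫ x, Real.exp (f x) ∂(unif01.prod μ))} := by
    ext ν
    rw [mem_inter_iff, mem_iInter]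
    exact and_congr_right fun _ ↦ KLdiv_le_iff_forall_boundedContinuous hc
  rw [eq_inter]
  exact (isCompact_TM X).inter_right (isClosed_iInter fun f ↦
    isClosed_le (ProbabilityMeasure.continuous_integral_boundedContinuousFunction f)
      continuous_const)

end DonskerVaradhan

section Equipartition

variable {α β X : Type*} [MeasurableSpace α] [MeasurableSpace β] [MeasurableSpace X]

/-- A measurable partition of `(α, P)` into `n` cells of mass `1 / n`, given by the function sending
a point to the index of its cell. -/
structure Equipartition (P : Measure α) (n : ℕ) where
  index : α → Fin n
  measurable_index : Measurable index
  measure_preimage_singleton (i : Fin n) : P (index ⁻¹' {i}) = (n : ℝ≥0∞)⁻¹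

namespace Equipartition

variable {P : Measure α} {P' : Measure β} {n : ℕ} (J : Equipartition P n)

/-- The pullback of an equipartition along a measure preserving map. -/
def comp (f : β → α) (hf : MeasurePreserving f P' P) : Equipartition P' n where
  index b := J.index (f b)
  measurable_index := J.measurable_index.comp hf.measurable
  measure_preimage_singleton i :=
    (hf.measure_preimage (J.measurable_index (measurableSet_singleton i)).nullMeasurableSet).trans
      (J.measure_preimage_singleton i)

/-- The conditional law of `P` in the `i`-th cell. -/
noncomputable def cell (i : Fin n) : Measure α := (n : ℝ≥0∞) • P.restrict (J.index ⁻¹' {i})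

theorem measurableSet_preimage_singleton (i : Fin n) : MeasurableSet (J.index ⁻¹' {i}) :=
  J.measurable_index (measurableSet_singleton i)

instance isProbabilityMeasure_cell (i : Fin n) : IsProbabilityMeasure (J.cell i) where
  measure_univ := by
    rw [cell, Measure.smul_apply, Measure.restrict_apply_univ, J.measure_preimage_singleton,
      smul_eq_mul, ENNReal.mul_inv_cancel (mod_cast i.pos.ne') (ENNReal.natCast_ne_top n)]

theorem ae_cell (i : Fin n) : ∀ᵐ a ∂J.cell i, J.index a = i :=
  Measure.ae_smul_measure (ae_restrict_mem (J.measurableSet_preimage_singleton i)) _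

theorem sum_cell : ∑ i, J.cell i = (n : ℝ≥0∞) • P := by
  ext s hs
  have disjoint : Pairwise (Function.onFun Disjoint fun i ↦ s ∩ J.index ⁻¹' {i}) := fun i k hik ↦
    ((disjoint_singleton.2 hik).preimage J.index).mono inter_subset_right inter_subset_right
  have iUnion_eq : ⋃ i, s ∩ J.index ⁻¹' {i} = s := by
    ext a
    simp
  have sum_eq : ∑ i, P (s ∩ J.index ⁻¹' {i}) = P s := by
    conv_rhs => rw [← iUnion_eq, measure_iUnion disjoint
      fun i ↦ hs.inter (J.measurableSet_preimage_singleton i), tsum_fintype]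
  simp [cell, Measure.restrict_apply hs, ← Finset.mul_sum, sum_eq]

theorem integrable_cell {f : α → ℝ} (hf : Integrable f P) (i : Fin n) : Integrable f (J.cell i) :=
  hf.restrict.smul_measure (ENNReal.natCast_ne_top n)

theorem sum_integral_cell {f : α → ℝ} (hf : Integrable f P) :
    ∑ i, ∫ a, f a ∂J.cell i = n * ∫ a, f a ∂P := by
  rw [← integral_finsetSum_measure fun i _ ↦ J.integrable_cell hf i, sum_cell,
    integral_smul_measure, ENNReal.toReal_natCast, smul_eq_mul]

theorem sum_lintegral_cell (f : α → ℝ≥0∞) :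
    ∑ i, ∫⁻ a, f a ∂J.cell i = n * ∫⁻ a, f a ∂P := by
  rw [← lintegral_finsetSum_measure, sum_cell, lintegral_smul_measure, smul_eq_mul]

theorem sum_integral_comp_index_cell (f : Fin n → α → ℝ)
    (hf : Integrable (fun a ↦ f (J.index a) a) P) :
    ∑ i, ∫ a, f i a ∂J.cell i = n * ∫ a, f (J.index a) a ∂P := by
  rw [← J.sum_integral_cell hf]
  refine Finset.sum_congr rfl fun i _ ↦ integral_congr_ae ?_
  filter_upwards [J.ae_cell i] with a ha
  rw [ha]

section EmpiricalMeasure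

/-- The average of `f (·, y)` over the `i`-th cell. -/
noncomputable def cellAverage (f : α × X → ℝ) (i : Fin n) (y : X) : ℝ := ∫ a, f (a, y) ∂J.cell i

variable {f : α × X → ℝ} {C : ℝ}

theorem measurable_cellAverage (hf : Measurable f) (i : Fin n) : Measurable (J.cellAverage f i) :=
  hf.stronglyMeasurable.integral_prod_left'.measurable

theorem abs_cellAverage_le {X : Type*} {f : α × X → ℝ} {C : ℝ} (hC : ∀ z, |f z| ≤ C)
    (i : Fin n) (y : X) : |J.cellAverage f i y| ≤ C := by
  simpa [cellAverage] using norm_integral_le_of_norm_le_const (μ := J.cell i)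
    (f := fun a ↦ f (a, y)) (.of_forall fun a ↦ hC (a, y))

theorem exp_cellAverage_le (hf : Measurable f) (hC : ∀ z, |f z| ≤ C) (i : Fin n) (y : X) :
    Real.exp (J.cellAverage f i y) ≤ J.cellAverage (fun z ↦ Real.exp (f z)) i y := by
  have hfy : Measurable fun a ↦ f (a, y) := hf.comp measurable_prodMk_right
  exact convexOn_exp.map_integral_le Real.continuous_exp.continuousOn isClosed_univ
    (.of_forall fun _ ↦ mem_univ _)
    (.of_bound hfy.aestronglyMeasurable C (.of_forall fun _ ↦ hC _))
    (integrable_exp_of_abs_le hfy fun _ ↦ hC _)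

theorem integrable_exp_cellAverage (μ : Measure X) [IsProbabilityMeasure μ]
    (hf : Measurable f) (hC : ∀ z, |f z| ≤ C) (i : Fin n) :
    Integrable (fun y ↦ Real.exp (J.cellAverage f i y)) μ :=
  integrable_exp_of_abs_le (J.measurable_cellAverage hf i) (J.abs_cellAverage_le hC i)

theorem measurable_empirical (x : Fin n → X) : Measurable fun a ↦ (a, x (J.index a)) :=
  measurable_id.prodMk ((measurable_of_countable x).comp J.measurable_index)

variable [IsProbabilityMeasure P]

/-- The law of `(U, x_i)` where `U` has law `P` and `i` is the index of the cell of `U`. -/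
noncomputable def empiricalMeasure (x : Fin n → X) : ProbabilityMeasure (α × X) :=
  ⟨P.map fun a ↦ (a, x (J.index a)),
    Measure.isProbabilityMeasure_map (J.measurable_empirical x).aemeasurable⟩

theorem fst_empiricalMeasure (x : Fin n → X) :
    (J.empiricalMeasure x : Measure (α × X)).fst = P :=
  (Measure.map_map measurable_fst (J.measurable_empirical x)).trans Measure.map_id

theorem mul_integral_empiricalMeasure (hf : Measurable f) (hC : ∀ z, |f z| ≤ C) (x : Fin n → X) :
    n * ∫ z, f z ∂(J.empiricalMeasure x : Measure (α × X)) = ∑ i, J.cellAverage f i (x i) := by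
  have hfx := hf.comp (J.measurable_empirical x)
  change _ * ∫ z, f z ∂P.map _ = _
  rw [integral_map (J.measurable_empirical x).aemeasurable hf.aestronglyMeasurable]
  exact (J.sum_integral_comp_index_cell (fun i a ↦ f (a, x i))
    (.of_bound hfx.aestronglyMeasurable C (.of_forall fun _ ↦ hC _))).symm

end EmpiricalMeasure

end Equipartition

theorem prod_le_pow_of_sum_eq_mul {n : ℕ} {c : Fin n → ℝ} (hc : ∀ i, 0 ≤ c i) {Z : ℝ}
    (hZ : ∑ i, c i = n * Z) : ∏ i, c i ≤ Z ^ n := by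
  obtain rfl | hn := eq_or_ne n 0
  · simp
  have amgm := Real.geom_mean_le_arith_mean Finset.univ (fun _ ↦ 1) c (by simp)
    (by simpa using hn.bot_lt) fun i _ ↦ hc i
  have hn' : (n : ℝ) ≠ 0 := mod_cast hn
  simp only [Real.rpow_one, Finset.sum_const, Finset.card_univ, Fintype.card_fin, nsmul_eq_mul,
    mul_one, one_mul, hZ, mul_div_cancel_left₀ _ hn'] at amgm
  calc ∏ i, c i = ((∏ i, c i) ^ (n : ℝ)⁻¹) ^ n :=
        (Real.rpow_inv_natCast_pow (Finset.prod_nonneg fun i _ ↦ hc i) hn).symm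
    _ ≤ Z ^ n := pow_le_pow_left₀ (Real.rpow_nonneg (Finset.prod_nonneg fun i _ ↦ hc i) _) amgm n

section Chernoff

variable {P : Measure α} [IsProbabilityMeasure P] {n : ℕ} (J : Equipartition P n) (μ : Measure X)
  [IsProbabilityMeasure μ] {f : α × X → ℝ} {C : ℝ}

namespace Equipartition

theorem sum_integral_cellAverage (hf : Measurable f) (hC : ∀ z, |f z| ≤ C) :
    ∑ i, ∫ y, J.cellAverage f i y ∂μ = n * ∫ z, f z ∂(P.prod μ) := by
  have integrable_f : Integrable f (P.prod μ) :=
    .of_bound hf.aestronglyMeasurable C (.of_forall hC)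
  rw [integral_prod _ integrable_f, ← J.sum_integral_cell integrable_f.integral_prod_left]
  exact Finset.sum_congr rfl fun i _ ↦ integral_integral_swap
    (f := fun y a ↦ f (a, y)) (.of_bound (hf.comp measurable_swap).aestronglyMeasurable C
      (.of_forall fun _ ↦ hC _))

theorem exp_mul_integral_empiricalMeasure (hf : Measurable f) (hC : ∀ z, |f z| ≤ C)
    (x : Fin n → X) :
    Real.exp (n * ∫ z, f z ∂(J.empiricalMeasure x : Measure (α × X))) =
      ∏ i, Real.exp (J.cellAverage f i (x i)) := by
  rw [J.mul_integral_empiricalMeasure hf hC, Real.exp_sum]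

theorem integral_exp_mul_integral_empiricalMeasure_le (hf : Measurable f)
    (hC : ∀ z, |f z| ≤ C) :
    ∫ x, Real.exp (n * ∫ z, f z ∂(J.empiricalMeasure x : Measure (α × X)))
      ∂Measure.pi (fun _ : Fin n ↦ μ) ≤ (∫ z, Real.exp (f z) ∂(P.prod μ)) ^ n := by
  have exp_le (z : α × X) : |Real.exp (f z)| ≤ Real.exp C := by
    rw [Real.abs_exp]
    exact Real.exp_le_exp.2 ((le_abs_self _).trans (hC z))
  simp only [J.exp_mul_integral_empiricalMeasure hf hC]
  rw [integral_fintype_prod_eq_prod fun i y ↦ Real.exp (J.cellAverage f i y)]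
  refine (Finset.prod_le_prod (fun i _ ↦ integral_nonneg fun y ↦ (Real.exp_pos _).le) fun i _ ↦
    integral_mono (J.integrable_exp_cellAverage μ hf hC i) (.of_bound
      (J.measurable_cellAverage hf.exp i).aestronglyMeasurable _
      (.of_forall (J.abs_cellAverage_le exp_le i))) (J.exp_cellAverage_le hf hC i)).trans ?_
  exact prod_le_pow_of_sum_eq_mul
    (fun i ↦ integral_nonneg fun y ↦ integral_nonneg fun a ↦ (Real.exp_pos _).le)
    (J.sum_integral_cellAverage μ hf.exp exp_le)

theorem measure_lt_integral_empiricalMeasure_le (hf : Measurable f) (hC : ∀ z, |f z| ≤ C)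
    (c : ℝ) :
    Measure.pi (fun _ : Fin n ↦ μ) {x | c + Real.log (∫ z, Real.exp (f z) ∂(P.prod μ)) <
      ∫ z, f z ∂(J.empiricalMeasure x : Measure (α × X))} ≤
      ENNReal.ofReal (Real.exp (-(n * c))) := by
  set Z := ∫ z, Real.exp (f z) ∂(P.prod μ) with hZ
  have Z_pos : 0 < Z := integral_exp_pos (integrable_exp_of_abs_le hf hC)
  have integrable_exp : Integrable
      (fun x ↦ Real.exp (n * ∫ z, f z ∂(J.empiricalMeasure x : Measure (α × X))))
      (Measure.pi fun _ : Fin n ↦ μ) := by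
    simp only [J.exp_mul_integral_empiricalMeasure hf hC]
    exact Integrable.fintype_prod fun i ↦ J.integrable_exp_cellAverage μ hf hC i
  have exp_eq : Real.exp (n * (c + Real.log Z)) = Real.exp (n * c) * Z ^ n := by
    rw [mul_add, Real.exp_add, Real.exp_nat_mul (Real.log Z), Real.exp_log Z_pos]
  have markov := (mul_meas_ge_le_integral_of_nonneg (.of_forall fun x ↦ (Real.exp_pos _).le)
    integrable_exp (Real.exp (n * (c + Real.log Z)))).trans
      (J.integral_exp_mul_integral_empiricalMeasure_le μ hf hC)
  rw [exp_eq, mul_assoc, mul_left_comm, ← hZ] at markov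
  have subset : {x : Fin n → X | c + Real.log Z <
        ∫ z, f z ∂(J.empiricalMeasure x : Measure (α × X))} ⊆
      {x | Real.exp (n * c) * Z ^ n ≤
        Real.exp (n * ∫ z, f z ∂(J.empiricalMeasure x : Measure (α × X)))} := by
    intro x hx
    simp only [mem_ofPred_eq] at hx ⊢
    rw [← exp_eq]
    gcongr
  refine (measure_mono subset).trans ?_
  rw [← ofReal_measureReal]
  refine ENNReal.ofReal_le_ofReal ?_
  rw [Real.exp_neg, ← one_div, le_div_iff₀' (Real.exp_pos _)]
  exact le_of_mul_le_mul_left (markov.trans_eq (mul_one _).symm) (pow_pos Z_pos n)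

end Equipartition

theorem exists_nat_measure_empiricalMeasure_mem_le {X : Type*} [MetricSpace X] [CompactSpace X]
    [MeasurableSpace X] [BorelSpace X] (μ : Measure X) [IsProbabilityMeasure μ] {c : ℝ} (hc : 0 ≤ c)
    {F : Set (ProbabilityMeasure (ℝ × X))} (hF : IsCompact F) (hFTM : F ⊆ TM X)
    (hdisj : Disjoint F (entropyLevel μ c)) :
    ∃ N : ℕ, ∀ (n : ℕ) (J : Equipartition unif01 n),
      Measure.pi (fun _ : Fin n ↦ μ) {x | J.empiricalMeasure x ∈ F} ≤
        N * ENNReal.ofReal (Real.exp (-(n * c))) := by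
  let O (f : BoundedContinuousFunction (ℝ × X) ℝ) : Set (ProbabilityMeasure (ℝ × X)) :=
    {ν | c + Real.log (∫ x, Real.exp (f x) ∂(unif01.prod μ)) < ∫ x, f x ∂(ν : Measure (ℝ × X))}
  have isOpen_O : ∀ f, IsOpen (O f) := fun f ↦ isOpen_lt continuous_const
    (ProbabilityMeasure.continuous_integral_boundedContinuousFunction f)
  have F_subset : F ⊆ ⋃ f, O f := by
    intro ν hν
    have not_le : ¬ KLdiv (ν : Measure (ℝ × X)) (unif01.prod μ) ≤ ENNReal.ofReal c := fun hle ↦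
      disjoint_left.1 hdisj hν ⟨hFTM hν, hle⟩
    rw [KLdiv_le_iff_forall_boundedContinuous hc] at not_le
    push Not at not_le
    exact mem_iUnion.2 not_le
  obtain ⟨t, ht⟩ := hF.elim_finite_subcover O isOpen_O F_subset
  refine ⟨t.card, fun n J ↦ ?_⟩
  calc Measure.pi (fun _ : Fin n ↦ μ) {x | J.empiricalMeasure x ∈ F}
      ≤ Measure.pi (fun _ : Fin n ↦ μ) (⋃ f ∈ t, {x | J.empiricalMeasure x ∈ O f}) :=
        measure_mono fun x hx ↦ by simpa using ht hx
    _ ≤ ∑ _f ∈ t, ENNReal.ofReal (Real.exp (-(n * c))) :=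
        (measure_biUnion_finset_le _ _).trans <| Finset.sum_le_sum fun f _ ↦
          J.measure_lt_integral_empiricalMeasure_le μ f.continuous.measurable f.norm_coe_le_norm c
    _ = _ := by simp

end Chernoff

end Equipartition

section ChangeOfMeasure

open InformationTheory ProbabilityTheory

variable {α β : Type*} [MeasurableSpace α] [MeasurableSpace β]

theorem klDiv_map_measurableEquiv (ν ρ : Measure α) [IsFiniteMeasure ν] [IsFiniteMeasure ρ]
    (e : α ≃ᵐ β) : klDiv (ν.map e) (ρ.map e) = klDiv ν ρ := by
  refine (klDiv_map_le ν ρ e.measurable).antisymm ?_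
  simpa [Measure.map_map e.symm.measurable e.measurable] using
    klDiv_map_le (ν.map e) (ρ.map e) e.symm.measurable

theorem klDiv_prod (ν ρ : Measure α) (ν' ρ' : Measure β) [IsProbabilityMeasure ν]
    [IsProbabilityMeasure ρ] [IsProbabilityMeasure ν'] [IsProbabilityMeasure ρ'] :
    klDiv (ν.prod ν') (ρ.prod ρ') = klDiv ν ρ + klDiv ν' ρ' := by
  have swap : klDiv (ν.prod ν') (ν.prod ρ') = klDiv (ν'.prod ν) (ρ'.prod ν) := by
    rw [← klDiv_map_measurableEquiv _ _ MeasurableEquiv.prodComm]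
    exact congr_arg₂ klDiv Measure.prod_swap Measure.prod_swap
  have chain := klDiv_compProd_eq_add ν ρ (Kernel.const α ν') (Kernel.const α ρ')
  have marginal := klDiv_compProd_left ν' ρ' (Kernel.const β ν)
  simp only [Measure.compProd_const] at chain marginal
  rw [chain, swap, marginal]

theorem klDiv_pi {n : ℕ} {E : Fin n → Type*} [∀ i, MeasurableSpace (E i)]
    (ν ρ : ∀ i, Measure (E i)) [∀ i, IsProbabilityMeasure (ν i)]
    [∀ i, IsProbabilityMeasure (ρ i)] :
    klDiv (Measure.pi ν) (Measure.pi ρ) = ∑ i, klDiv (ν i) (ρ i) := by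
  induction n with
  | zero => rw [Measure.pi_of_empty ν, Measure.pi_of_empty ρ, klDiv_self, Finset.univ_eq_empty,
      Finset.sum_empty]
  | succ n ih =>
    rw [← klDiv_map_measurableEquiv _ _ (MeasurableEquiv.piFinSuccAbove E 0),
      (measurePreserving_piFinSuccAbove ν 0).map_eq, (measurePreserving_piFinSuccAbove ρ 0).map_eq,
      klDiv_prod, ih, Fin.sum_univ_succ]
    rfl

theorem measureReal_mul_neg_log_le {ν ρ : Measure α} [IsProbabilityMeasure ν]
    [IsProbabilityMeasure ρ] (h : klDiv ν ρ ≠ ∞) {A : Set α} (hA : MeasurableSet A) :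
    ν.real A * -Real.log (ρ.real A) ≤ (klDiv ν ρ).toReal + Real.log 2 := by
  obtain ⟨hac, hint⟩ := klDiv_ne_top_iff.1 h
  set p := ρ.real A
  obtain hp | hp : p = 0 ∨ 0 < p := measureReal_nonneg.eq_or_lt'
  · have : 0 ≤ Real.log 2 := Real.log_nonneg one_le_two
    simpa [hp] using add_nonneg ENNReal.toReal_nonneg this
  have bound (x : α) : |A.indicator (fun _ ↦ -Real.log p) x| ≤ |Real.log p| := by
    by_cases hx : x ∈ A <;> simp [hx]
  have exp_indicator (x : α) : Real.exp (A.indicator (fun _ ↦ -Real.log p) x) =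
      A.indicator (fun _ ↦ p⁻¹) x + Aᶜ.indicator (fun _ ↦ 1) x := by
    by_cases hx : x ∈ A <;> simp [hx, Real.exp_neg, Real.exp_log hp]
  have integral_exp_pos : 0 < ∫ x, Real.exp (A.indicator (fun _ ↦ -Real.log p) x) ∂ρ :=
    integral_exp_pos (integrable_exp_of_abs_le (measurable_const.indicator hA) bound)
  have integral_exp_le : ∫ x, Real.exp (A.indicator (fun _ ↦ -Real.log p) x) ∂ρ ≤ 2 := by
    simp only [exp_indicator]
    rw [integral_add ((integrable_const _).indicator hA) ((integrable_const _).indicator hA.compl),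
      integral_indicator_const _ hA, integral_indicator_const _ hA.compl, smul_eq_mul, smul_eq_mul,
      mul_inv_cancel₀ hp.ne', mul_one]
    linarith [measureReal_le_one (μ := ρ) (s := Aᶜ)]
  calc ν.real A * -Real.log p = ∫ x, A.indicator (fun _ ↦ -Real.log p) x ∂ν := by
        rw [integral_indicator_const _ hA, smul_eq_mul]
    _ ≤ ∫ x, llr ν ρ x ∂ν + Real.log (∫ x, Real.exp (A.indicator (fun _ ↦ -Real.log p) x) ∂ρ) :=
        integral_le_integral_llr_add_log_integral_exp hac hint (measurable_const.indicator hA) bound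
    _ ≤ (klDiv ν ρ).toReal + Real.log 2 := by
        rw [toReal_klDiv_of_measure_eq hac (by simp)]
        gcongr

theorem exp_neg_le_measureReal_of_klDiv_add_log_two_le {ν ρ : Measure α} [IsProbabilityMeasure ν]
    [IsProbabilityMeasure ρ] (h : klDiv ν ρ ≠ ∞) {A : Set α} (hA : MeasurableSet A) {q a : ℝ}
    (hq : 0 < q) (hqA : q ≤ ν.real A) (ha : (klDiv ν ρ).toReal + Real.log 2 ≤ q * a) :
    Real.exp (-a) ≤ ρ.real A := by
  have pos : 0 < ρ.real A := by
    refine measureReal_nonneg.lt_of_ne' fun hρ ↦ (hq.trans_le hqA).ne' ?_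
    rw [measureReal_eq_zero_iff] at hρ ⊢
    exact (klDiv_ne_top_iff.1 h).1 hρ
  have neg_log_nonneg : 0 ≤ -Real.log (ρ.real A) :=
    neg_nonneg.2 (Real.log_nonpos pos.le measureReal_le_one)
  have neg_log_le : -Real.log (ρ.real A) ≤ a := by
    refine le_of_mul_le_mul_left ?_ hq
    calc q * -Real.log (ρ.real A) ≤ ν.real A * -Real.log (ρ.real A) := by gcongr
      _ ≤ (klDiv ν ρ).toReal + Real.log 2 := measureReal_mul_neg_log_le h hA
      _ ≤ q * a := ha
  exact (Real.le_log_iff_exp_le pos).1 (neg_le.1 neg_log_le)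

namespace Equipartition

variable {n : ℕ}

theorem cell_eq_withDensity {ν ρ : Measure α} [SigmaFinite ν] [SigmaFinite ρ] (hac : ν ≪ ρ)
    (J : Equipartition ν n) (J' : Equipartition ρ n) (hJ : J.index = J'.index) (i : Fin n) :
    J.cell i = (J'.cell i).withDensity (ν.rnDeriv ρ) := by
  rw [cell, cell, withDensity_smul_measure,
    ← restrict_withDensity (J'.measurableSet_preimage_singleton i),
    Measure.withDensity_rnDeriv_eq _ _ hac, hJ]

theorem sum_klDiv_cell {ν ρ : Measure α} [IsProbabilityMeasure ν] [IsProbabilityMeasure ρ]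
    (hac : ν ≪ ρ) (J : Equipartition ν n) (J' : Equipartition ρ n) (hJ : J.index = J'.index) :
    ∑ i, klDiv (J.cell i) (J'.cell i) = n * klDiv ν ρ := by
  rw [klDiv_eq_lintegral_klFun_of_ac hac, ← J'.sum_lintegral_cell]
  refine Finset.sum_congr rfl fun i _ ↦ ?_
  have cell_eq := cell_eq_withDensity hac J J' hJ i
  rw [klDiv_eq_lintegral_klFun_of_ac (cell_eq ▸ withDensity_absolutelyContinuous _ _), cell_eq]
  refine lintegral_congr_ae ?_
  filter_upwards [Measure.rnDeriv_withDensity (J'.cell i) (Measure.measurable_rnDeriv ν ρ)]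
    with x hx
  rw [hx]

theorem snd_cell_comp_fst {P : Measure α} [IsProbabilityMeasure P] (J : Equipartition P n)
    (μ : Measure β) [IsProbabilityMeasure μ] (i : Fin n) :
    ((J.comp Prod.fst (measurePreserving_fst (μ := P) (ν := μ))).cell i).snd = μ := by
  have cell_eq : (J.comp Prod.fst (measurePreserving_fst (μ := P) (ν := μ))).cell i =
      (J.cell i).prod μ := by
    have preimage_eq : (J.comp Prod.fst (measurePreserving_fst (μ := P) (ν := μ))).index ⁻¹' {i} =
        (J.index ⁻¹' {i}) ×ˢ univ := by
      ext
      simp [comp]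
    rw [cell, cell, Measure.prod_smul_left, preimage_eq, ← Measure.prod_restrict,
      Measure.restrict_univ]
  rw [cell_eq, Measure.snd_prod]

theorem klDiv_pi_snd_cell_le {P : Measure α} [IsProbabilityMeasure P] (J : Equipartition P n)
    {μ : Measure β} [IsProbabilityMeasure μ] {ν : Measure (α × β)} [IsProbabilityMeasure ν]
    (hac : ν ≪ P.prod μ) (hν : MeasurePreserving Prod.fst ν P) :
    klDiv (Measure.pi fun i ↦ ((J.comp Prod.fst hν).cell i).snd) (Measure.pi fun _ ↦ μ) ≤
      n * klDiv ν (P.prod μ) := by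
  rw [klDiv_pi, ← sum_klDiv_cell hac (J.comp Prod.fst hν) (J.comp Prod.fst measurePreserving_fst)
    rfl]
  refine Finset.sum_le_sum fun i _ ↦ ?_
  conv_lhs => rw [← J.snd_cell_comp_fst μ i]
  exact klDiv_map_le _ _ measurable_snd

end Equipartition

end ChangeOfMeasure

section MeanEmpiricalMeasure

variable {α X : Type*} [MeasurableSpace α] [MeasurableSpace X] {P : Measure α}
  {n : ℕ} (J : Equipartition P n)

namespace Equipartition

theorem measurable_prodMk_apply_index :
    Measurable fun z : α × (Fin n → X) ↦ (z.1, z.2 (J.index z.1)) := by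
  have measurable_eval : Measurable fun p : Fin n × (Fin n → X) ↦ p.2 p.1 :=
    measurable_from_prod_countable_right fun i ↦ measurable_pi_apply i
  exact measurable_fst.prodMk
    (measurable_eval.comp ((J.measurable_index.comp measurable_fst).prodMk measurable_snd))

variable [IsProbabilityMeasure P]

theorem pos (J : Equipartition P n) : 0 < n :=
  (J.index (nonempty_of_isProbabilityMeasure P).some).pos

/-- The expected empirical measure of a random vector with law `ρ`. -/
noncomputable def meanEmpiricalMeasure (ρ : Measure (Fin n → X)) [IsProbabilityMeasure ρ] :
    ProbabilityMeasure (α × X) :=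
  ⟨(P.prod ρ).map fun z ↦ (z.1, z.2 (J.index z.1)),
    Measure.isProbabilityMeasure_map J.measurable_prodMk_apply_index.aemeasurable⟩

theorem fst_meanEmpiricalMeasure (ρ : Measure (Fin n → X)) [IsProbabilityMeasure ρ] :
    (J.meanEmpiricalMeasure ρ : Measure (α × X)).fst = P :=
  (Measure.map_map measurable_fst J.measurable_prodMk_apply_index).trans Measure.fst_prod

variable {f : α × X → ℝ} {C : ℝ}

theorem integral_meanEmpiricalMeasure (ρ : Measure (Fin n → X)) [IsProbabilityMeasure ρ]
    (hf : Measurable f) (hC : ∀ z, |f z| ≤ C) :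
    ∫ z, f z ∂(J.meanEmpiricalMeasure ρ : Measure (α × X)) =
      ∫ x, ∫ z, f z ∂(J.empiricalMeasure x : Measure (α × X)) ∂ρ := by
  change ∫ z, f z ∂(P.prod ρ).map _ = _
  rw [integral_map J.measurable_prodMk_apply_index.aemeasurable hf.aestronglyMeasurable,
    integral_prod_symm (fun z : α × (Fin n → X) ↦ f (z.1, z.2 (J.index z.1))) (.of_bound
      (hf.comp J.measurable_prodMk_apply_index).aestronglyMeasurable C (.of_forall fun _ ↦ hC _))]
  exact integral_congr_ae <| .of_forall fun x ↦
    (integral_map (J.measurable_empirical x).aemeasurable hf.aestronglyMeasurable).symm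

theorem map_meanEmpiricalMeasure_pi_snd_cell {ν : Measure (α × X)} [IsProbabilityMeasure ν]
    (hν : MeasurePreserving Prod.fst ν P) :
    (J.meanEmpiricalMeasure (Measure.pi fun i ↦ ((J.comp Prod.fst hν).cell i).snd) :
      Measure (α × X)).map (Prod.map J.index id) = ν.map (Prod.map J.index id) := by
  have measurable_map : Measurable (Prod.map J.index id : α × X → Fin n × X) :=
    J.measurable_index.prodMap measurable_id
  refine Measure.ext_of_lintegral _ fun g hg ↦ ?_
  have measurable_g : Measurable fun z : α × X ↦ g (Prod.map J.index id z) :=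
    hg.comp measurable_map
  rw [lintegral_map hg measurable_map, lintegral_map hg measurable_map,
    ← ENNReal.mul_right_inj (a := (n : ℝ≥0∞)) (mod_cast J.pos.ne') (ENNReal.natCast_ne_top n),
    ← (J.comp Prod.fst hν).sum_lintegral_cell]
  change _ * ∫⁻ z, g _ ∂(P.prod _).map _ = _
  rw [lintegral_map measurable_g J.measurable_prodMk_apply_index,
    lintegral_prod (fun z : α × (Fin n → X) ↦ g (Prod.map J.index id (z.1, z.2 (J.index z.1))))
    (measurable_g.comp J.measurable_prodMk_apply_index).aemeasurable, ← J.sum_lintegral_cell]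
  refine Finset.sum_congr rfl fun i _ ↦ ?_
  have hgi : Measurable fun y ↦ g (i, y) := hg.comp measurable_prodMk_left
  calc ∫⁻ a, ∫⁻ x : Fin n → X, g (J.index a, x (J.index a))
        ∂(Measure.pi fun k ↦ ((J.comp Prod.fst hν).cell k).snd) ∂J.cell i
      = ∫⁻ _, ∫⁻ y, g (i, y) ∂((J.comp Prod.fst hν).cell i).snd ∂J.cell i := by
        refine lintegral_congr_ae ?_
        filter_upwards [J.ae_cell i] with a ha
        rw [ha, ← (measurePreserving_eval
          (fun k ↦ ((J.comp Prod.fst hν).cell k).snd) i).lintegral_comp hgi]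
    _ = ∫⁻ z, g (i, z.2) ∂(J.comp Prod.fst hν).cell i := by
        rw [lintegral_const, measure_univ, mul_one, Measure.snd,
          lintegral_map hgi measurable_snd]
    _ = ∫⁻ z, g (Prod.map J.index id z) ∂(J.comp Prod.fst hν).cell i := by
        refine lintegral_congr_ae ?_
        filter_upwards [(J.comp Prod.fst hν).ae_cell i] with z hz
        rw [← hz]
        rfl

variable (R : Fin n → Measure X) [∀ i, IsProbabilityMeasure (R i)]

theorem measureReal_le_abs_integral_empiricalMeasure_sub_le (hf : Measurable f)
    (hC : ∀ z, |f z| ≤ C) {δ : ℝ} (hδ : 0 < δ) :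
    (Measure.pi R).real {x | δ ≤ |∫ z, f z ∂(J.empiricalMeasure x : Measure (α × X)) -
      ∫ z, f z ∂(J.meanEmpiricalMeasure (Measure.pi R) : Measure (α × X))|} ≤
      C ^ 2 / δ ^ 2 / n := by
  have hn : (0 : ℝ) < n := mod_cast J.pos
  have memLp (i : Fin n) : MemLp (J.cellAverage f i) 2 (R i) :=
    .of_bound (J.measurable_cellAverage hf i).aestronglyMeasurable C
      (.of_forall (J.abs_cellAverage_le hC i))
  set Y : (Fin n → X) → ℝ := ∑ i, fun x ↦ J.cellAverage f i (x i) with hY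
  have Y_eq (x : Fin n → X) : Y x = n * ∫ z, f z ∂(J.empiricalMeasure x : Measure (α × X)) := by
    rw [J.mul_integral_empiricalMeasure hf hC, hY, Finset.sum_apply]
  have memLp_Y : MemLp Y 2 (Measure.pi R) := memLp_finsetSum' _ fun i _ ↦
    (memLp i).comp_measurePreserving (measurePreserving_eval R i)
  have integral_Y : ∫ x, Y x ∂Measure.pi R =
      n * ∫ z, f z ∂(J.meanEmpiricalMeasure (Measure.pi R) : Measure (α × X)) := by
    simp only [Y_eq, integral_const_mul, J.integral_meanEmpiricalMeasure _ hf hC]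
  have variance_le : ProbabilityTheory.variance Y (Measure.pi R) ≤ n * C ^ 2 := by
    rw [hY, ProbabilityTheory.variance_sum_pi memLp]
    calc ∑ i, ProbabilityTheory.variance (J.cellAverage f i) (R i)
        ≤ ∑ _i : Fin n, ((C - -C) / 2) ^ 2 := Finset.sum_le_sum fun i _ ↦
          ProbabilityTheory.variance_le_sq_of_bounded
            (.of_forall fun y ↦ abs_le.1 (J.abs_cellAverage_le hC i y))
            (J.measurable_cellAverage hf i).aemeasurable
      _ = n * C ^ 2 := by simp
  have chebyshev := ProbabilityTheory.meas_ge_le_variance_div_sq memLp_Y (mul_pos hn hδ)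
  rw [integral_Y] at chebyshev
  simp only [Y_eq, ← mul_sub, abs_mul, abs_of_pos hn, mul_le_mul_iff_right₀ hn] at chebyshev
  refine (ENNReal.toReal_le_of_le_ofReal (div_nonneg (ProbabilityTheory.variance_nonneg _ _)
    (by positivity)) chebyshev).trans ?_
  calc ProbabilityTheory.variance _ (Measure.pi R) / (n * δ) ^ 2
      ≤ n * C ^ 2 / (n * δ) ^ 2 := by gcongr
    _ = C ^ 2 / δ ^ 2 / n := by field_simp

variable [TopologicalSpace α] [TopologicalSpace X] [OpensMeasurableSpace (α × X)]
  (t : Finset (BoundedContinuousFunction (α × X) ℝ)) (δ : ℝ)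

theorem measurableSet_forall_abs_integral_empiricalMeasure_sub_lt
    (ν : ProbabilityMeasure (α × X)) :
    MeasurableSet {x : Fin n → X | ∀ f ∈ t, |∫ z, f z ∂(J.empiricalMeasure x : Measure (α × X)) -
      ∫ z, f z ∂(ν : Measure (α × X))| < δ} := by
  have hn : (n : ℝ) ≠ 0 := mod_cast J.pos.ne'
  simp only [ofPred_forall]
  refine Finset.measurableSet_biInter t fun f _ ↦ measurableSet_lt (.abs (.sub_const ?_ _))
    measurable_const
  have integral_eq (x : Fin n → X) : ∫ z, f z ∂(J.empiricalMeasure x : Measure (α × X)) =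
      (∑ i, J.cellAverage f i (x i)) / n := by
    rw [eq_div_iff hn, mul_comm,
      J.mul_integral_empiricalMeasure f.continuous.measurable f.norm_coe_le_norm]
  simp only [integral_eq]
  exact (Finset.measurable_sum _ fun i _ ↦
    (J.measurable_cellAverage f.continuous.measurable i).comp (measurable_pi_apply i)).div_const _

theorem one_sub_le_measureReal_forall_abs_integral_empiricalMeasure_sub_lt {δ : ℝ} (hδ : 0 < δ) :
    1 - (∑ f ∈ t, ‖f‖ ^ 2 / δ ^ 2) / n ≤
      (Measure.pi R).real {x | ∀ f ∈ t, |∫ z, f z ∂(J.empiricalMeasure x : Measure (α × X)) -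
        ∫ z, f z ∂(J.meanEmpiricalMeasure (Measure.pi R) : Measure (α × X))| < δ} := by
  have compl_eq : {x : Fin n → X | ∀ f ∈ t,
        |∫ z, f z ∂(J.empiricalMeasure x : Measure (α × X)) -
          ∫ z, f z ∂(J.meanEmpiricalMeasure (Measure.pi R) : Measure (α × X))| < δ}ᶜ =
      ⋃ f ∈ t, {x | δ ≤ |∫ z, f z ∂(J.empiricalMeasure x : Measure (α × X)) -
        ∫ z, f z ∂(J.meanEmpiricalMeasure (Measure.pi R) : Measure (α × X))|} := by
    ext x
    simp
  have compl_le := measureReal_biUnion_finset_le (μ := Measure.pi R) t fun f ↦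
    {x | δ ≤ |∫ z, f z ∂(J.empiricalMeasure x : Measure (α × X)) -
      ∫ z, f z ∂(J.meanEmpiricalMeasure (Measure.pi R) : Measure (α × X))|}
  have sum_le := Finset.sum_le_sum fun f (_ : f ∈ t) ↦
    J.measureReal_le_abs_integral_empiricalMeasure_sub_le R f.continuous.measurable
      f.norm_coe_le_norm hδ
  rw [← Finset.sum_div] at sum_le
  have add_compl := probReal_add_probReal_compl (μ := Measure.pi R)
    (J.measurableSet_forall_abs_integral_empiricalMeasure_sub_lt t δ
      (J.meanEmpiricalMeasure (Measure.pi R)))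
  rw [compl_eq] at add_compl
  linarith

end Equipartition

end MeanEmpiricalMeasure

section StepKernel

variable {α X : Type*} [MeasurableSpace α] [MeasurableSpace X] {n : ℕ}

/-- The kernel equal to `Q i j` on the product of the `i`-th and the `j`-th cell. -/
def Equipartition.kernel {P : Measure α} (J : Equipartition P n) (Q : Fin n → Fin n → ℝ) :
    α → α → ℝ :=
  fun x y ↦ Q (J.index x) (J.index y)

theorem starFunctional_kernel (m : ℕ) (J : Equipartition unif01 n) (Q : Fin n → Fin n → ℝ)
    {φ : (Fin (m + 1) → X) → ℝ} (hφ : Measurable φ) (ν : ProbabilityMeasure (ℝ × X)) :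
    starFunctional m (J.kernel Q) φ ν =
      ∫ w : Fin (m + 1) → Fin n × X, φ (fun a ↦ (w a).2) * ∏ b : Fin m, Q (w 0).1 (w b.succ).1
        ∂(Measure.pi fun _ ↦ (ν : Measure (ℝ × X)).map (Prod.map J.index id)) := by
  have measurable_map : Measurable (Prod.map J.index id : ℝ × X → Fin n × X) :=
    J.measurable_index.prodMap measurable_id
  have := Measure.isProbabilityMeasure_map (μ := (ν : Measure (ℝ × X))) measurable_map.aemeasurable
  have measurable_Q : Measurable fun p : Fin n × Fin n ↦ Q p.1 p.2 := measurable_of_countable _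
  rw [← Measure.pi_map_pi fun _ ↦ measurable_map.aemeasurable, integral_map]
  · rfl
  · exact (measurable_pi_lambda _ fun a ↦ measurable_map.comp (measurable_pi_apply a)).aemeasurable
  · refine Measurable.aestronglyMeasurable (.mul (by fun_prop) ?_)
    refine Finset.measurable_prod _ fun b _ ↦ ?_
    exact measurable_Q.comp (f := fun w : Fin (m + 1) → Fin n × X ↦ ((w 0).1, (w b.succ).1))
      (by fun_prop)

end StepKernel

section TestFunctions

theorem exists_boundedContinuous_integral_ne {Ω : Type*} [TopologicalSpace Ω]
    [MeasurableSpace Ω] [BorelSpace Ω] [HasOuterApproxClosed Ω] {ν₁ ν₂ : ProbabilityMeasure Ω}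
    (h : ν₁ ≠ ν₂) :
    ∃ f : BoundedContinuousFunction Ω ℝ,
      ∫ z, f z ∂(ν₁ : Measure Ω) ≠ ∫ z, f z ∂(ν₂ : Measure Ω) := by
  have := ν₁.2
  have := ν₂.2
  contrapose! h
  exact Subtype.ext (ext_of_forall_integral_eq_of_IsFiniteMeasure h)

theorem exists_boundedContinuous_abs_integral_sub_lt {Ω : Type*} [TopologicalSpace Ω]
    [MeasurableSpace Ω] [BorelSpace Ω] [HasOuterApproxClosed Ω] {S : Set (ProbabilityMeasure Ω)}
    (hS : IsCompact S) {T : ProbabilityMeasure Ω → ℝ} (hT : ContinuousOn T S) {ε : ℝ}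
    (hε : 0 < ε) :
    ∃ (t : Finset (BoundedContinuousFunction Ω ℝ)) (δ : ℝ), 0 < δ ∧ ∀ ν₁ ∈ S, ∀ ν₂ ∈ S,
      (∀ f ∈ t, |∫ z, f z ∂(ν₁ : Measure Ω) - ∫ z, f z ∂(ν₂ : Measure Ω)| < δ) →
        |T ν₁ - T ν₂| < ε := by
  let G (p : ProbabilityMeasure Ω × ProbabilityMeasure Ω) : ℝ := |T p.1 - T p.2|
  have continuousOn_G : ContinuousOn G (S ×ˢ S) :=
    ((hT.comp continuousOn_fst fun p hp ↦ hp.1).sub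
      (hT.comp continuousOn_snd fun p hp ↦ hp.2)).abs
  have isCompact_far : IsCompact ((S ×ˢ S) ∩ G ⁻¹' Ici ε) :=
    (hS.prod hS).of_isClosed_subset
      (continuousOn_G.preimage_isClosed_of_isClosed (hS.prod hS).isClosed isClosed_Ici)
      inter_subset_left
  let O (a : BoundedContinuousFunction Ω ℝ × ℕ) :
      Set (ProbabilityMeasure Ω × ProbabilityMeasure Ω) :=
    {p | 1 / ((a.2 : ℝ) + 1) < |∫ z, a.1 z ∂(p.1 : Measure Ω) - ∫ z, a.1 z ∂(p.2 : Measure Ω)|}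
  have isOpen_O (a) : IsOpen (O a) := by
    have := ProbabilityMeasure.continuous_integral_boundedContinuousFunction a.1
    exact isOpen_lt continuous_const
      ((this.comp continuous_fst).sub (this.comp continuous_snd)).abs
  have far_subset : (S ×ˢ S) ∩ G ⁻¹' Ici ε ⊆ ⋃ a, O a := by
    rintro ⟨ν₁, ν₂⟩ ⟨-, hfar : ε ≤ |T ν₁ - T ν₂|⟩
    obtain ⟨f, hf⟩ := exists_boundedContinuous_integral_ne (ν₁ := ν₁) (ν₂ := ν₂) (by
      rintro rfl
      simp [hε.not_ge] at hfar)
    obtain ⟨k, hk⟩ := exists_nat_one_div_lt (abs_pos.2 (sub_ne_zero.2 hf))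
    exact mem_iUnion.2 ⟨(f, k), hk⟩
  obtain ⟨s, hs⟩ := isCompact_far.elim_finite_subcover O isOpen_O far_subset
  classical
  refine ⟨s.image Prod.fst, 1 / ((s.sup Prod.snd : ℕ) + 1), by positivity,
    fun ν₁ h₁ ν₂ h₂ hclose ↦ ?_⟩
  by_contra! hfar
  obtain ⟨a, ha, hO⟩ := mem_iUnion₂.1 (hs (show (ν₁, ν₂) ∈ _ from ⟨⟨h₁, h₂⟩, hfar⟩))
  refine (hclose a.1 (Finset.mem_image_of_mem _ ha)).not_ge (le_trans ?_ (le_of_lt hO))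
  have : a.2 ≤ s.sup Prod.snd := Finset.le_sup (f := Prod.snd) ha
  gcongr

end TestFunctions

section LowerBound

open InformationTheory

variable {X : Type*} [MetricSpace X] [CompactSpace X] [MeasurableSpace X] [BorelSpace X] {m : ℕ}
  {K : ℕ → ℝ → ℝ → ℝ} {W : ℝ → ℝ → ℝ} {φ : C(Fin (m + 1) → X, ℝ)}

theorem eventually_lt_measureReal_abs_starFunctional_sub_lt
    (Q : ∀ n, Fin n → Fin n → ℝ)
    (hT : ContinuousOn (starFunctional m W φ) (TM X))
    (hK : TendstoUniformlyOn (fun n ↦ starFunctional m (K n) φ) (starFunctional m W φ) atTop (TM X))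
    {ν : ProbabilityMeasure (ℝ × X)} (hν : MeasurePreserving Prod.fst (ν : Measure (ℝ × X)) unif01)
    {ε : ℝ} (hε : 0 < ε) {q : ℝ} (hq : q < 1) :
    ∀ᶠ n in atTop, ∀ J : Equipartition unif01 n, K n = J.kernel (Q n) →
      ∃ A : Set (Fin n → X), MeasurableSet A ∧
        A ⊆ {x | |starFunctional m W φ (J.empiricalMeasure x) - starFunctional m W φ ν| < ε} ∧
        q < (Measure.pi fun i ↦ ((J.comp Prod.fst hν).cell i).snd).real A := by
  obtain ⟨t, δ, hδ, ht⟩ :=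
    exists_boundedContinuous_abs_integral_sub_lt (isCompact_TM X) hT (ε := ε / 3) (by positivity)
  have tendsto_zero := tendsto_const_div_atTop_nhds_zero_nat (∑ f ∈ t, ‖f‖ ^ 2 / δ ^ 2)
  filter_upwards [Metric.tendstoUniformlyOn_iff.1 hK (ε / 3) (by positivity),
    tendsto_zero.eventually_lt_const (sub_pos.2 hq)] with n hn hlt J hJ
  set M := J.meanEmpiricalMeasure (Measure.pi fun i ↦ ((J.comp Prod.fst hν).cell i).snd)
  have T_M_eq : starFunctional m (K n) φ M = starFunctional m (K n) φ ν := by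
    rw [hJ, starFunctional_kernel m J (Q n) φ.continuous.measurable,
      starFunctional_kernel m J (Q n) φ.continuous.measurable,
      J.map_meanEmpiricalMeasure_pi_snd_cell hν]
  refine ⟨_, J.measurableSet_forall_abs_integral_empiricalMeasure_sub_lt t δ M, fun x hx ↦ ?_,
    lt_of_lt_of_le (by linarith)
      (J.one_sub_le_measureReal_forall_abs_integral_empiricalMeasure_sub_lt _ t hδ)⟩
  have emp_close := ht _ (J.fst_empiricalMeasure x) M (J.fst_meanEmpiricalMeasure _) hx
  have M_close := hn M (J.fst_meanEmpiricalMeasure _)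
  have ν_close := hn ν hν.map_eq
  rw [Real.dist_eq, T_M_eq] at M_close
  rw [Real.dist_eq] at ν_close
  rw [mem_ofPred_eq]
  rw [abs_lt] at *
  constructor <;> linarith

theorem eventually_ofReal_exp_le_measure_abs_starFunctional_sub_lt (μ : Measure X)
    [IsProbabilityMeasure μ] (Q : ∀ n, Fin n → Fin n → ℝ)
    (hT : ContinuousOn (starFunctional m W φ) (TM X))
    (hK : TendstoUniformlyOn (fun n ↦ starFunctional m (K n) φ) (starFunctional m W φ) atTop (TM X))
    {ν : ProbabilityMeasure (ℝ × X)} (hν : ν ∈ TM X) {b : ℝ}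
    (hb : klDiv (ν : Measure (ℝ × X)) (unif01.prod μ) < ENNReal.ofReal b) {ε : ℝ} (hε : 0 < ε) :
    ∀ᶠ n : ℕ in atTop, ∀ J : Equipartition unif01 n, K n = J.kernel (Q n) →
      ENNReal.ofReal (Real.exp (-(n * b))) ≤ Measure.pi (fun _ : Fin n ↦ μ)
        {x | |starFunctional m W φ (J.empiricalMeasure x) - starFunctional m W φ ν| < ε} := by
  have hfst : MeasurePreserving Prod.fst (ν : Measure (ℝ × X)) unif01 := ⟨measurable_fst, hν⟩
  set D := klDiv (ν : Measure (ℝ × X)) (unif01.prod μ)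
  have D_ne_top : D ≠ ∞ := hb.ne_top
  have b_pos : 0 < b := ENNReal.ofReal_pos.1 (bot_le.trans_lt hb)
  have D_lt : D.toReal < b := (ENNReal.lt_ofReal_iff_toReal_lt D_ne_top).1 hb
  obtain ⟨c, D_lt_c, c_lt⟩ := exists_between D_lt
  have c_pos : 0 < c := ENNReal.toReal_nonneg.trans_lt D_lt_c
  have tendsto_atTop : Tendsto (fun n : ℕ ↦ (n : ℝ) * (c - D.toReal)) atTop atTop :=
    tendsto_natCast_atTop_atTop.atTop_mul_const (sub_pos.2 D_lt_c)
  filter_upwards [eventually_lt_measureReal_abs_starFunctional_sub_lt Q hT hK hfst hε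
    ((div_lt_one b_pos).2 c_lt), tendsto_atTop.eventually_ge_atTop (Real.log 2)] with n hn hlog J hJ
  obtain ⟨A, hA, hAsub, hqA⟩ := hn J hJ
  have kl_le := J.klDiv_pi_snd_cell_le (klDiv_ne_top_iff.1 D_ne_top).1 hfst
  have mul_ne_top : n * D ≠ ∞ := ENNReal.mul_ne_top (ENNReal.natCast_ne_top n) D_ne_top
  have kl_ne_top := ne_top_of_le_ne_top mul_ne_top kl_le
  have toReal_kl_le := ENNReal.toReal_mono mul_ne_top kl_le
  rw [ENNReal.toReal_mul, ENNReal.toReal_natCast] at toReal_kl_le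
  have sum_le : (klDiv (Measure.pi fun i ↦ ((J.comp Prod.fst hfst).cell i).snd)
      (Measure.pi fun _ ↦ μ)).toReal + Real.log 2 ≤ c / b * (n * b) := by
    rw [div_mul_eq_mul_div, mul_left_comm, mul_div_assoc, mul_div_cancel_right₀ _ b_pos.ne']
    linarith
  calc ENNReal.ofReal (Real.exp (-(n * b)))
      ≤ ENNReal.ofReal ((Measure.pi fun _ : Fin n ↦ μ).real A) :=
        ENNReal.ofReal_le_ofReal (exp_neg_le_measureReal_of_klDiv_add_log_two_le kl_ne_top hA
          (div_pos c_pos b_pos) hqA.le sum_le)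
    _ = Measure.pi (fun _ : Fin n ↦ μ) A := ofReal_measureReal
    _ ≤ _ := measure_mono hAsub

end LowerBound

section StepKernels

namespace Equipartition

variable {α : Type*} [MeasurableSpace α] {P : Measure α} [IsFiniteMeasure P] {n : ℕ}
  (J : Equipartition P n)

theorem integrable_comp_index (g : Fin n → ℝ) : Integrable (fun a ↦ g (J.index a)) P :=
  .of_bound ((measurable_of_countable g).comp J.measurable_index).aestronglyMeasurable
    (∑ i, |g i|) (.of_forall fun _ ↦
      Finset.single_le_sum (f := fun i ↦ |g i|) (fun _ _ ↦ abs_nonneg _) (Finset.mem_univ _))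

theorem integral_comp_index (hn : 0 < n) (g : Fin n → ℝ) :
    ∫ a, g (J.index a) ∂P = (∑ i, g i) / n := by
  have := J.sum_integral_comp_index_cell (fun i _ ↦ g i) (J.integrable_comp_index g)
  simp only [integral_const, probReal_univ, one_smul] at this
  rw [this, mul_div_cancel_left₀ _ (by positivity)]

end Equipartition

/-- The normalised degree `n⁻¹ ∑ₖ |Q i k|` of the index `i` in the weighted graph `Q`. -/
noncomputable def rowMean {n : ℕ} (Q : Fin n → Fin n → ℝ) (i : Fin n) : ℝ := (∑ k, |Q i k|) / n

theorem rowMean_nonneg {n : ℕ} (Q : Fin n → Fin n → ℝ) (i : Fin n) : 0 ≤ rowMean Q i :=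
  div_nonneg (Finset.sum_nonneg fun _ _ ↦ abs_nonneg _) n.cast_nonneg

section Kernel

variable {n : ℕ} (J : Equipartition unif01 n) (Q : Fin n → Fin n → ℝ)

theorem measurable_uncurry_kernel : Measurable (Function.uncurry (J.kernel Q)) :=
  (measurable_of_countable fun p : Fin n × Fin n ↦ Q p.1 p.2).comp
    (J.measurable_index.prodMap J.measurable_index)

theorem isStarKernel_kernel (m : ℕ) : IsStarKernel m (J.kernel Q) :=
  .of_abs_le (measurable_uncurry_kernel J Q) (C := ∑ i, ∑ k, |Q i k|)
    (fun x y ↦ (Finset.single_le_sum (f := fun k ↦ |Q (J.index x) k|) (fun _ _ ↦ abs_nonneg _)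
      (Finset.mem_univ (J.index y))).trans
        (Finset.single_le_sum (f := fun i ↦ ∑ k, |Q i k|)
          (fun _ _ ↦ Finset.sum_nonneg fun _ _ ↦ abs_nonneg _) (Finset.mem_univ (J.index x)))) m

theorem degFun_kernel (x : ℝ) : degFun (J.kernel Q) x = rowMean Q (J.index x) :=
  J.integral_comp_index J.pos fun k ↦ |Q (J.index x) k|

theorem degTail_kernel (m : ℕ) (M : ℝ) :
    degTail m (J.kernel Q) M = (∑ i, if M < rowMean Q i then rowMean Q i ^ m else 0) / n := by
  rw [← J.integral_comp_index J.pos]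
  simp only [degTail, degFun_kernel, indicator_apply, mem_ofPred_eq]

theorem starFunctional_kernel_empiricalMeasure {X : Type*} [MeasurableSpace X] (m : ℕ)
    {φ : (Fin (m + 1) → X) → ℝ} (hφ : Measurable φ) (x : Fin n → X) :
    starFunctional m (J.kernel Q) φ (J.empiricalMeasure x) =
      (∑ i : Fin (m + 1) → Fin n, φ (x ∘ i) * ∏ b : Fin m, Q (i 0) (i b.succ)) / n ^ (m + 1) := by
  have := Measure.isProbabilityMeasure_map (μ := unif01) J.measurable_index.aemeasurable
  have measurable_graph : Measurable fun i ↦ (i, x i) := measurable_of_countable _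
  have map_eq : (J.empiricalMeasure x : Measure (ℝ × X)).map (Prod.map J.index id) =
      (unif01.map J.index).map fun i ↦ (i, x i) :=
    (Measure.map_map (J.measurable_index.prodMap measurable_id) (J.measurable_empirical x)).trans
      (Measure.map_map measurable_graph J.measurable_index).symm
  have := Measure.isProbabilityMeasure_map (μ := unif01.map J.index) measurable_graph.aemeasurable
  have weight (i : Fin (m + 1) → Fin n) :
      (Measure.pi fun _ : Fin (m + 1) ↦ unif01.map J.index).real {i} = (n ^ (m + 1) : ℝ)⁻¹ := by
    simp [← univ_pi_singleton i, measureReal_def, Measure.pi_pi,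
      Measure.map_apply J.measurable_index (measurableSet_singleton _),
      J.measure_preimage_singleton]
  rw [starFunctional_kernel m J Q hφ, map_eq, ← Measure.pi_map_pi fun _ ↦
    measurable_graph.aemeasurable, integral_map, integral_fintype .of_finite, Finset.sum_div]
  · simp only [weight, smul_eq_mul, ← div_eq_inv_mul]
    rfl
  · exact (measurable_of_countable _).aemeasurable
  · have measurable_Q : Measurable fun p : Fin n × Fin n ↦ Q p.1 p.2 := measurable_of_countable _
    refine Measurable.aestronglyMeasurable (.mul (by fun_prop) ?_)
    exact Finset.measurable_prod _ fun b _ ↦ measurable_Q.comp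
      (f := fun w : Fin (m + 1) → Fin n × X ↦ ((w 0).1, (w b.succ).1)) (by fun_prop)

end Kernel

section CeilEquipartition

variable {n : ℕ} (hn : 0 < n)

/-- The index `⌈n x⌉` of the cell of `x ∈ (0, 1]`, shifted to count from `0`. -/
noncomputable def ceilIndex (x : ℝ) : Fin n := ⟨min (⌈n * x⌉₊ - 1) (n - 1), by omega⟩

theorem measurable_ceilIndex : Measurable (ceilIndex hn) :=
  (measurable_of_countable fun k : ℕ ↦ (⟨min (k - 1) (n - 1), by omega⟩ : Fin n)).comp
    (Nat.measurable_ceil.comp (measurable_const_mul (n : ℝ)))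

theorem mem_Ioc_iff_ceilIndex_eq {x : ℝ} (hx : x ∈ Ioc (0 : ℝ) 1) (i : Fin n) :
    x ∈ Ioc (((i : ℕ) : ℝ) / n) ((((i : ℕ) : ℝ) + 1) / n) ↔ ceilIndex hn x = i := by
  have hn' : (0 : ℝ) < n := mod_cast hn
  have ceil_pos : 0 < ⌈n * x⌉₊ := Nat.ceil_pos.2 (mul_pos hn' hx.1)
  have ceil_le : ⌈n * x⌉₊ ≤ n := Nat.ceil_le.2 (mul_le_of_le_one_right hn'.le hx.2)
  have lt_iff : (i : ℝ) < n * x ↔ (i : ℕ) < ⌈n * x⌉₊ := Nat.lt_ceil.symm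
  have le_iff : n * x ≤ (i : ℝ) + 1 ↔ ⌈n * x⌉₊ ≤ (i : ℕ) + 1 := by
    rw [Nat.ceil_le, Nat.cast_add_one]
  rw [mem_Ioc, div_lt_iff₀' hn', le_div_iff₀' hn', lt_iff, le_iff, ceilIndex, Fin.ext_iff]
  dsimp only
  omega

/-- The partition of `(0, 1]` into the intervals `((i - 1) / n, i / n]`. -/
noncomputable def ceilEquipartition : Equipartition unif01 n where
  index := ceilIndex hn
  measurable_index := measurable_ceilIndex hn
  measure_preimage_singleton i := by
    have hn' : (0 : ℝ) < n := mod_cast hn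
    have ae_eq : (ceilIndex hn ⁻¹' {i} : Set ℝ) =ᵐ[unif01]
        Ioc (((i : ℕ) : ℝ) / n) ((((i : ℕ) : ℝ) + 1) / n) := by
      filter_upwards [ae_mem_Ioc_unif01] with x hx
      exact propext (mem_Ioc_iff_ceilIndex_eq hn hx i).symm
    have subset : Ioc (((i : ℕ) : ℝ) / n) ((((i : ℕ) : ℝ) + 1) / n) ⊆ Icc (0 : ℝ) 1 :=
      fun x hx ↦ ⟨(by positivity : (0 : ℝ) ≤ (i : ℕ) / n).trans hx.1.le,
        hx.2.trans ((div_le_one hn').2 (mod_cast i.2))⟩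
    rw [measure_congr ae_eq, unif01, Measure.restrict_apply measurableSet_Ioc,
      inter_eq_left.2 subset, Real.volume_Ioc, ← sub_div, add_sub_cancel_left, one_div,
      ENNReal.ofReal_inv_of_pos hn', ENNReal.ofReal_natCast]

variable (Q : Fin n → Fin n → ℝ)

theorem stepKernel_eq_kernel {x y : ℝ} (hx : x ∈ Ioc (0 : ℝ) 1) (hy : y ∈ Ioc (0 : ℝ) 1) :
    stepKernel n Q x y = (ceilEquipartition hn).kernel Q x y := by
  simp only [stepKernel, mem_Ioc_iff_ceilIndex_eq hn hx, mem_Ioc_iff_ceilIndex_eq hn hy, ite_and,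
    Finset.sum_ite_irrel, Finset.sum_const_zero, Finset.sum_ite_eq, Finset.mem_univ, if_true]
  rfl

theorem measurable_uncurry_stepKernel (n : ℕ) (Q : Fin n → Fin n → ℝ) :
    Measurable (Function.uncurry (stepKernel n Q)) := by
  unfold stepKernel Function.uncurry
  exact Finset.measurable_sum _ fun _ _ ↦ Finset.measurable_sum _ fun _ _ ↦
    .ite (measurableSet_Ioc.prod measurableSet_Ioc) measurable_const measurable_const

theorem degFun_stepKernel {x : ℝ} (hx : x ∈ Ioc (0 : ℝ) 1) :
    degFun (stepKernel n Q) x = rowMean Q (ceilIndex hn x) := by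
  refine Eq.trans (integral_congr_ae ?_) (degFun_kernel (ceilEquipartition hn) Q x)
  filter_upwards [ae_mem_Ioc_unif01] with y hy
  rw [stepKernel_eq_kernel hn Q hx hy]

theorem degTail_stepKernel (m : ℕ) (J : Equipartition unif01 n) (M : ℝ) :
    degTail m (stepKernel n Q) M = degTail m (J.kernel Q) M := by
  rw [degTail_kernel, ← degTail_kernel (ceilEquipartition J.pos)]
  refine integral_congr_ae ?_
  filter_upwards [ae_mem_Ioc_unif01] with x hx
  simp only [indicator_apply, mem_ofPred_eq, degFun_stepKernel J.pos Q hx, degFun_kernel]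
  rfl

end CeilEquipartition

theorem cutDist_congr_ae {W₁ W₂ : ℝ → ℝ → ℝ} (W : ℝ → ℝ → ℝ)
    (h : ∀ᵐ x ∂unif01, ∀ᵐ y ∂unif01, W₁ x y = W₂ x y) : cutDist W₁ W = cutDist W₂ W := by
  simp only [cutDist_eq_iSup_unif01]
  refine iSup_congr fun S ↦ iSup_congr fun T ↦
    congrArg abs (integral_congr_ae (ae_restrict_of_ae ?_))
  filter_upwards [h] with x hx
  refine integral_congr_ae (ae_restrict_of_ae ?_)
  filter_upwards [hx] with y hy
  rw [hy]

theorem exists_cutDist_kernel_lt_weakCutDist_add {n : ℕ} (hn : 0 < n) (Q : Fin n → Fin n → ℝ)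
    (W : ℝ → ℝ → ℝ) {η : ℝ} (hη : 0 < η) :
    ∃ J : Equipartition unif01 n,
      cutDist (J.kernel Q) W < weakCutDist (stepKernel n Q) W + η := by
  have : Nonempty {σ : ℝ → ℝ // MPB σ} := ⟨⟨id, bijOn_id _, .id _⟩⟩
  obtain ⟨⟨σ, hσ⟩, hlt⟩ :=
    exists_lt_of_ciInf_lt (lt_add_of_pos_right (weakCutDist (stepKernel n Q) W) hη)
  refine ⟨(ceilEquipartition hn).comp σ hσ.2, (cutDist_congr_ae W ?_).trans_lt hlt⟩
  have mem_Ioc := hσ.2.quasiMeasurePreserving.ae ae_mem_Ioc_unif01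
  filter_upwards [mem_Ioc] with x hx
  filter_upwards [mem_Ioc] with y hy
  exact (stepKernel_eq_kernel hn Q hx hy).symm

theorem degTail_max_one_le_of_setLIntegral_le {m : ℕ} (hm : m ≠ 0) {K : ℝ → ℝ → ℝ}
    (hK : Measurable (Function.uncurry K)) {M ε : ℝ} (hε : 0 ≤ ε)
    (h : ∫⁻ x in {x | M < degFun K x ^ m}, ENNReal.ofReal (degFun K x ^ m) ∂unif01 ≤
      ENNReal.ofReal ε) : degTail m K (max 1 M) ≤ ε := by
  have hdeg := measurable_degFun hK
  rw [degTail, integral_indicator (measurableSet_lt measurable_const hdeg),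
    integral_eq_lintegral_of_nonneg_ae (.of_forall fun x ↦ pow_nonneg (degFun_nonneg K x) m)
      (hdeg.pow_const m).aestronglyMeasurable]
  refine ENNReal.toReal_le_of_le_ofReal hε ((lintegral_mono_set fun x hx ↦ ?_).trans h)
  obtain ⟨one_lt, lt⟩ := max_lt_iff.1 (mem_ofPred_eq ▸ hx)
  exact lt.trans_le (le_self_pow₀ one_lt.le hm)

end StepKernels

section Rademacher

theorem integral_eq_zero_of_comp_eq_neg {α : Type*} [MeasurableSpace α] {ρ : Measure α} {τ : α → α}
    (hτ : MeasurePreserving τ ρ ρ) {F : α → ℝ} (hF : AEStronglyMeasurable F ρ)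
    (h : ∀ z, F (τ z) = -F z) : ∫ z, F z ∂ρ = 0 := by
  have : ∫ z, F z ∂ρ = -∫ z, F z ∂ρ :=
    calc ∫ z, F z ∂ρ = ∫ z, F z ∂(ρ.map τ) := by rw [hτ.map_eq]
      _ = ∫ z, F (τ z) ∂ρ := integral_map hτ.measurable.aemeasurable (by rwa [hτ.map_eq])
      _ = -∫ z, F z ∂ρ := by simp only [h, integral_neg]
  linarith

theorem measurePreserving_update_comp_eval {ι α : Type*} [Fintype ι] [DecidableEq ι]
    [MeasurableSpace α] {ρ : Measure α} [SigmaFinite ρ] {τ : α → α} (hτ : MeasurePreserving τ ρ ρ)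
    (k : ι) :
    MeasurePreserving (fun z ↦ Function.update z k (τ (z k))) (Measure.pi fun _ ↦ ρ)
      (Measure.pi fun _ ↦ ρ) := by
  convert measurePreserving_pi (fun _ : ι ↦ ρ) (fun _ ↦ ρ) (f := Function.update (fun _ ↦ id) k τ)
    fun i ↦ ?_ using 3 with z i
  all_goals obtain rfl | hi := eq_or_ne i k
  · simp
  · simp [hi]
  · simpa using hτ
  · simpa [hi] using MeasurePreserving.id ρ

/-- The two-point space of signs `±1`. -/
abbrev Sign : Type := Metric.sphere (0 : ℝ) 1

theorem Sign.coe_mul_self (s : Sign) : (s : ℝ) * s = 1 := by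
  rw [← abs_mul_abs_self, ← Real.norm_eq_abs, norm_eq_of_mem_sphere, one_mul]

/-- The Rademacher distribution: the law of a fair random sign. -/
noncomputable def rademacher : Measure Sign :=
  (2⁻¹ : ℝ≥0∞) • .dirac 1 + (2⁻¹ : ℝ≥0∞) • .dirac (-1)

instance : IsProbabilityMeasure rademacher := ⟨by simp [rademacher, ENNReal.inv_two_add_inv_two]⟩

theorem measurePreserving_neg_rademacher : MeasurePreserving Neg.neg rademacher rademacher := by
  refine ⟨continuous_neg.measurable, ?_⟩
  simp [rademacher, Measure.map_add _ _ continuous_neg.measurable, continuous_neg.measurable,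
    add_comm]

theorem integral_rademacher_mul {ι : Type*} [Fintype ι] [DecidableEq ι] (k l : ι) :
    ∫ s : ι → Sign, (s k : ℝ) * s l ∂(Measure.pi fun _ ↦ rademacher) = if k = l then 1 else 0 := by
  split_ifs with h
  · simp [h, Sign.coe_mul_self]
  · refine integral_eq_zero_of_comp_eq_neg
      (measurePreserving_update_comp_eval measurePreserving_neg_rademacher k)
      (by fun_prop) fun s ↦ ?_
    simp [Function.update_of_ne (Ne.symm h)]

/-- The product of the signs at the two leaves of the `2`-star. -/
def leafProduct : C(Fin 3 → Sign, ℝ) := ⟨fun s ↦ s 1 * s 2, by fun_prop⟩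

/-- The element `unif01 ⊗ rademacher` of `TM Sign`. -/
noncomputable def unif01ProdRademacher : ProbabilityMeasure (ℝ × Sign) :=
  ⟨unif01.prod rademacher, inferInstance⟩

theorem unif01ProdRademacher_mem_TM : unif01ProdRademacher ∈ TM Sign := Measure.fst_prod

variable {n : ℕ}

theorem starFunctional_leafProduct_unif01ProdRademacher {W : ℝ → ℝ → ℝ} (hW : IsStarKernel 2 W) :
    starFunctional 2 W leafProduct unif01ProdRademacher = 0 := by
  refine integral_eq_zero_of_comp_eq_neg (measurePreserving_update_comp_eval
    ((MeasurePreserving.id unif01).prod measurePreserving_neg_rademacher) 1)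
    (integrable_starFunctional hW unif01ProdRademacher_mem_TM leafProduct.continuous.measurable
      leafProduct.norm_coe_le_norm).aestronglyMeasurable fun z ↦ ?_
  simp [leafProduct, Fin.prod_univ_two, Function.update_apply]

theorem sum_ite_leaves_eq (Q : Fin n → Fin n → ℝ) :
    ∑ i : Fin 3 → Fin n, (if i 1 = i 2 then 1 else 0) * ∏ b : Fin 2, Q (i 0) (i b.succ) =
      ∑ i, ∑ k, Q i k ^ 2 := by
  rw [← (Fin.consEquiv fun _ ↦ Fin n).sum_comp, Fintype.sum_prod_type]
  refine Finset.sum_congr rfl fun i _ ↦ ?_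
  rw [← (finTwoArrowEquiv (Fin n)).symm.sum_comp, Fintype.sum_prod_type]
  refine Finset.sum_congr rfl fun k _ ↦ ?_
  have summand (l : Fin n) : (if k = l then 1 else 0) * (Q i k * Q i l) =
      if k = l then Q i k ^ 2 else 0 := by
    split_ifs with h
    · rw [← h, one_mul, sq]
    · rw [zero_mul]
  calc ∑ l, (if k = l then 1 else 0) * ∏ b : Fin 2, Q i (![k, l] b)
      = ∑ l, if k = l then Q i k ^ 2 else 0 := by
        simp only [Fin.prod_univ_two, Matrix.cons_val_zero, Matrix.cons_val_one, summand]
    _ = Q i k ^ 2 := by simp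

variable (J : Equipartition unif01 n) (Q : Fin n → Fin n → ℝ)

theorem integrable_leafProduct_comp (i : Fin 3 → Fin n) :
    Integrable (fun s : Fin n → Sign ↦ leafProduct (s ∘ i)) (Measure.pi fun _ ↦ rademacher) :=
  .of_bound (leafProduct.continuous.measurable.comp
    (measurable_pi_lambda _ fun a ↦ measurable_pi_apply (i a))).aestronglyMeasurable ‖leafProduct‖
    (.of_forall fun _ ↦ leafProduct.norm_coe_le_norm _)

theorem integrable_starFunctional_empiricalMeasure_rademacher :
    Integrable (fun s ↦ starFunctional 2 (J.kernel Q) leafProduct (J.empiricalMeasure s))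
      (Measure.pi fun _ : Fin n ↦ rademacher) := by
  simp only [starFunctional_kernel_empiricalMeasure J Q 2 leafProduct.continuous.measurable]
  exact (integrable_finsetSum _ fun i _ ↦ (integrable_leafProduct_comp i).mul_const _).div_const _

theorem integral_starFunctional_empiricalMeasure_rademacher :
    ∫ s, starFunctional 2 (J.kernel Q) leafProduct (J.empiricalMeasure s)
      ∂(Measure.pi fun _ : Fin n ↦ rademacher) = (∑ i, ∑ k, Q i k ^ 2) / n ^ 3 := by
  simp only [starFunctional_kernel_empiricalMeasure J Q 2 leafProduct.continuous.measurable]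
  rw [integral_div, integral_finsetSum _ fun i _ ↦ (integrable_leafProduct_comp i).mul_const _,
    ← sum_ite_leaves_eq]
  simp only [integral_mul_const, ← integral_rademacher_mul]
  rfl

theorem integral_le_add_mul_of_one_sub_le_measureReal {Ω : Type*} [MeasurableSpace Ω]
    {P : Measure Ω} [IsProbabilityMeasure P] {f : Ω → ℝ} (hf : Integrable f P) {A : Set Ω}
    (hA : MeasurableSet A) {a b r : ℝ} (hb : 0 ≤ b) (h_on : ∀ x ∈ A, f x ≤ a)
    (h_off : ∀ x, f x ≤ a + b) (hr : 1 - r ≤ P.real A) : ∫ x, f x ∂P ≤ a + r * b := by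
  have f_le (x) : f x ≤ a + Aᶜ.indicator (fun _ ↦ b) x := by
    by_cases hx : x ∈ A
    · simpa [hx] using h_on x hx
    · simpa [hx] using h_off x
  have compl_le : P.real Aᶜ ≤ r := by linarith [probReal_add_probReal_compl (μ := P) hA]
  have integrable_indicator : Integrable (Aᶜ.indicator fun _ ↦ b) P :=
    (integrable_const b).indicator hA.compl
  calc ∫ x, f x ∂P ≤ ∫ x, a + Aᶜ.indicator (fun _ ↦ b) x ∂P :=
        integral_mono hf ((integrable_const a).add integrable_indicator) f_le
    _ = a + P.real Aᶜ * b := by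
        rw [integral_add (integrable_const a) integrable_indicator, integral_indicator hA.compl]
        simp
    _ ≤ a + r * b := by gcongr

theorem eventually_sum_sq_div_le {K : ℕ → ℝ → ℝ → ℝ} {W : ℝ → ℝ → ℝ} (h : StarConverges 2 K W)
    (Q : ∀ n, Fin n → Fin n → ℝ) {ε : ℝ} (hε : 0 < ε) :
    ∀ᶠ n in atTop, ∀ J : Equipartition unif01 n, K n = J.kernel (Q n) →
      (∑ i, ∑ k, Q n i k ^ 2) / n ^ 3 ≤ ε := by
  set B := ‖leafProduct‖ * ∫ x, degFun W x ^ 2 ∂unif01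
  have B_nonneg : 0 ≤ B :=
    mul_nonneg (norm_nonneg _) (integral_nonneg fun x ↦ sq_nonneg _)
  set r := ε / (3 * (B + 1))
  have r_pos : 0 < r := by positivity
  have r_mul_B_le : r * B ≤ ε / 3 := by
    rw [div_mul_eq_mul_div, div_le_div_iff₀ (by positivity) (by norm_num)]
    nlinarith
  have uniform := h.tendstoUniformlyOn_starFunctional leafProduct
  filter_upwards [Metric.tendstoUniformlyOn_iff.1 uniform (ε / 3) (by positivity),
    eventually_lt_measureReal_abs_starFunctional_sub_lt Q
      (h.isStarKernel.continuousOn_starFunctional leafProduct) uniform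
      (ν := unif01ProdRademacher) measurePreserving_fst
      (ε := ε / 3) (by positivity) (q := 1 - r) (by linarith)] with n hn hA J hJ
  obtain ⟨A, measurableSet_A, hA, lt_A⟩ := hA J hJ
  replace lt_A : 1 - r < (Measure.pi fun _ : Fin n ↦ rademacher).real A := by
    rw [← funext (J.snd_cell_comp_fst rademacher)]
    exact lt_A
  have emp_close (s : Fin n → Sign) : starFunctional 2 (K n) leafProduct (J.empiricalMeasure s) ≤
      starFunctional 2 W leafProduct (J.empiricalMeasure s) + ε / 3 := by
    have := hn _ (J.fst_empiricalMeasure s)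
    rw [dist_comm, Real.dist_eq, abs_lt] at this
    linarith
  rw [← integral_starFunctional_empiricalMeasure_rademacher J, ← hJ]
  refine (integral_le_add_mul_of_one_sub_le_measureReal (a := 2 * (ε / 3)) ?_ measurableSet_A
    B_nonneg (fun s hs ↦ ?_) (fun s ↦ ?_) lt_A.le).trans (by linarith)
  · simpa only [hJ] using integrable_starFunctional_empiricalMeasure_rademacher J (Q n)
  · have := hA hs
    rw [mem_ofPred_eq, starFunctional_leafProduct_unif01ProdRademacher h.isStarKernel, sub_zero,
      abs_lt] at this
    linarith [emp_close s]
  · have := (le_abs_self _).trans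
      (abs_starFunctional_le h.isStarKernel (J.fst_empiricalMeasure s) leafProduct.norm_coe_le_norm)
    linarith [emp_close s]

end Rademacher

section Collisions

theorem sum_ite_apply_eq_apply_prod {ι κ R : Type*} [Fintype ι] [DecidableEq ι] [Fintype κ]
    [DecidableEq κ] [CommSemiring R] {b c : ι} (hbc : b ≠ c) (w : κ → R) :
    ∑ k : ι → κ, (if k b = k c then ∏ a, w (k a) else 0) =
      (∑ l, w l ^ 2) * (∑ l, w l) ^ (Fintype.card ι - 2) := by
  let g (l : κ) (a : ι) (t : κ) : R := if a ∈ ({b, c} : Finset ι) → t = l then w t else 0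
  have ite_eq_sum (k : ι → κ) :
      (if k b = k c then ∏ a, w (k a) else 0) = ∑ l, ∏ a, g l a (k a) := by
    have (l : κ) : ∏ a, g l a (k a) =
        if l = k b then if k b = k c then ∏ a, w (k a) else 0 else 0 := by
      have : (∀ a ∈ Finset.univ, a ∈ ({b, c} : Finset ι) → k a = l) ↔ l = k b ∧ k b = k c := by
        simp; grind
      simp only [g, Finset.prod_ite_zero, this, ite_and]
    simp [this]
  have sum_g (l : κ) (a : ι) :
      ∑ t, g l a t = if a ∈ ({b, c} : Finset ι) then w l else ∑ t, w t := by
    split_ifs with h <;> simp only [g, h, true_imp_iff, false_imp_iff] <;> simp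
  calc ∑ k : ι → κ, (if k b = k c then ∏ a, w (k a) else 0)
      = ∑ l, ∑ k : ι → κ, ∏ a, g l a (k a) := by simp only [ite_eq_sum]; exact Finset.sum_comm
    _ = ∑ l, ∏ a, ∑ t, g l a t := by
        simp only [Finset.prod_univ_sum, Fintype.piFinset_univ]
    _ = ∑ l, w l ^ 2 * (∑ t, w t) ^ (Fintype.card ι - 2) := by
        simp only [sum_g, Finset.prod_ite, Finset.prod_const, Finset.filter_univ_mem,
          Finset.filter_notMem_eq_sdiff, Finset.card_univ_sdiff, Finset.card_pair hbc]
    _ = (∑ l, w l ^ 2) * (∑ l, w l) ^ (Fintype.card ι - 2) := (Finset.sum_mul ..).symm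

variable {n : ℕ} (Q : Fin n → Fin n → ℝ)

/-- The `|Q|`-weight of the `m`-stars in `n` vertices in which two prescribed leaves coincide,
normalised by `n ^ (m + 1)`. -/
noncomputable def collisionWeight (m : ℕ) {n : ℕ} (Q : Fin n → Fin n → ℝ) : ℝ :=
  (∑ i, (∑ k, Q i k ^ 2 / n ^ 2) * rowMean Q i ^ (m - 2)) / n

theorem collisionWeight_nonneg (m : ℕ) : 0 ≤ collisionWeight m Q :=
  div_nonneg (Finset.sum_nonneg fun i _ ↦ mul_nonneg (Finset.sum_nonneg fun _ _ ↦ by positivity)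
    (pow_nonneg (rowMean_nonneg Q i) _)) n.cast_nonneg

theorem sum_ite_leaf_eq_leaf_div_eq_collisionWeight {m : ℕ} {b c : Fin m} (hbc : b ≠ c) :
    (∑ i : Fin (m + 1) → Fin n, if i b.succ = i c.succ then ∏ a : Fin m, |Q (i 0) (i a.succ)|
      else 0) / (n : ℝ) ^ (m + 1) = collisionWeight m Q := by
  obtain ⟨r, rfl⟩ : ∃ r, m = r + 2 := ⟨m - 2, by grind⟩
  have sum_eq : (∑ i : Fin (r + 3) → Fin n, if i b.succ = i c.succ then
      ∏ a : Fin (r + 2), |Q (i 0) (i a.succ)| else 0) =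
      ∑ i, (∑ k, Q i k ^ 2) * (∑ k, |Q i k|) ^ r := by
    rw [← (Fin.consEquiv fun _ ↦ Fin n).sum_comp, Fintype.sum_prod_type]
    refine Finset.sum_congr rfl fun i _ ↦ ?_
    simpa using sum_ite_apply_eq_apply_prod hbc fun k ↦ |Q i k|
  simp only [collisionWeight, rowMean, ← Finset.sum_div, div_pow, div_mul_div_comm, sum_eq,
    Nat.add_sub_cancel, div_div]
  ring

theorem abs_prod_star_le_sum_offDiag {m : ℕ} (hQ : ∀ i, Q i i = 0) {i : Fin (m + 1) → Fin n}
    (hi : ¬ Function.Injective i) :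
    |∏ b : Fin m, Q (i 0) (i b.succ)| ≤ ∑ p ∈ (Finset.univ : Finset (Fin m)).offDiag,
      if i p.1.succ = i p.2.succ then ∏ b : Fin m, |Q (i 0) (i b.succ)| else 0 := by
  have : 0 ≤ ∏ b : Fin m, |Q (i 0) (i b.succ)| :=
    Finset.prod_nonneg fun _ _ ↦ abs_nonneg _
  have ite_nonneg (p : Fin m × Fin m) :
      0 ≤ if i p.1.succ = i p.2.succ then ∏ b : Fin m, |Q (i 0) (i b.succ)| else 0 := by
    split_ifs <;> positivity
  rw [Finset.abs_prod]
  by_cases root_eq_leaf : ∃ b : Fin m, i 0 = i b.succ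
  · obtain ⟨b, hb⟩ := root_eq_leaf
    rw [Finset.prod_eq_zero (Finset.mem_univ b) (by rw [← hb, hQ, abs_zero])]
    exact Finset.sum_nonneg fun p _ ↦ by simp
  · obtain ⟨b, c, hbc, hne⟩ : ∃ b c : Fin m, i b.succ = i c.succ ∧ b ≠ c := by
      by_contra! leaves_injective
      refine hi ?_
      rw [← Fin.cons_self_tail i, Fin.cons_injective_iff]
      exact ⟨fun ⟨b, hb⟩ ↦ root_eq_leaf ⟨b, hb.symm⟩, leaves_injective⟩
    simpa [hbc] using Finset.single_le_sum (fun p _ ↦ ite_nonneg p)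
      (show (b, c) ∈ Finset.univ.offDiag by simpa using hne)

theorem abs_sum_injective_sub_sum_le {X : Type*} {m : ℕ} (hQ : ∀ i, Q i i = 0)
    {φ : (Fin (m + 1) → X) → ℝ} {C : ℝ} (hC : ∀ x, |φ x| ≤ C) (x : Fin n → X) :
    |(∑ i : Fin (m + 1) → Fin n with Function.Injective i,
          φ (x ∘ i) * ∏ b : Fin m, Q (i 0) (i b.succ)) / (n : ℝ) ^ (m + 1) -
        (∑ i : Fin (m + 1) → Fin n, φ (x ∘ i) * ∏ b : Fin m, Q (i 0) (i b.succ)) /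
          (n : ℝ) ^ (m + 1)| ≤
      C * ((Finset.univ : Finset (Fin m)).offDiag.card * collisionWeight m Q) := by
  let collision (i : Fin (m + 1) → Fin n) (p : Fin m × Fin m) : ℝ :=
    if i p.1.succ = i p.2.succ then ∏ b : Fin m, |Q (i 0) (i b.succ)| else 0
  have bound_nonneg (i : Fin (m + 1) → Fin n) : 0 ≤
      C * ∑ p ∈ (Finset.univ : Finset (Fin m)).offDiag, collision i p :=
    mul_nonneg ((abs_nonneg _).trans (hC (x ∘ i))) (Finset.sum_nonneg fun p _ ↦ by positivity)
  have summand_le (i : Fin (m + 1) → Fin n) (hi : ¬ Function.Injective i) :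
      |φ (x ∘ i) * ∏ b : Fin m, Q (i 0) (i b.succ)| ≤
        C * ∑ p ∈ (Finset.univ : Finset (Fin m)).offDiag, collision i p := by
    rw [abs_mul]
    have := (abs_nonneg _).trans (hC (x ∘ i))
    gcongr
    exacts [hC _, abs_prod_star_le_sum_offDiag Q hQ hi]
  rw [← sub_div, abs_div, abs_of_nonneg (by positivity : (0 : ℝ) ≤ (n : ℝ) ^ (m + 1)),
    ← Finset.sum_filter_add_sum_filter_not Finset.univ Function.Injective, sub_add_cancel_left,
    abs_neg]
  calc |∑ i : Fin (m + 1) → Fin n with ¬ Function.Injective i,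
          φ (x ∘ i) * ∏ b : Fin m, Q (i 0) (i b.succ)| / (n : ℝ) ^ (m + 1)
      ≤ (∑ i : Fin (m + 1) → Fin n,
          C * ∑ p ∈ (Finset.univ : Finset (Fin m)).offDiag, collision i p) / (n : ℝ) ^ (m + 1) := by
        gcongr
        exact (Finset.abs_sum_le_sum_abs _ _).trans <|
          (Finset.sum_le_sum fun i hi ↦ summand_le i (Finset.mem_filter.1 hi).2).trans <|
          Finset.sum_le_sum_of_subset_of_nonneg (Finset.filter_subset _ _) fun i _ _ ↦
            bound_nonneg i
    _ = C * ∑ p ∈ (Finset.univ : Finset (Fin m)).offDiag,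
          (∑ i, collision i p) / (n : ℝ) ^ (m + 1) := by
        rw [← Finset.mul_sum, Finset.sum_comm, mul_div_assoc, Finset.sum_div]
    _ = C * ((Finset.univ : Finset (Fin m)).offDiag.card * collisionWeight m Q) := by
        rw [Finset.sum_congr rfl fun p hp ↦
          sum_ite_leaf_eq_leaf_div_eq_collisionWeight Q (Finset.mem_offDiag.1 hp).2.2,
          Finset.sum_const, nsmul_eq_mul]

theorem collisionWeight_le {m : ℕ} (hm : 2 ≤ m) (J : Equipartition unif01 n) {M : ℝ} (hM : 0 ≤ M) :
    collisionWeight m Q ≤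
      degTail m (J.kernel Q) M + M ^ (m - 2) * ((∑ i, ∑ k, Q i k ^ 2) / n ^ 3) := by
  have sum_sq_le (i : Fin n) : ∑ k, Q i k ^ 2 / n ^ 2 ≤ rowMean Q i ^ 2 := by
    rw [← Finset.sum_div, rowMean, div_pow]
    gcongr
    simpa using Finset.sum_sq_le_sq_sum_of_nonneg fun k (_ : k ∈ Finset.univ) ↦ abs_nonneg (Q i k)
  have summand_le (i : Fin n) : (∑ k, Q i k ^ 2 / n ^ 2) * rowMean Q i ^ (m - 2) ≤
      (if M < rowMean Q i then rowMean Q i ^ m else 0) + M ^ (m - 2) * ∑ k, Q i k ^ 2 / n ^ 2 := by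
    have mean_nonneg := rowMean_nonneg Q i
    split_ifs with h
    · calc _ ≤ rowMean Q i ^ 2 * rowMean Q i ^ (m - 2) := by gcongr; exact sum_sq_le i
        _ = rowMean Q i ^ m := by rw [← pow_add, Nat.add_sub_cancel' hm]
        _ ≤ _ := le_add_of_nonneg_right (by positivity)
    · rw [zero_add, mul_comm]
      gcongr
      exact not_lt.1 h
  calc collisionWeight m Q
      ≤ (∑ i, ((if M < rowMean Q i then rowMean Q i ^ m else 0) +
          M ^ (m - 2) * ∑ k, Q i k ^ 2 / n ^ 2)) / n := by
        unfold collisionWeight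
        gcongr
        exact summand_le _
    _ = _ := by
        rw [Finset.sum_add_distrib, add_div, degTail_kernel]
        simp only [← Finset.mul_sum, ← Finset.sum_div]
        ring

end Collisions

section Exponents

variable {k m : ℕ} {K : ℝ → ℝ → ℝ}

theorem IsStarKernel.mono_exponent (hK : IsStarKernel m K) (hkm : k ≤ m) : IsStarKernel k K where
  measurable := hK.measurable
  integrable := hK.integrable
  integrable_degFun_pow := by
    refine Integrable.mono' ((integrable_const (1 : ℝ)).add hK.integrable_degFun_pow)
      ((measurable_degFun hK.measurable).pow_const k).aestronglyMeasurable (.of_forall fun x ↦ ?_)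
    have degFun_nonneg := degFun_nonneg K x
    rw [Real.norm_of_nonneg (by positivity), Pi.add_apply]
    rcases le_total (degFun K x) 1 with h | h
    · exact (pow_le_one₀ degFun_nonneg h).trans (le_add_of_nonneg_right (by positivity))
    · exact (pow_le_pow_right₀ h hkm).trans (le_add_of_nonneg_left zero_le_one)

theorem degTail_nonneg (m : ℕ) (K : ℝ → ℝ → ℝ) (M : ℝ) : 0 ≤ degTail m K M :=
  integral_nonneg fun x ↦ indicator_nonneg (fun x _ ↦ pow_nonneg (degFun_nonneg K x) m) x

theorem IsStarKernel.degTail_le_degTail (hK : IsStarKernel m K) (hkm : k ≤ m) {M : ℝ}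
    (hM : 1 ≤ M) : degTail k K M ≤ degTail m K M :=
  integral_mono ((hK.mono_exponent hkm).integrable_degTail M) (hK.integrable_degTail M) fun _ ↦
    indicator_le_indicator' fun hx ↦ pow_le_pow_right₀ (hM.trans hx.le) hkm

theorem StarConverges.mono_exponent {K : ℕ → ℝ → ℝ → ℝ} {W : ℝ → ℝ → ℝ} (h : StarConverges m K W)
    (hkm : k ≤ m) : StarConverges k K W where
  eventually_isStarKernel := h.eventually_isStarKernel.mono fun _ hK ↦ hK.mono_exponent hkm
  isStarKernel := h.isStarKernel.mono_exponent hkm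
  tendsto_cutDist := h.tendsto_cutDist
  exists_degTail_le ε hε := by
    obtain ⟨M, one_le_M, hM⟩ := h.exists_degTail_add_le hε
    refine ⟨M, ?_⟩
    filter_upwards [hM, h.eventually_isStarKernel] with n hn hK
    linarith [hK.degTail_le_degTail hkm one_le_M, degTail_nonneg m W M]

end Exponents

section KernelSequence

variable {m : ℕ} {K : ℕ → ℝ → ℝ → ℝ} {W : ℝ → ℝ → ℝ} {Q : ∀ n, Fin n → Fin n → ℝ}

theorem exists_kernel_tendsto_cutDist
    (hcut : Tendsto (fun n ↦ weakCutDist (stepKernel n (Q n)) W) atTop (nhds 0)) :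
    ∃ K : ℕ → ℝ → ℝ → ℝ, (∀ n, 0 < n → ∃ J : Equipartition unif01 n, K n = J.kernel (Q n)) ∧
      Tendsto (fun n ↦ cutDist (K n) W) atTop (nhds 0) := by
  have (n : ℕ) : ∃ k : ℝ → ℝ → ℝ, 0 < n → (∃ J : Equipartition unif01 n, k = J.kernel (Q n)) ∧
      cutDist k W < weakCutDist (stepKernel n (Q n)) W + 1 / n := by
    rcases n.eq_zero_or_pos with rfl | hn
    · exact ⟨0, fun h ↦ (lt_irrefl 0 h).elim⟩
    · obtain ⟨J, hJ⟩ := exists_cutDist_kernel_lt_weakCutDist_add hn (Q n) W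
        (η := 1 / n) (by positivity)
      exact ⟨J.kernel (Q n), fun _ ↦ ⟨⟨J, rfl⟩, hJ⟩⟩
  choose K hK using this
  refine ⟨K, fun n hn ↦ (hK n hn).1, ?_⟩
  have tendsto_bound : Tendsto (fun n : ℕ ↦ weakCutDist (stepKernel n (Q n)) W + 1 / (n : ℝ))
      atTop (nhds 0) := by
    simpa using hcut.add (tendsto_const_div_atTop_nhds_zero_nat (1 : ℝ))
  refine tendsto_of_tendsto_of_tendsto_of_le_of_le' tendsto_const_nhds tendsto_bound
    (.of_forall fun n ↦ cutDist_nonneg _ _) ?_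
  filter_upwards [eventually_gt_atTop 0] with n hn using (hK n hn).2.le

theorem isStarKernel_of_kerNorm_ne_top (hWmeas : Measurable (Function.uncurry W))
    (hWL1 : kerNorm W 1 ≠ ⊤) (hWdeg : ∫⁻ x, ENNReal.ofReal (degFun W x ^ m) ∂unif01 ≠ ⊤) :
    IsStarKernel m W where
  measurable := hWmeas
  integrable := memLp_one_iff_integrable.1 ⟨hWmeas.aestronglyMeasurable, hWL1.lt_top⟩
  integrable_degFun_pow := by
    refine ⟨((measurable_degFun hWmeas).pow_const m).aestronglyMeasurable, ?_⟩
    rw [hasFiniteIntegral_iff_ofReal (.of_forall fun x ↦ pow_nonneg (degFun_nonneg W x) m)]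
    exact hWdeg.lt_top

theorem exists_kernel_starConverges (hm : m ≠ 0) (hW : IsStarKernel m W)
    (hcut : Tendsto (fun n ↦ weakCutDist (stepKernel n (Q n)) W) atTop (nhds 0))
    (hUI : ∀ ε : ℝ, 0 < ε → ∃ M : ℝ, ∀ n : ℕ,
      ∫⁻ x in {x : ℝ | M < degFun (stepKernel n (Q n)) x ^ m},
        ENNReal.ofReal (degFun (stepKernel n (Q n)) x ^ m) ∂unif01 ≤ ENNReal.ofReal ε) :
    ∃ K : ℕ → ℝ → ℝ → ℝ, (∀ n, 0 < n → ∃ J : Equipartition unif01 n, K n = J.kernel (Q n)) ∧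
      StarConverges m K W := by
  obtain ⟨K, hKQ, hK⟩ := exists_kernel_tendsto_cutDist hcut
  refine ⟨K, hKQ, ⟨?_, hW, hK, fun ε hε ↦ ?_⟩⟩
  · filter_upwards [eventually_gt_atTop 0] with n hn
    obtain ⟨J, hJ⟩ := hKQ n hn
    exact hJ ▸ isStarKernel_kernel J (Q n) m
  · obtain ⟨M, hM⟩ := hUI ε hε
    refine ⟨max 1 M, ?_⟩
    filter_upwards [eventually_gt_atTop 0] with n hn
    obtain ⟨J, hJ⟩ := hKQ n hn
    rw [hJ, ← degTail_stepKernel]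
    exact degTail_max_one_le_of_setLIntegral_le hm (measurable_uncurry_stepKernel n _) hε.le (hM n)

theorem StarConverges.eventually_collisionWeight_le (h : StarConverges m K W) (hm : 2 ≤ m)
    (hKQ : ∀ n, 0 < n → ∃ J : Equipartition unif01 n, K n = J.kernel (Q n)) {ε : ℝ} (hε : 0 < ε) :
    ∀ᶠ n in atTop, collisionWeight m (Q n) ≤ ε := by
  obtain ⟨M, one_le_M, hM⟩ := h.exists_degTail_add_le (half_pos hε)
  filter_upwards [hM, eventually_gt_atTop 0,
    eventually_sum_sq_div_le (h.mono_exponent hm) Q (ε := ε / 2 / M ^ (m - 2)) (by positivity)]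
    with n tail_le hn sum_sq_le
  obtain ⟨J, hJ⟩ := hKQ n hn
  have sum_sq_le := sum_sq_le J hJ
  rw [le_div_iff₀' (by positivity)] at sum_sq_le
  have := collisionWeight_le (Q n) hm J (zero_le_one.trans one_le_M)
  rw [← hJ] at this
  linarith [degTail_nonneg m W M]

end KernelSequence

section Statistics

variable {X : Type*} {m n : ℕ} (G : SimpleGraph (Fin (m + 1))) [DecidableRel G.Adj]

theorem Vstat_eq_starFunctional [MeasurableSpace X]
    (hstar : ∀ a b, G.Adj a b ↔ a ≠ b ∧ (a = 0 ∨ b = 0))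
    (J : Equipartition unif01 n) (Q : Fin n → Fin n → ℝ) {φ : (Fin (m + 1) → X) → ℝ}
    (hφ : Measurable φ) (x : Fin n → X) :
    Vstat G φ n Q x = starFunctional m (J.kernel Q) φ (J.empiricalMeasure x) := by
  rw [starFunctional_kernel_empiricalMeasure J Q m hφ]
  simp only [Vstat, edgeProd_star G hstar]

theorem abs_Ustat_sub_Vstat_le (hstar : ∀ a b, G.Adj a b ↔ a ≠ b ∧ (a = 0 ∨ b = 0))
    {Q : Fin n → Fin n → ℝ} (hQ : ∀ i, Q i i = 0)
    {φ : (Fin (m + 1) → X) → ℝ} {C : ℝ} (hC : ∀ x, |φ x| ≤ C) (x : Fin n → X) :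
    |Ustat G φ n Q x - Vstat G φ n Q x| ≤
      C * ((Finset.univ : Finset (Fin m)).offDiag.card * collisionWeight m Q) := by
  simpa only [Ustat, Vstat, edgeProd_star G hstar] using abs_sum_injective_sub_sum_le Q hQ hC x

theorem StarConverges.eventually_abs_Ustat_sub_Vstat_le
    (hstar : ∀ a b, G.Adj a b ↔ a ≠ b ∧ (a = 0 ∨ b = 0))
    {K : ℕ → ℝ → ℝ → ℝ} {W : ℝ → ℝ → ℝ}
    {Q : ∀ n, Fin n → Fin n → ℝ} (h : StarConverges m K W)
    (hKQ : ∀ n, 0 < n → ∃ J : Equipartition unif01 n, K n = J.kernel (Q n))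
    (hQ : ∀ n i, Q n i i = 0) {φ : (Fin (m + 1) → X) → ℝ} {C : ℝ} (hC : ∀ x, |φ x| ≤ C) {ε : ℝ}
    (hε : 0 < ε) : ∀ᶠ n in atTop, ∀ x, |Ustat G φ n (Q n) x - Vstat G φ n (Q n) x| ≤ ε := by
  rcases lt_or_ge m 2 with hm | hm
  · refine .of_forall fun n x ↦ (abs_Ustat_sub_Vstat_le G hstar (hQ n) hC x).trans ?_
    have : (Finset.univ : Finset (Fin m)).offDiag = ∅ := by interval_cases m <;> decide
    simpa [this] using hε.le
  set N : ℕ := (Finset.univ : Finset (Fin m)).offDiag.card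
  filter_upwards [h.eventually_collisionWeight_le hm hKQ (ε := ε / (|C| * N + 1)) (by positivity)]
    with n hn x
  calc |Ustat G φ n (Q n) x - Vstat G φ n (Q n) x|
      ≤ C * (N * collisionWeight m (Q n)) := abs_Ustat_sub_Vstat_le G hstar (hQ n) hC x
    _ ≤ (|C| * N + 1) * collisionWeight m (Q n) := by
        have := collisionWeight_nonneg (Q n) m
        rw [← mul_assoc]
        gcongr
        exact (mul_le_mul_of_nonneg_right (le_abs_self C) N.cast_nonneg).trans
          (le_add_of_nonneg_right zero_le_one)
    _ ≤ ε := by rwa [le_div_iff₀' (by positivity)] at hn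

end Statistics

section ExponentialBounds

theorem inv_mul_log_ofReal_exp {n : ℕ} (hn : 0 < n) (r : ℝ) :
    (((n : ℝ)⁻¹ : ℝ) : EReal) * ENNReal.log (ENNReal.ofReal (Real.exp (n * r))) = r := by
  have : (n : ℝ) ≠ 0 := Nat.cast_ne_zero.2 hn.ne'
  rw [ENNReal.log_ofReal, if_neg (Real.exp_pos _).not_ge, Real.log_exp, ← EReal.coe_mul,
    inv_mul_cancel_left₀ this]

theorem inv_mul_log_mono (n : ℕ) :
    Monotone fun p : ℝ≥0∞ ↦ (((n : ℝ)⁻¹ : ℝ) : EReal) * ENNReal.log p := fun _ _ h ↦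
  mul_le_mul_of_nonneg_left (ENNReal.log_le_log h) (EReal.coe_nonneg.2 (by positivity))

variable {p : ℕ → ℝ≥0∞} {c : ℝ}

theorem neg_le_liminf_inv_mul_log
    (h : ∀ b > c, ∀ᶠ n : ℕ in atTop, ENNReal.ofReal (Real.exp (-(n * b))) ≤ p n) :
    -(c : EReal) ≤
      atTop.liminf fun n : ℕ ↦ (((n : ℝ)⁻¹ : ℝ) : EReal) * ENNReal.log (p n) := by
  refine le_of_forall_lt_imp_le_of_dense fun a ha ↦ ?_
  obtain ⟨r, har, hrc⟩ := EReal.lt_iff_exists_real_btwn.1 ha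
  have c_lt : c < -r := by
    rw [← EReal.coe_neg, EReal.coe_lt_coe_iff] at hrc
    linarith
  refine har.le.trans (le_liminf_of_le (by isBoundedDefault) ?_)
  filter_upwards [eventually_gt_atTop 0, h (-r) c_lt] with n hn hp
  rw [← inv_mul_log_ofReal_exp hn r]
  exact inv_mul_log_mono n (by simpa using hp)

theorem limsup_inv_mul_log_le_neg (N : ℕ)
    (h : ∀ᶠ n : ℕ in atTop, p n ≤ N * ENNReal.ofReal (Real.exp (-(n * c)))) :
    atTop.limsup (fun n : ℕ ↦ (((n : ℝ)⁻¹ : ℝ) : EReal) * ENNReal.log (p n)) ≤ -(c : EReal) := by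
  refine le_of_forall_gt_imp_ge_of_dense fun a ha ↦ ?_
  obtain ⟨r, hrc, hra⟩ := EReal.lt_iff_exists_real_btwn.1 ha
  have pos : 0 < r + c := by
    rw [← EReal.coe_neg, EReal.coe_lt_coe_iff] at hrc
    linarith
  have tendsto_exp : Tendsto (fun n : ℕ ↦ Real.exp (n * (r + c))) atTop atTop :=
    Real.tendsto_exp_atTop.comp (tendsto_natCast_atTop_atTop.atTop_mul_const pos)
  refine (limsup_le_of_le (by isBoundedDefault) ?_).trans hra.le
  filter_upwards [eventually_gt_atTop 0, h, tendsto_exp.eventually_ge_atTop N] with n hn hp hN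
  rw [← inv_mul_log_ofReal_exp hn r]
  refine inv_mul_log_mono n (hp.trans ?_)
  rw [← ENNReal.ofReal_natCast, ← ENNReal.ofReal_mul N.cast_nonneg]
  refine ENNReal.ofReal_le_ofReal ?_
  calc N * Real.exp (-(n * c))
      ≤ Real.exp (n * (r + c)) * Real.exp (-(n * c)) := by gcongr
    _ = Real.exp (n * r) := by rw [← Real.exp_add]; ring_nf

theorem satisfiesLDP_of_exp_bounds {E : Type*} [TopologicalSpace E] {Ω : ℕ → Type*}
    [∀ n, MeasurableSpace (Ω n)] {P : ∀ n, Measure (Ω n)} [∀ n, IsProbabilityMeasure (P n)]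
    {T : ∀ n, Ω n → E} {I : E → ℝ≥0∞} (hI : ∀ c : ℝ, 0 ≤ c → IsCompact {t | I t ≤ ENNReal.ofReal c})
    (hlower : ∀ (U : Set E) (t : E) (b : ℝ), IsOpen U → t ∈ U → I t < ENNReal.ofReal b →
      ∀ᶠ n : ℕ in atTop, ENNReal.ofReal (Real.exp (-(n * b))) ≤ P n {ω | T n ω ∈ U})
    (hupper : ∀ (C : Set E) (c : ℝ), IsClosed C → 0 ≤ c → (∀ t ∈ C, ENNReal.ofReal c < I t) →
      ∃ N : ℕ, ∀ᶠ n : ℕ in atTop,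
        P n {ω | T n ω ∈ C} ≤ N * ENNReal.ofReal (Real.exp (-(n * c)))) :
    SatisfiesLDP P T I := by
  refine ⟨fun c hc ↦ by simpa [ENNReal.ofReal_toReal hc] using hI c.toReal ENNReal.toReal_nonneg,
    fun F _ ↦ ⟨?_, ?_⟩⟩
  · refine EReal.neg_le.1 (le_iInf₂ fun t ht ↦ EReal.neg_le.1 ?_)
    rcases eq_or_ne (I t) ∞ with htop | hne
    · simp [htop]
    rw [← EReal.coe_ennreal_toReal hne]
    refine neg_le_liminf_inv_mul_log fun b hb ↦ ?_
    filter_upwards [hlower _ t b isOpen_interior ht ((ENNReal.lt_ofReal_iff_toReal_lt hne).2 hb)]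
      with n hn using hn.trans (measure_mono (preimage_mono interior_subset))
  · refine EReal.le_neg.1 (le_of_forall_lt_imp_le_of_dense fun a ha ↦ EReal.le_neg.1 ?_)
    obtain ⟨c, hac, hc⟩ := EReal.lt_iff_exists_real_btwn.1 ha
    refine le_trans ?_ (EReal.neg_le_neg_iff.2 hac.le)
    rcases lt_or_ge c 0 with c_neg | c_nonneg
    · refine (limsup_inv_mul_log_le_neg (c := 0) 1 (.of_forall fun n ↦ ?_)).trans ?_
      · simpa using prob_le_one
      · exact EReal.neg_le_neg_iff.2 (EReal.coe_le_coe_iff.2 c_neg.le)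
    · have lt_I (t : E) (ht : t ∈ closure F) : ENNReal.ofReal c < I t := by
        have := hc.trans_le (iInf₂_le t ht)
        rwa [← EReal.coe_ennreal_lt_coe_ennreal_iff, EReal.coe_ennreal_ofReal, max_eq_left c_nonneg]
      obtain ⟨N, hN⟩ := hupper _ c isClosed_closure c_nonneg lt_I
      refine limsup_inv_mul_log_le_neg N ?_
      filter_upwards [hN] with n hn using (measure_mono (preimage_mono subset_closure)).trans hn

end ExponentialBounds

section LargeDeviations

variable {X : Type*} [MeasurableSpace X] {m : ℕ} (G : SimpleGraph (Fin (m + 1)))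
  [DecidableRel G.Adj] {W : ℝ → ℝ → ℝ} (μ : Measure X)

theorem rate0_le_of_starFunctional_eq (hstar : ∀ a b, G.Adj a b ↔ a ≠ b ∧ (a = 0 ∨ b = 0))
    {φ : (Fin (m + 1) → X) → ℝ} {ν : ProbabilityMeasure (ℝ × X)} {c t : ℝ}
    (hν : ν ∈ entropyLevel μ c) (ht : starFunctional m W φ ν = t) :
    rate0 G W φ μ t ≤ ENNReal.ofReal c :=
  (iInf_le _ ⟨(ν : Measure (ℝ × X)), ⟨ν.2, hν.1⟩, (hν.2.trans_lt ENNReal.ofReal_lt_top).ne,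
    (TWphi_eq_starFunctional G hstar W φ ν).trans ht⟩).trans hν.2

theorem exists_mem_entropyLevel_of_rate0_lt
    (hstar : ∀ a b, G.Adj a b ↔ a ≠ b ∧ (a = 0 ∨ b = 0)) {φ : (Fin (m + 1) → X) → ℝ} {c t : ℝ}
    (h : rate0 G W φ μ t < ENNReal.ofReal c) :
    ∃ ν ∈ entropyLevel μ c, starFunctional m W φ ν = t := by
  obtain ⟨⟨ν, ⟨hprob, hfst⟩, _, ht⟩, hlt⟩ := iInf_lt_iff.1 h
  exact ⟨⟨ν, hprob⟩, ⟨hfst, hlt.le⟩, (TWphi_eq_starFunctional G hstar W φ ⟨ν, hprob⟩).symm.trans ht⟩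

variable [MetricSpace X] [CompactSpace X] [BorelSpace X] [Nonempty X] [IsProbabilityMeasure μ]
  {φ : C(Fin (m + 1) → X, ℝ)}

theorem rate0_le_iff (hstar : ∀ a b, G.Adj a b ↔ a ≠ b ∧ (a = 0 ∨ b = 0)) (hW : IsStarKernel m W)
    {c : ℝ} (hc : 0 ≤ c) {t : ℝ} :
    rate0 G W φ μ t ≤ ENNReal.ofReal c ↔ t ∈ starFunctional m W φ '' entropyLevel μ c := by
  refine ⟨fun h ↦ ?_, fun ⟨ν, hν, ht⟩ ↦ rate0_le_of_starFunctional_eq G μ hstar hν ht⟩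
  let b (k : ℕ) : ℝ := c + 1 / ((k : ℝ) + 1)
  have c_lt_b (k : ℕ) : c < b k := lt_add_of_pos_right c (by positivity)
  have antitone_b : Antitone b := fun k l hkl ↦
    add_le_add_right (Nat.one_div_le_one_div hkl) c
  have tendsto_b : Tendsto b atTop (nhds c) := by
    simpa [b] using tendsto_one_div_add_atTop_nhds_zero_nat.const_add c
  let A (k : ℕ) : Set (ProbabilityMeasure (ℝ × X)) :=
    entropyLevel μ (b k) ∩ starFunctional m W φ ⁻¹' {t}
  have isCompact_level (k : ℕ) : IsCompact (entropyLevel (X := X) μ (b k)) :=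
    isCompact_entropyLevel μ (hc.trans (c_lt_b k).le)
  have isClosed_A (k : ℕ) : IsClosed (A k) :=
    ((hW.continuousOn_starFunctional φ).mono fun ν hν ↦ hν.1).preimage_isClosed_of_isClosed
      (isCompact_level k).isClosed isClosed_singleton
  obtain ⟨ν, hν⟩ : (⋂ k, A k).Nonempty := by
    refine IsCompact.nonempty_iInter_of_sequence_nonempty_isCompact_isClosed A (fun k ν hν ↦ ?_)
      (fun k ↦ ?_) ((isCompact_level 0).of_isClosed_subset (isClosed_A 0) inter_subset_left)
      isClosed_A
    · exact ⟨⟨hν.1.1, hν.1.2.trans (ENNReal.ofReal_le_ofReal (antitone_b k.le_succ))⟩, hν.2⟩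
    · obtain ⟨ν, hν, ht⟩ := exists_mem_entropyLevel_of_rate0_lt G μ hstar
        (h.trans_lt ((ENNReal.ofReal_lt_ofReal_iff (hc.trans_lt (c_lt_b k))).2 (c_lt_b k)))
      exact ⟨ν, hν, ht⟩
  rw [mem_iInter] at hν
  exact ⟨ν, ⟨(hν 0).1.1, ge_of_tendsto' (ENNReal.tendsto_ofReal tendsto_b) fun k ↦ (hν k).1.2⟩,
    (hν 0).2⟩

theorem isCompact_starFunctional_image_entropyLevel (hW : IsStarKernel m W) {c : ℝ} (hc : 0 ≤ c) :
    IsCompact (starFunctional m W φ '' entropyLevel μ c) :=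
  (isCompact_entropyLevel μ hc).image_of_continuousOn
    ((hW.continuousOn_starFunctional φ).mono fun _ hν ↦ hν.1)

section Approximation

variable {K : ℕ → ℝ → ℝ → ℝ} {Q : ∀ n, Fin n → Fin n → ℝ} {S : ∀ n, (Fin n → X) → ℝ}

theorem StarConverges.eventually_exp_le_measure_mem (h : StarConverges m K W)
    (hstar : ∀ a b, G.Adj a b ↔ a ≠ b ∧ (a = 0 ∨ b = 0))
    (hKQ : ∀ n, 0 < n → ∃ J : Equipartition unif01 n, K n = J.kernel (Q n))
    (hS : ∀ ε > 0, ∀ᶠ n in atTop, ∀ J : Equipartition unif01 n, K n = J.kernel (Q n) →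
      ∀ x, |S n x - starFunctional m W φ (J.empiricalMeasure x)| ≤ ε)
    {U : Set ℝ} (hU : IsOpen U) {t : ℝ} (ht : t ∈ U) {b : ℝ}
    (hb : rate0 G W φ μ t < ENNReal.ofReal b) :
    ∀ᶠ n : ℕ in atTop, ENNReal.ofReal (Real.exp (-(n * b))) ≤
      Measure.pi (fun _ : Fin n ↦ μ) {x | S n x ∈ U} := by
  obtain ⟨⟨ν', ⟨hprob, hfst⟩, _, ht'⟩, hlt⟩ := iInf_lt_iff.1 hb
  let ν : ProbabilityMeasure (ℝ × X) := ⟨ν', hprob⟩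
  have hνt : starFunctional m W φ ν = t := (TWphi_eq_starFunctional G hstar W φ ν).symm.trans ht'
  rw [KLdiv_eq_klDiv] at hlt
  obtain ⟨ε, ε_pos, ball_subset⟩ := Metric.isOpen_iff.1 hU t ht
  filter_upwards [eventually_gt_atTop 0, hS (ε / 2) (half_pos ε_pos),
    eventually_ofReal_exp_le_measure_abs_starFunctional_sub_lt μ Q
      (h.isStarKernel.continuousOn_starFunctional φ) (h.tendstoUniformlyOn_starFunctional φ)
      (ν := ν) hfst hlt (half_pos ε_pos)] with n hn hSn hlower
  obtain ⟨J, hJ⟩ := hKQ n hn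
  refine (hlower J hJ).trans (measure_mono fun x hx ↦ ball_subset ?_)
  rw [Metric.mem_ball, Real.dist_eq, ← hνt, ← add_halves ε]
  exact (abs_sub_le _ _ _).trans_lt (add_lt_add_of_le_of_lt (hSn J hJ x) hx)

theorem StarConverges.exists_nat_eventually_measure_mem_le (h : StarConverges m K W)
    (hstar : ∀ a b, G.Adj a b ↔ a ≠ b ∧ (a = 0 ∨ b = 0))
    (hKQ : ∀ n, 0 < n → ∃ J : Equipartition unif01 n, K n = J.kernel (Q n))
    (hS : ∀ ε > 0, ∀ᶠ n in atTop, ∀ J : Equipartition unif01 n, K n = J.kernel (Q n) →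
      ∀ x, |S n x - starFunctional m W φ (J.empiricalMeasure x)| ≤ ε)
    {C : Set ℝ} (hC : IsClosed C) {c : ℝ} (hc : 0 ≤ c)
    (hlt : ∀ t ∈ C, ENNReal.ofReal c < rate0 G W φ μ t) :
    ∃ N : ℕ, ∀ᶠ n : ℕ in atTop, Measure.pi (fun _ : Fin n ↦ μ) {x | S n x ∈ C} ≤
      N * ENNReal.ofReal (Real.exp (-(n * c))) := by
  have disjoint_image : Disjoint (starFunctional m W φ '' entropyLevel μ c) C :=
    disjoint_left.2 fun t htL htC ↦
      ((rate0_le_iff G μ hstar h.isStarKernel hc).2 htL).not_gt (hlt t htC)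
  obtain ⟨δ, δ_pos, disjoint_thick⟩ := disjoint_image.exists_cthickenings
    (isCompact_starFunctional_image_entropyLevel μ h.isStarKernel hc) hC
  let B : Set (ProbabilityMeasure (ℝ × X)) :=
    TM X ∩ starFunctional m W φ ⁻¹' Metric.cthickening δ C
  have isCompact_B : IsCompact B := (isCompact_TM X).of_isClosed_subset
    ((h.isStarKernel.continuousOn_starFunctional φ).preimage_isClosed_of_isClosed (isClosed_TM X)
      Metric.isClosed_cthickening) inter_subset_left
  have disjoint_B : Disjoint B (entropyLevel μ c) := disjoint_left.2 fun ν hνB hνL ↦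
    disjoint_left.1 disjoint_thick
      (Metric.self_subset_cthickening _ (mem_image_of_mem _ hνL)) hνB.2
  obtain ⟨N, hN⟩ := exists_nat_measure_empiricalMeasure_mem_le μ hc isCompact_B inter_subset_left
    disjoint_B
  refine ⟨N, ?_⟩
  filter_upwards [eventually_gt_atTop 0, hS δ δ_pos] with n hn hSn
  obtain ⟨J, hJ⟩ := hKQ n hn
  have mem_B (x : Fin n → X) (hx : S n x ∈ C) : J.empiricalMeasure x ∈ B := by
    refine ⟨J.fst_empiricalMeasure x, Metric.mem_cthickening_of_dist_le _ (S n x) δ _ hx ?_⟩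
    rw [dist_comm, Real.dist_eq]
    exact hSn J hJ x
  exact (measure_mono mem_B).trans (hN n J)

theorem StarConverges.satisfiesLDP (h : StarConverges m K W)
    (hstar : ∀ a b, G.Adj a b ↔ a ≠ b ∧ (a = 0 ∨ b = 0))
    (hKQ : ∀ n, 0 < n → ∃ J : Equipartition unif01 n, K n = J.kernel (Q n))
    (hS : ∀ ε > 0, ∀ᶠ n in atTop, ∀ J : Equipartition unif01 n, K n = J.kernel (Q n) →
      ∀ x, |S n x - starFunctional m W φ (J.empiricalMeasure x)| ≤ ε) :
    SatisfiesLDP (fun n ↦ Measure.pi fun _ : Fin n ↦ μ) S (rate0 G W φ μ) := by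
  refine satisfiesLDP_of_exp_bounds (fun c hc ↦ ?_)
    (fun U t b hU ht hb ↦ h.eventually_exp_le_measure_mem G μ hstar hKQ hS hU ht hb)
    (fun C c hC hc hlt ↦ h.exists_nat_eventually_measure_mem_le G μ hstar hKQ hS hC hc hlt)
  simpa only [rate0_le_iff G μ hstar h.isStarKernel hc, ofPred_mem_eq] using
    isCompact_starFunctional_image_entropyLevel μ h.isStarKernel hc

end Approximation

section Closeness

variable {K : ℕ → ℝ → ℝ → ℝ} {Q : ∀ n, Fin n → Fin n → ℝ}

theorem StarConverges.eventually_abs_Vstat_sub_starFunctional_le (h : StarConverges m K W)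
    (hstar : ∀ a b, G.Adj a b ↔ a ≠ b ∧ (a = 0 ∨ b = 0)) {ε : ℝ} (hε : 0 < ε) :
    ∀ᶠ n in atTop, ∀ J : Equipartition unif01 n, K n = J.kernel (Q n) →
      ∀ x, |Vstat G φ n (Q n) x - starFunctional m W φ (J.empiricalMeasure x)| ≤ ε := by
  filter_upwards [Metric.tendstoUniformlyOn_iff.1 (h.tendstoUniformlyOn_starFunctional φ) ε hε]
    with n hn J hJ x
  rw [Vstat_eq_starFunctional G hstar J (Q n) φ.continuous.measurable, ← hJ, ← Real.dist_eq,
    dist_comm]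
  exact (hn _ (J.fst_empiricalMeasure x)).le

theorem StarConverges.eventually_abs_Ustat_sub_starFunctional_le (h : StarConverges m K W)
    (hstar : ∀ a b, G.Adj a b ↔ a ≠ b ∧ (a = 0 ∨ b = 0))
    (hKQ : ∀ n, 0 < n → ∃ J : Equipartition unif01 n, K n = J.kernel (Q n))
    (hQ : ∀ n i, Q n i i = 0) {ε : ℝ} (hε : 0 < ε) :
    ∀ᶠ n in atTop, ∀ J : Equipartition unif01 n, K n = J.kernel (Q n) →
      ∀ x, |Ustat G φ n (Q n) x - starFunctional m W φ (J.empiricalMeasure x)| ≤ ε := by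
  filter_upwards [
    h.eventually_abs_Vstat_sub_starFunctional_le (φ := φ) (Q := Q) G hstar (half_pos hε),
    h.eventually_abs_Ustat_sub_Vstat_le G hstar hKQ hQ φ.norm_coe_le_norm (half_pos hε)]
    with n hV hUV J hJ x
  rw [← add_halves ε]
  exact (abs_sub_le _ _ _).trans (add_le_add (hUV x) (hV J hJ x))

end Closeness

end LargeDeviations

theorem ldp_inhomogeneous_U_V_statistics_star_general
    {X : Type*} [MetricSpace X] [CompactSpace X] [MeasurableSpace X] [BorelSpace X]
    (μ : Measure X) [IsProbabilityMeasure μ] {m : ℕ} (hm : m ≠ 0)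
    (G : SimpleGraph (Fin (m + 1))) [DecidableRel G.Adj]
    (hstar : ∀ a b, G.Adj a b ↔ a ≠ b ∧ (a = 0 ∨ b = 0))
    (φ : (Fin (m + 1) → X) → ℝ) (hφ : Continuous φ)
    (Q : ∀ n : ℕ, Fin n → Fin n → ℝ) (hQzero : ∀ n i, Q n i i = 0)
    (W : ℝ → ℝ → ℝ) (hWmeas : Measurable (Function.uncurry W)) (hWL1 : kerNorm W 1 ≠ ⊤)
    (hcut : Tendsto (fun n ↦ weakCutDist (stepKernel n (Q n)) W) atTop (nhds 0))
    (hUI : ∀ ε : ℝ, 0 < ε → ∃ M : ℝ, ∀ n : ℕ,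
      ∫⁻ x in {x : ℝ | M < degFun (stepKernel n (Q n)) x ^ m},
        ENNReal.ofReal (degFun (stepKernel n (Q n)) x ^ m) ∂unif01 ≤ ENNReal.ofReal ε)
    (hWdeg : ∫⁻ x, ENNReal.ofReal (degFun W x ^ m) ∂unif01 ≠ ⊤) :
    SatisfiesLDP (fun n ↦ Measure.pi fun _ : Fin n ↦ μ)
      (fun n x ↦ Ustat G φ n (Q n) x) (rate0 G W φ μ) ∧
    SatisfiesLDP (fun n ↦ Measure.pi fun _ : Fin n ↦ μ)
      (fun n x ↦ Vstat G φ n (Q n) x) (rate0 G W φ μ) := by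
  have := nonempty_of_isProbabilityMeasure μ
  lift φ to C(Fin (m + 1) → X, ℝ) using hφ
  obtain ⟨K, hKQ, hK⟩ := exists_kernel_starConverges hm
    (isStarKernel_of_kerNorm_ne_top hWmeas hWL1 hWdeg) hcut hUI
  exact ⟨hK.satisfiesLDP G μ hstar hKQ fun ε hε ↦
      hK.eventually_abs_Ustat_sub_starFunctional_le G hstar hKQ hQzero hε,
    hK.satisfiesLDP G μ hstar hKQ fun ε hε ↦
      hK.eventually_abs_Vstat_sub_starFunctional_le G hstar hε⟩

/-- Theorem 1.2 (ii): the star case `H = K_{1,v-1}`. -/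
theorem ldp_inhomogeneous_U_V_statistics_star
    {X : Type*} [MetricSpace X] [CompactSpace X] [MeasurableSpace X] [BorelSpace X]
    (μ : Measure X) [IsProbabilityMeasure μ]
    (hnondeg : ∀ x : X, μ ≠ Measure.dirac x)
    {v : ℕ} (hv : 2 ≤ v) (G : SimpleGraph (Fin v)) [DecidableRel G.Adj]
    (hstar : ∀ a b : Fin v, G.Adj a b ↔
      (a ≠ b ∧ (a = (⟨0, by omega⟩ : Fin v) ∨ b = (⟨0, by omega⟩ : Fin v))))
    (φ : (Fin v → X) → ℝ) (hφ : Continuous φ)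
    (Q : ∀ n : ℕ, Fin n → Fin n → ℝ)
    (hQsymm : ∀ n i j, Q n i j = Q n j i) (hQzero : ∀ n i, Q n i i = 0)
    (W : ℝ → ℝ → ℝ) (hWmeas : Measurable (Function.uncurry W))
    (hWsymm : ∀ x y, W x y = W y x) (hWL1 : kerNorm W 1 ≠ ⊤)
    (hcut : Tendsto (fun n => weakCutDist (stepKernel n (Q n)) W) atTop (nhds 0))
    (hUI : ∀ ε : ℝ, 0 < ε → ∃ M : ℝ, ∀ n : ℕ,
      ∫⁻ x in {x : ℝ | M < degFun (stepKernel n (Q n)) x ^ (v - 1)},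
        ENNReal.ofReal (degFun (stepKernel n (Q n)) x ^ (v - 1)) ∂unif01
        ≤ ENNReal.ofReal ε)
    (hWdeg : ∫⁻ x, ENNReal.ofReal (degFun W x ^ (v - 1)) ∂unif01 ≠ ⊤) :
    SatisfiesLDP (fun n => Measure.pi fun _ : Fin n => μ)
      (fun n x => Ustat G φ n (Q n) x) (rate0 G W φ μ) ∧
    SatisfiesLDP (fun n => Measure.pi fun _ : Fin n => μ)
      (fun n x => Vstat G φ n (Q n) x) (rate0 G W φ μ) := by
  obtain ⟨m, rfl⟩ : ∃ m, v = m + 1 := ⟨v - 1, by omega⟩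
  exact ldp_inhomogeneous_U_V_statistics_star_general μ (by omega) G hstar φ hφ Q hQzero W hWmeas
    hWL1 hcut hUI hWdeg
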